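/- Suppose the lattice operator H is stable and admits a lattice Green's function 𝒢, and let (G_n) be kernels with the properties of the Green's-function expansion (smooth on ℝ^d∖{0}, the stated homogeneity, and the finite-difference approximation bounds |D_{ρ⃗}𝒢(ℓ) − ∑_{n≤q} D_{ρ⃗}G_n(ℓ)| ≤ C_{j,q}⟨ℓ⟩^{−2q−d−j}). Let p, α ∈ ℕ₀, c > 0, and let u ∈ 𝓗¹ satisfy |H[u](ℓ)| ≤ c⟨ℓ⟩^{−d−p}(log⟨ℓ⟩)^α for all ℓ ∈ Λ. Then there exist symmetric tensors a^{(i,n,k)} ∈ (ℝ^d)^{⊗i} such that the remainder w̃ := u − ∑_{k=1}^{N} ∑_{n=0}^{⌊(p−1)/2⌋} ∑_{i=0}^{p−1−2n} a^{(i,n,k)} : ∇^i (G_n e_k) |_Λ (with the continuum terms set to 0 at ℓ = 0) satisfies, for each j ∈ {1,2}, |D^j w̃(ℓ)| ≤ C⟨ℓ⟩^{2−d−p−j}(log⟨ℓ⟩)^{α+1} for all ℓ ∈ Λ. For j ≥ 3 the same bound holds provided additionally |D^m H[u](ℓ)| ≤ c⟨ℓ⟩^{−d−p−m}(log⟨ℓ⟩)^α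 for m = 1,…,j−2. -/

import Mathlib

noncomputable section

open scoped BigOperators
open MeasureTheory Filter Topology

namespace Defect

abbrev Vec (n : ℕ) : Type := Fin n → ℝ

/-- Euclidean norm of a vector in `ℝ^n`. -/
def enorm {n : ℕ} (v : Vec n) : ℝ := Real.sqrt (∑ i, (v i) ^ 2)

/-- `⟨x⟩ := |x| + 2`. -/
def ang {n : ℕ} (v : Vec n) : ℝ := enorm v + 2

def dotV {n : ℕ} (x y : Vec n) : ℝ := ∑ i, x i * y i

/-- Matrix-vector product for a plain `Fin N → Fin N → ℝ` matrix. -/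
def mulV {N : ℕ} (M : Fin N → Fin N → ℝ) (v : Vec N) : Vec N := fun i => ∑ j, M i j * v j

/-- Euclidean (Frobenius) norm of an `N × N` array. -/
def mnorm {N : ℕ} (M : Fin N → Fin N → ℝ) : ℝ := Real.sqrt (∑ i, ∑ j, (M i j) ^ 2)

/-- The lattice point `A z` for `z ∈ ℤ^d`. -/
def latticePt (d : ℕ) (A : Matrix (Fin d) (Fin d) ℝ) (z : Fin d → ℤ) : Vec d :=
  fun i => ∑ j, A i j * (z j : ℝ)

/-- The Bravais lattice `Λ = A ℤ^d`. -/
def Lattice (d : ℕ) (A : Matrix (Fin d) (Fin d) ℝ) : Set (Vec d) :=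
  Set.range (latticePt d A)

/-- First-order finite difference `D_ρ u (ℓ) = u(ℓ+ρ) - u(ℓ)`. -/
def D1 {d : ℕ} {M : Type} [AddCommGroup M] (ρ : Vec d) (u : Vec d → M) (ℓ : Vec d) : M :=
  u (ℓ + ρ) - u ℓ

/-- Iterated finite difference `D_{ρ₁} ⋯ D_{ρ_j} u (ℓ)` (closed form). -/
def Dmulti {d : ℕ} {M : Type} [AddCommGroup M] [Module ℝ M] {j : ℕ}
    (ρs : Fin j → Vec d) (u : Vec d → M) (ℓ : Vec d) : M :=
  ∑ S : Finset (Fin j), ((-1 : ℝ) ^ (j - S.card)) • u (ℓ + ∑ i ∈ S, ρs i)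

/-- `|Du(ℓ)|²`, the squared Euclidean norm of the stencil of first differences. -/
def Dnorm1Sq {d N : ℕ} (R : Finset (Vec d)) (u : Vec d → Vec N) (ℓ : Vec d) : ℝ :=
  ∑ ρ ∈ R, (enorm (D1 ρ u ℓ)) ^ 2

/-- `|D^j u(ℓ)|`, the Euclidean norm of the array `(D_{ρ⃗} u(ℓ))_{ρ⃗ ∈ R^j}`. -/
def DnormJ {d N : ℕ} (R : Finset (Vec d)) (j : ℕ) (u : Vec d → Vec N) (ℓ : Vec d) : ℝ :=
  Real.sqrt (∑ ρs : Fin j → {x // x ∈ R},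
    (enorm (Dmulti (fun i => (ρs i : Vec d)) u ℓ)) ^ 2)

/-- The linearized lattice operator
`H[u](ℓ) = ∑_{σ,ρ∈R} (C_{σρ} D_ρ u(ℓ-σ) - C_{σρ} D_ρ u(ℓ))`. -/
def Hop (d N : ℕ) (R : Finset (Vec d)) (C : Vec d → Vec d → Fin N → Fin N → ℝ)
    (u : Vec d → Vec N) (ℓ : Vec d) : Vec N :=
  ∑ σ ∈ R, ∑ ρ ∈ R, (mulV (C σ ρ) (D1 ρ u (ℓ - σ)) - mulV (C σ ρ) (D1 ρ u ℓ))

/-- `u ∈ 𝓗¹`. -/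
def InH1 {d N : ℕ} (A : Matrix (Fin d) (Fin d) ℝ) (R : Finset (Vec d))
    (u : Vec d → Vec N) : Prop :=
  Summable fun z : Fin d → ℤ => Dnorm1Sq R u (latticePt d A z)

/-- `u ∈ 𝓗ᶜ` : the stencil `Du` has bounded support on the lattice. -/
def InHc {d N : ℕ} (A : Matrix (Fin d) (Fin d) ℝ) (R : Finset (Vec d))
    (u : Vec d → Vec N) : Prop :=
  ∃ rad : ℝ, ∀ z : Fin d → ℤ, rad ≤ enorm (latticePt d A z) →
    ∀ ρ ∈ R, D1 ρ u (latticePt d A z) = 0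

/-- Stability of the lattice operator `H`. -/
def IsStable (d N : ℕ) (A : Matrix (Fin d) (Fin d) ℝ) (R : Finset (Vec d))
    (C : Vec d → Vec d → Fin N → Fin N → ℝ) : Prop :=
  ∃ c₀ : ℝ, 0 < c₀ ∧ ∀ u : Vec d → Vec N, InHc A R u →
    c₀ * (∑' z : Fin d → ℤ, Dnorm1Sq R u (latticePt d A z)) ≤
      ∑' z : Fin d → ℤ, ∑ σ ∈ R, ∑ ρ ∈ R,
        dotV (D1 σ u (latticePt d A z)) (mulV (C σ ρ) (D1 ρ u (latticePt d A z)))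

/-- `k`-th column of a matrix-valued function. -/
def col {d N : ℕ} (G : Vec d → Fin N → Fin N → ℝ) (k : Fin N) : Vec d → Vec N :=
  fun x i => G x i k

/-- `|D^j 𝒢(ℓ)|` for matrix-valued `𝒢`. -/
def DnormJmat {d N : ℕ} (R : Finset (Vec d)) (j : ℕ)
    (G : Vec d → Fin N → Fin N → ℝ) (ℓ : Vec d) : ℝ :=
  Real.sqrt (∑ k : Fin N, (DnormJ R j (col G k) ℓ) ^ 2)

/-- `𝒢` is a lattice Green's function for `H`. -/
def IsLatticeGreen (d N : ℕ) (A : Matrix (Fin d) (Fin d) ℝ) (R : Finset (Vec d))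
    (C : Vec d → Vec d → Fin N → Fin N → ℝ) (G : Vec d → Fin N → Fin N → ℝ) : Prop :=
  (∀ (k : Fin N) (z : Fin d → ℤ),
      Hop d N R C (col G k) (latticePt d A z) =
        if latticePt d A z = 0 then Pi.single k 1 else 0) ∧
  (∀ j : ℕ, 1 ≤ j → ∃ cj : ℝ, ∀ z : Fin d → ℤ,
      DnormJmat R j G (latticePt d A z) ≤
        cj * ang (latticePt d A z) ^ ((2 : ℝ) - d - j))

/-- A symmetric array `b ∈ (ℝ^{Fin d})^{⊙ i}`. -/
def SymArr {d i : ℕ} (b : (Fin i → Fin d) → ℝ) : Prop :=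
  ∀ (π : Equiv.Perm (Fin i)) (σv : Fin i → Fin d), b (σv ∘ π) = b σv

/-- `b : D_𝒮^i f`, a multipole term built from the basis `s`. -/
def multipole (d N : ℕ) (s : Fin d → Vec d) (i : ℕ) (b : (Fin i → Fin d) → ℝ)
    (f : Vec d → Vec N) : Vec d → Vec N :=
  fun ℓ => ∑ σv : Fin i → Fin d, b σv • Dmulti (fun m => s (σv m)) f ℓ

/-- Iterated partial derivative `∂_{j₁} ⋯ ∂_{j_i} f (x)`. -/
def pderivMulti {d : ℕ} (i : ℕ) (js : Fin i → Fin d) (f : Vec d → ℝ) (x : Vec d) : ℝ :=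
  iteratedFDeriv ℝ i f x (fun m => Pi.single (js m) (1 : ℝ))

/-- `a : ∇^i f (x)` for a tensor `a ∈ (ℝ^d)^{⊗ i}`. -/
def aContract {d : ℕ} (i : ℕ) (a : (Fin i → Fin d) → ℝ) (f : Vec d → ℝ) (x : Vec d) : ℝ :=
  ∑ js : Fin i → Fin d, a js * pderivMulti i js f x

/-- Elementary tensor `σ⃗^⊗` as an array. -/
def tensorPow {d k : ℕ} (σs : Fin k → Vec d) : (Fin k → Fin d) → ℝ :=
  fun js => ∏ m, σs m (js m)

/-- Symmetric tensor product `σ⃗^⊙`. -/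
def symTensor {d k : ℕ} (σs : Fin k → Vec d) : (Fin k → Fin d) → ℝ :=
  fun js => ((k.factorial : ℝ))⁻¹ * ∑ π : Equiv.Perm (Fin k), tensorPow (σs ∘ π) js

/-- A symmetric tensor (array invariant under index permutations). -/
def SymTensor {d k : ℕ} (T : (Fin k → Fin d) → ℝ) : Prop :=
  ∀ (π : Equiv.Perm (Fin k)) (js : Fin k → Fin d), T (js ∘ π) = T js

/-- `∂V/∂g_ρ (gs)` as a vector in `ℝ^N`. -/
def gradV {d N : ℕ} (R : Finset (Vec d)) (V : ({x // x ∈ R} → Vec N) → ℝ)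
    (ρ : {x // x ∈ R}) (gs : {x // x ∈ R} → Vec N) : Vec N :=
  fun i => fderiv ℝ V gs (Pi.single ρ (Pi.single i 1))

/-- The finite-difference stencil `Du(ℓ) = (D_ρ u(ℓ))_{ρ ∈ R}`. -/
def Dstencil {d N : ℕ} (R : Finset (Vec d)) (u : Vec d → Vec N) (ℓ : Vec d) :
    {x // x ∈ R} → Vec N :=
  fun ρ => D1 (ρ : Vec d) u ℓ

/-- `C_{σρ} = ∂²V/∂g_σ ∂g_ρ (0)`. -/
def CofV {d N : ℕ} (R : Finset (Vec d)) (V : ({x // x ∈ R} → Vec N) → ℝ)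
    (σ ρ : Vec d) (i j : Fin N) : ℝ :=
  if hσ : σ ∈ R then
    if hρ : ρ ∈ R then
      iteratedFDeriv ℝ 2 V 0
        ![Pi.single ⟨σ, hσ⟩ (Pi.single i 1), Pi.single ⟨ρ, hρ⟩ (Pi.single j 1)]
    else 0
  else 0

/-- Summand of the first variation `δE(u)[v]` at a site. -/
def deltaEsite {d N : ℕ} (R : Finset (Vec d)) (V : ({x // x ∈ R} → Vec N) → ℝ)
    (u v : Vec d → Vec N) (ℓ : Vec d) : ℝ :=
  ∑ ρ ∈ R.attach, dotV (gradV R V ρ (Dstencil R u ℓ)) (D1 (ρ : Vec d) v ℓ)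

/-- The pointwise atomistic force `δE(u)(ℓ)`. -/
def deltaEpt {d N : ℕ} (R : Finset (Vec d)) (V : ({x // x ∈ R} → Vec N) → ℝ)
    (u : Vec d → Vec N) (ℓ : Vec d) : Vec N :=
  ∑ ρ ∈ R.attach,
    (gradV R V ρ (Dstencil R u (ℓ - (ρ : Vec d))) - gradV R V ρ (Dstencil R u ℓ))

/-- Point symmetry of the site potential. -/
def PointSym {d N : ℕ} (R : Finset (Vec d)) (hRsym : ∀ ρ ∈ R, -ρ ∈ R)
    (V : ({x // x ∈ R} → Vec N) → ℝ) : Prop :=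
  ∀ gs : {x // x ∈ R} → Vec N,
    V (fun ρ => -(gs ⟨-(ρ : Vec d), hRsym _ ρ.2⟩)) = V gs

/-- The Cauchy–Born elasticity tensor `ℂ_{iajb}`. -/
def CB {d N : ℕ} (A : Matrix (Fin d) (Fin d) ℝ) (R : Finset (Vec d))
    (C : Vec d → Vec d → Fin N → Fin N → ℝ)
    (i : Fin N) (a : Fin d) (j : Fin N) (b : Fin d) : ℝ :=
  (|A.det|)⁻¹ * ∑ ρ ∈ R, ∑ σ ∈ R, C ρ σ i j * ρ a * σ b

/-- Positive homogeneity of degree `deg` (away from the origin). -/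
def PosHomMat {d N : ℕ} (f : Vec d → Fin N → Fin N → ℝ) (deg : ℝ) : Prop :=
  ∀ t : ℝ, 0 < t → ∀ x : Vec d, x ≠ 0 → ∀ i k, f (t • x) i k = t ^ deg * f x i k

/-- The defining properties of the continuum kernel family `(G_n)`. -/
def KernelFamily (d N : ℕ) (A : Matrix (Fin d) (Fin d) ℝ) (R : Finset (Vec d))
    (G : Vec d → Fin N → Fin N → ℝ) (Gn : ℕ → Vec d → Fin N → Fin N → ℝ) : Prop :=
  (∀ n : ℕ, ContDiffOn ℝ (⊤ : ℕ∞) (Gn n) {x : Vec d | x ≠ 0}) ∧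
  (∀ n : ℕ, 1 ≤ n ∨ 3 ≤ d →
      PosHomMat (Gn n) ((2 : ℝ) - 2 * n - d)) ∧
  (d = 2 → ∃ (M : Fin N → Fin N → ℝ) (φ : Vec d → Fin N → Fin N → ℝ),
      ContDiffOn ℝ (⊤ : ℕ∞) φ {x : Vec d | x ≠ 0} ∧ PosHomMat φ 0 ∧
      ∀ x : Vec d, x ≠ 0 → ∀ i k,
        Gn 0 x i k = M i k * Real.log (enorm x) + φ x i k) ∧
  (∀ j p : ℕ, ∃ Cjp : ℝ, ∀ (ρs : Fin j → {x // x ∈ R}) (z : Fin d → ℤ),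
      (∀ S : Finset (Fin j), latticePt d A z + ∑ i ∈ S, (ρs i : Vec d) ≠ 0) →
      mnorm (Dmulti (fun m => (ρs m : Vec d))
          (fun x i k => G x i k - ∑ n ∈ Finset.range (p + 1), Gn n x i k)
          (latticePt d A z)) ≤
        Cjp * ang (latticePt d A z) ^ (-(2 : ℝ) * p - d - j))

/-!
Since the differences of `u` vanish at infinity, they are the convolution of `H[u]` with the
differences of the Green's function: `D u(ℓ) = ∑ m, D𝒢(ℓ - m) H[u](m)`. Up to a remainder that
decays fast enough, `𝒢` may be replaced by `∑ Gₙ`, and for `m` close to the origin compared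
with `ℓ` the kernels `Gₙ(ℓ - m)` may be Taylor-expanded about `ℓ`. The Taylor coefficients sum
up to derivatives `∇ⁱ Gₙ(ℓ)` contracted with the moments `(-1)ⁱ / i! ∑ m, H[u](m) m^⊗i`, which are
the multipole terms. All the errors are bounded by sums over dyadic regions of `Λ`; the sums which
are borderline contribute the additional logarithm. For `m` close to `ℓ` the kernel is not
differenced more than twice, and the remaining differences are moved onto `H[u]` by summation by
parts.
-/

open Asymptotics

/-! ### Iterated finite differences -/

section FiniteDifferences

variable {X Y M M' : Type*} [AddCommGroup X] [AddCommGroup Y] [AddCommGroup M] [AddCommGroup M']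

/-- The iterated difference operator `D_{ρ₁} ⋯ D_{ρ_j}`. The steps form a list rather than a tuple,
so that differences can be split by concatenation. -/
def iterDiff (l : List X) (f : X → M) : X → M :=
  l.foldr fwdDiff f

/-- The subset sums of a list of steps: `iterDiff l f x` depends only on `f` on `x + stencil l`. -/
def stencil : List X → Set X
  | [] => {0}
  | ρ :: l => stencil l ∪ (· + ρ) '' stencil l

@[simp]
theorem iterDiff_nil (f : X → M) : iterDiff [] f = f := rfl

theorem iterDiff_cons_apply (ρ : X) (l : List X) (f : X → M) (x : X) :
    iterDiff (ρ :: l) f x = iterDiff l f (x + ρ) - iterDiff l f x := rfl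

theorem iterDiff_singleton_apply (ρ : X) (f : X → M) (x : X) :
    iterDiff [ρ] f x = f (x + ρ) - f x := rfl

theorem iterDiff_append (l l' : List X) (f : X → M) :
    iterDiff (l ++ l') f = iterDiff l (iterDiff l' f) :=
  List.foldr_append

theorem iterDiff_add (l : List X) (f g : X → M) (x : X) :
    iterDiff l (fun y ↦ f y + g y) x = iterDiff l f x + iterDiff l g x := by
  induction l generalizing x with
  | nil => rfl
  | cons ρ l ih => simp only [iterDiff_cons_apply, ih]; abel

theorem addMonoidHom_iterDiff (T : M →+ M') (l : List X) (f : X → M) (x : X) :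
    T (iterDiff l f x) = iterDiff l (fun y ↦ T (f y)) x := by
  induction l generalizing x with
  | nil => rfl
  | cons ρ l ih => simp only [iterDiff_cons_apply, map_sub, ih]

theorem iterDiff_neg (l : List X) (f : X → M) (x : X) :
    iterDiff l (fun y ↦ -f y) x = -iterDiff l f x :=
  (addMonoidHom_iterDiff (-AddMonoidHom.id M) l f x).symm

theorem iterDiff_sub (l : List X) (f g : X → M) (x : X) :
    iterDiff l (fun y ↦ f y - g y) x = iterDiff l f x - iterDiff l g x := by
  simp only [sub_eq_add_neg, iterDiff_add, iterDiff_neg]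

theorem iterDiff_zero (l : List X) (x : X) : iterDiff l (fun _ ↦ (0 : M)) x = 0 :=
  (addMonoidHom_iterDiff (0 : M →+ M) l 0 x).symm

theorem iterDiff_sum {ι : Type*} (s : Finset ι) (l : List X) (f : ι → X → M) (x : X) :
    iterDiff l (fun y ↦ ∑ i ∈ s, f i y) x = ∑ i ∈ s, iterDiff l (f i) x := by
  induction s using Finset.cons_induction with
  | empty => simpa using iterDiff_zero l x
  | cons a s ha ih => simp only [Finset.sum_cons, iterDiff_add, ih]

theorem iterDiff_comp_add_right (l : List X) (f : X → M) (a x : X) :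
    iterDiff l (fun y ↦ f (y + a)) x = iterDiff l f (x + a) := by
  induction l generalizing x with
  | nil => rfl
  | cons ρ l ih => simp only [iterDiff_cons_apply, ih, add_right_comm]

theorem iterDiff_cons_eq_iterDiff_sub (ρ : X) (l : List X) (f : X → M) :
    iterDiff (ρ :: l) f = iterDiff l fun y ↦ f (y + ρ) - f y := by
  funext x
  rw [iterDiff_sub, iterDiff_comp_add_right, iterDiff_cons_apply]

theorem iterDiff_comp_addMonoidHom (φ : X →+ Y) (l : List X) (f : Y → M) (x : X) :
    iterDiff l (fun z ↦ f (φ z)) x = iterDiff (l.map φ) f (φ x) := by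
  induction l generalizing x with
  | nil => rfl
  | cons ρ l ih => simp only [List.map_cons, iterDiff_cons_apply, ih, map_add]

theorem iterDiff_congr {l : List X} {f g : X → M} {x : X}
    (h : ∀ y ∈ stencil l, f (x + y) = g (x + y)) : iterDiff l f x = iterDiff l g x := by
  induction l generalizing x with
  | nil => simpa [stencil] using h
  | cons ρ l ih =>
    rw [iterDiff_cons_apply, iterDiff_cons_apply, ih fun y hy ↦ h y (Or.inl hy), ih fun y hy ↦ ?_]
    rw [add_assoc, add_comm ρ]
    exact h _ (Or.inr ⟨y, hy, rfl⟩)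

end FiniteDifferences

theorem sum_univ_finset_fin_succ {M : Type*} [AddCommMonoid M] {j : ℕ}
    (F : Finset (Fin (j + 1)) → M) :
    ∑ S, F S = ∑ S : Finset (Fin j), F (S.map (Fin.succEmb j)) +
      ∑ S : Finset (Fin j), F (insert 0 (S.map (Fin.succEmb j))) := by
  have hpowerset : ((Finset.univ : Finset (Fin j)).map (Fin.succEmb j)).powerset =
      Finset.univ.map (Finset.mapEmbedding (Fin.succEmb j)).toEmbedding := by
    ext S
    simp [Finset.subset_map_iff, eq_comm]
  have huniv : (Finset.univ : Finset (Fin (j + 1))) =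
      insert 0 (Finset.univ.map (Fin.succEmb j)) := by
    rw [Fin.univ_succ, Finset.cons_eq_insert]; rfl
  rw [← Finset.powerset_univ, huniv,
    Finset.sum_powerset_insert (by simp [Fin.succ_ne_zero]), hpowerset]
  simp [Finset.mapEmbedding_apply]

theorem Dmulti_eq_iterDiff {d : ℕ} {M : Type} [AddCommGroup M] [Module ℝ M] {j : ℕ}
    (ρs : Fin j → Vec d) (u : Vec d → M) (ℓ : Vec d) :
    Dmulti ρs u ℓ = iterDiff (List.ofFn ρs) u ℓ := by
  induction j generalizing ℓ with
  | zero =>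
    have hdefault : (default : Finset (Fin 0)) = ∅ := rfl
    simp [Dmulti, hdefault]
  | succ j ih =>
    rw [List.ofFn_succ, iterDiff_cons_apply, ← ih, ← ih]
    simp only [Dmulti]
    rw [sum_univ_finset_fin_succ, add_comm, sub_eq_add_neg, ← Finset.sum_neg_distrib]
    have hcard (S : Finset (Fin j)) : S.card ≤ j := by simpa using Finset.card_le_univ S
    have hzero (S : Finset (Fin j)) : (0 : Fin (j + 1)) ∉ S.map (Fin.succEmb j) := by
      simp [Fin.succ_ne_zero]
    congr 1 <;> refine Finset.sum_congr rfl fun S _ ↦ ?_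
    · simp [Finset.card_insert_of_notMem (hzero S), Finset.sum_insert (hzero S), add_assoc]
    · simp [Nat.succ_sub (hcard S), pow_succ]

/-! ### Sums over groups of polynomial growth -/

/-- The properties of `⟨·⟩` on `Λ` that drive the summation estimates: `b` is a symmetric
subadditive function, at least `2`, with `O(r ^ d)` points in `{b ≤ r}`. -/
structure IsBracket {X : Type*} [AddCommGroup X] (d : ℕ) (b : X → ℝ) : Prop where
  two_le : ∀ x, 2 ≤ b x
  map_neg : ∀ x, b (-x) = b x
  map_add_le : ∀ x y, b (x + y) ≤ b x + b y
  card_le : ∃ K : ℝ, 0 < K ∧ ∀ r : ℝ, 0 ≤ r → ∀ F : Finset X, (∀ x ∈ F, b x ≤ r) →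
    (F.card : ℝ) ≤ K * r ^ d

theorem rpow_le_rpow_abs_mul_rpow {K x y : ℝ} (hx : 0 < x) (hy : 0 < y) (hxy : x ≤ K * y)
    (hyx : y ≤ K * x) (s : ℝ) : x ^ s ≤ K ^ |s| * y ^ s := by
  have hK : 0 < K := pos_of_mul_pos_left (hx.trans_le hxy) hy.le
  rcases le_total 0 s with hs | hs
  · rw [abs_of_nonneg hs, ← Real.mul_rpow hK.le hy.le]
    exact Real.rpow_le_rpow hx.le hxy hs
  · have hdiv : y / K ≤ x := (div_le_iff₀' hK).2 hyx
    rw [abs_of_nonpos hs, Real.rpow_neg hK.le, inv_mul_eq_div, ← Real.div_rpow hy.le hK.le]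
    exact Real.rpow_le_rpow_of_nonpos (by positivity) hdiv hs

theorem exists_weight_le_weight (K s : ℝ) (α : ℕ) : ∃ C : ℝ, 0 < C ∧ ∀ x y : ℝ, 2 ≤ x → 2 ≤ y →
    x ≤ K * y → y ≤ K * x →
      x ^ s * Real.log x ^ α ≤ C * (y ^ s * Real.log y ^ α) := by
  have hlog2 : 0 < Real.log 2 := Real.log_pos one_lt_two
  refine ⟨(|K| + 1) ^ |s| * (1 + Real.log (|K| + 1) / Real.log 2) ^ α, ?_,
    fun x y hx hy hxy hyx ↦ ?_⟩
  · have : 0 ≤ Real.log (|K| + 1) := Real.log_nonneg (by linarith [abs_nonneg K])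
    positivity
  set K' := |K| + 1
  have hKK' : K ≤ K' := (le_abs_self K).trans (le_add_of_nonneg_right zero_le_one)
  have hlogK' : 0 ≤ Real.log K' := Real.log_nonneg (by simp [K'])
  have hlogx : 0 ≤ Real.log x := Real.log_nonneg (by linarith)
  have hlogy : Real.log 2 ≤ Real.log y := Real.log_le_log two_pos hy
  have hpow : x ^ s ≤ K' ^ |s| * y ^ s :=
    rpow_le_rpow_abs_mul_rpow (by linarith) (by linarith) (hxy.trans (by gcongr))
      (hyx.trans (by gcongr)) s
  have hlog : Real.log x ≤ (1 + Real.log K' / Real.log 2) * Real.log y :=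
    calc Real.log x ≤ Real.log (K' * y) := Real.log_le_log (by linarith) (hxy.trans (by gcongr))
      _ = Real.log K' / Real.log 2 * Real.log 2 + Real.log y := by
        rw [Real.log_mul (by positivity) (by positivity), div_mul_cancel₀ _ hlog2.ne']
      _ ≤ Real.log K' / Real.log 2 * Real.log y + Real.log y := by gcongr
      _ = _ := by ring
  calc x ^ s * Real.log x ^ α
      ≤ K' ^ |s| * y ^ s * ((1 + Real.log K' / Real.log 2) * Real.log y) ^ α := by gcongr
    _ = _ := by rw [mul_pow]; ring

theorem exists_log_pow_le (α : ℕ) {ε : ℝ} (hε : 0 < ε) : ∃ C : ℝ, 0 < C ∧ ∀ r x : ℝ, 2 ≤ r →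
    r ≤ x → Real.log x ^ α ≤ C * (x / r) ^ ε * Real.log r ^ α := by
  have hlog2 : 0 < Real.log 2 := Real.log_pos one_lt_two
  set δ : ℝ := ε / (α + 1)
  have hδ : 0 < δ := by positivity
  have hδε : δ * α ≤ ε := by
    rw [div_mul_eq_mul_div, div_le_iff₀ (by positivity)]; nlinarith
  refine ⟨(1 + 1 / (δ * Real.log 2)) ^ α, by positivity, fun r x hr hrx ↦ ?_⟩
  have hx : 0 ≤ Real.log x := Real.log_nonneg (by linarith)
  have ht : 1 ≤ x / r := (one_le_div₀ (by linarith)).2 hrx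
  have hlogr : Real.log 2 ≤ Real.log r := Real.log_le_log two_pos hr
  have hlog : Real.log x ≤ (1 + 1 / (δ * Real.log 2)) * (x / r) ^ δ * Real.log r :=
    calc Real.log x = 1 * Real.log r + Real.log (x / r) := by
          rw [Real.log_div (by linarith) (by linarith)]; ring
      _ ≤ (x / r) ^ δ * Real.log r + (x / r) ^ δ / δ := by
          gcongr
          · exact hlog2.le.trans hlogr
          · exact Real.one_le_rpow ht hδ.le
          · exact Real.log_le_rpow_div (by linarith) hδ
      _ = (x / r) ^ δ * Real.log r + (x / r) ^ δ / δ / Real.log 2 * Real.log 2 := by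
          rw [div_mul_cancel₀ _ hlog2.ne']
      _ ≤ (x / r) ^ δ * Real.log r + (x / r) ^ δ / δ / Real.log 2 * Real.log r := by gcongr
      _ = _ := by field_simp
  have hlogr0 : 0 ≤ Real.log r := hlog2.le.trans hlogr
  calc Real.log x ^ α ≤ ((1 + 1 / (δ * Real.log 2)) * (x / r) ^ δ * Real.log r) ^ α := by gcongr
    _ = (1 + 1 / (δ * Real.log 2)) ^ α * (x / r) ^ (δ * α) * Real.log r ^ α := by
        rw [mul_pow, mul_pow, Real.rpow_mul_natCast (by positivity)]
    _ ≤ _ := by gcongr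

namespace IsBracket

variable {X : Type*} [AddCommGroup X] {d : ℕ} {b : X → ℝ}

theorem pos (hb : IsBracket d b) (x : X) : 0 < b x := two_pos.trans_le (hb.two_le x)

theorem log_pos (hb : IsBracket d b) (x : X) : 0 < Real.log (b x) :=
  Real.log_pos (one_lt_two.trans_le (hb.two_le x))

theorem weight_pos (hb : IsBracket d b) (s : ℝ) (α : ℕ) (x : X) :
    0 < b x ^ s * Real.log (b x) ^ α :=
  mul_pos (Real.rpow_pos_of_pos (hb.pos x) s) (pow_pos (hb.log_pos x) α)

theorem finite_setOf_le (hb : IsBracket d b) (r : ℝ) : {x | b x ≤ r}.Finite := by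
  obtain ⟨K, -, hcard⟩ := hb.card_le
  by_contra hinf
  obtain ⟨n, hn⟩ := exists_nat_gt (K * (max r 0) ^ d)
  obtain ⟨F, hF, rfl⟩ := Set.Infinite.exists_subset_card_eq hinf n
  exact hn.not_ge (hcard _ (le_max_right _ _) F fun x hx ↦ (hF hx).trans (le_max_left _ _))

theorem tendsto_cofinite_atTop (hb : IsBracket d b) : Tendsto b cofinite atTop :=
  tendsto_atTop.2 fun r ↦ (hb.finite_setOf_le r).subset
    fun x hx ↦ (not_le.1 (show ¬r ≤ b x from hx)).le

theorem weight_comp_add_isBigO (hb : IsBracket d b) (s : ℝ) (α : ℕ) (y : X) :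
    (fun x ↦ b (x + y) ^ s * Real.log (b (x + y)) ^ α) =O[⊤]
      fun x ↦ b x ^ s * Real.log (b x) ^ α := by
  obtain ⟨C, -, hC⟩ := exists_weight_le_weight (b y) s α
  refine IsBigO.of_bound C (Eventually.of_forall fun x ↦ ?_)
  rw [Real.norm_of_nonneg (hb.weight_pos s α _).le, Real.norm_of_nonneg (hb.weight_pos s α _).le]
  refine hC _ _ (hb.two_le _) (hb.two_le _) ?_ ?_
  · nlinarith [hb.map_add_le x y, hb.two_le x, hb.two_le y]
  · have hadd := hb.map_add_le (x + y) (-y)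
    rw [hb.map_neg, add_neg_cancel_right] at hadd
    nlinarith [hb.two_le (x + y), hb.two_le y]

end IsBracket

theorem lt_two_pow_log_succ (r : ℝ) : r < (2 : ℝ) ^ (Nat.log 2 ⌊r⌋₊ + 1) :=
  (Nat.lt_floor_add_one r).trans_le
    (mod_cast Nat.lt_pow_succ_log_self Nat.one_lt_two ⌊r⌋₊)

theorem two_pow_log_floor_le {r : ℝ} (hr : 1 ≤ r) : (2 : ℝ) ^ Nat.log 2 ⌊r⌋₊ ≤ r :=
  (mod_cast Nat.pow_log_le_self 2 (Nat.floor_pos.2 hr).ne' :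
    (2 : ℝ) ^ Nat.log 2 ⌊r⌋₊ ≤ ⌊r⌋₊).trans (Nat.floor_le (by linarith))

theorem monotone_log_floor : Monotone fun r : ℝ ↦ Nat.log 2 ⌊r⌋₊ :=
  fun _ _ h ↦ Nat.log_mono_right (Nat.floor_mono h)

theorem image_log_floor_subset_range {X : Type*} {b : X → ℝ} {r : ℝ} {F : Finset X}
    (hF : ∀ x ∈ F, b x ≤ r) :
    (F.image fun x ↦ Nat.log 2 ⌊b x⌋₊) ⊆ Finset.range (Nat.log 2 ⌊r⌋₊ + 1) := fun n hn ↦ by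
  obtain ⟨x, hx, rfl⟩ := Finset.mem_image.1 hn
  exact Finset.mem_range.2 (Nat.lt_succ_of_le (monotone_log_floor (hF x hx)))

namespace IsBracket

variable {X : Type*} [AddCommGroup X] {d : ℕ} {b : X → ℝ}

theorem exists_sum_rpow_le_sum_dyadic (hb : IsBracket d b) (s : ℝ) : ∃ C : ℝ, 0 < C ∧
    ∀ F : Finset X, ∑ x ∈ F, b x ^ (s - d) ≤
      C * ∑ n ∈ F.image fun x ↦ Nat.log 2 ⌊b x⌋₊, ((2 : ℝ) ^ s) ^ n := by
  obtain ⟨K, hK, hcard⟩ := hb.card_le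
  refine ⟨2 ^ |s - d| * K * 2 ^ d, by positivity, fun F ↦ ?_⟩
  rw [← Finset.sum_fiberwise_of_maps_to (g := fun x ↦ Nat.log 2 ⌊b x⌋₊)
    (fun x hx ↦ Finset.mem_image_of_mem (fun x ↦ Nat.log 2 ⌊b x⌋₊) hx), Finset.mul_sum]
  refine Finset.sum_le_sum fun n _ ↦ ?_
  have hshell (x) (hx : x ∈ F.filter fun x ↦ Nat.log 2 ⌊b x⌋₊ = n) :
      2 ^ n ≤ b x ∧ b x < 2 ^ (n + 1) := by
    obtain ⟨-, rfl⟩ := Finset.mem_filter.1 hx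
    exact ⟨two_pow_log_floor_le (by linarith [hb.two_le x]), lt_two_pow_log_succ _⟩
  calc ∑ x ∈ F with Nat.log 2 ⌊b x⌋₊ = n, b x ^ (s - d)
      ≤ ∑ x ∈ F with Nat.log 2 ⌊b x⌋₊ = n, 2 ^ |s - d| * ((2 : ℝ) ^ n) ^ (s - d) := by
        refine Finset.sum_le_sum fun x hx ↦ ?_
        refine rpow_le_rpow_abs_mul_rpow (hb.pos x) (by positivity) ?_ ?_ _
        · linarith [(hshell x hx).2, pow_succ (2 : ℝ) n]
        · linarith [(hshell x hx).1, hb.pos x]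
    _ ≤ K * (2 ^ (n + 1)) ^ d * (2 ^ |s - d| * ((2 : ℝ) ^ n) ^ (s - d)) := by
        rw [Finset.sum_const, nsmul_eq_mul]
        gcongr
        exact hcard _ (by positivity) _ fun x hx ↦ (hshell x hx).2.le
    _ = 2 ^ |s - d| * K * 2 ^ d * ((2 ^ n) ^ d * ((2 : ℝ) ^ n) ^ (s - d)) := by ring
    _ = 2 ^ |s - d| * K * 2 ^ d * (2 ^ s) ^ n := by
        rw [← Real.rpow_natCast (2 ^ n) d, ← Real.rpow_add (by positivity), add_sub_cancel,
          Real.rpow_pow_comm two_pos.le]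

theorem exists_sum_rpow_neg_le (hb : IsBracket d b) {s : ℝ} (hs : 0 < s) : ∃ C : ℝ, 0 < C ∧
    ∀ r : ℝ, 2 ≤ r → ∀ F : Finset X, (∀ x ∈ F, r ≤ b x) →
      ∑ x ∈ F, b x ^ (-(d : ℝ) - s) ≤ C * r ^ (-s) := by
  obtain ⟨C, hC, hsum⟩ := hb.exists_sum_rpow_le_sum_dyadic (-s)
  have hq : (2 : ℝ) ^ (-s) < 1 := Real.rpow_lt_one_of_one_lt_of_neg one_lt_two (neg_lt_zero.2 hs)
  have : 0 < 1 - (2 : ℝ) ^ (-s) := sub_pos.2 hq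
  refine ⟨C * (2 ^ s / (1 - 2 ^ (-s))), by positivity, fun r hr F hF ↦ ?_⟩
  set n₀ := Nat.log 2 ⌊r⌋₊
  set I := F.image fun x ↦ Nat.log 2 ⌊b x⌋₊
  have hI : I ⊆ Finset.Ico n₀ (I.sup id + 1) := fun n hn ↦ by
    refine Finset.mem_Ico.2 ⟨?_, Nat.lt_succ_of_le (Finset.le_sup (f := id) hn)⟩
    obtain ⟨x, hx, rfl⟩ := Finset.mem_image.1 hn
    exact monotone_log_floor (hF x hx)
  have hn₀ : ((2 : ℝ) ^ (-s)) ^ n₀ ≤ 2 ^ s * r ^ (-s) := by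
    rw [← Real.rpow_mul_natCast two_pos.le, mul_comm, Real.rpow_natCast_mul two_pos.le]
    have hlt := lt_two_pow_log_succ r
    simpa [abs_of_pos hs] using rpow_le_rpow_abs_mul_rpow (K := 2) (by positivity) (by linarith)
      ((two_pow_log_floor_le (by linarith)).trans (by linarith : r ≤ 2 * r))
      (by rw [← pow_succ']; exact hlt.le) (-s)
  calc ∑ x ∈ F, b x ^ (-(d : ℝ) - s) = ∑ x ∈ F, b x ^ (-s - d) := by simp only [neg_sub_comm]
    _ ≤ C * ∑ n ∈ I, ((2 : ℝ) ^ (-s)) ^ n := hsum F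
    _ ≤ C * ∑ n ∈ Finset.Ico n₀ (I.sup id + 1), ((2 : ℝ) ^ (-s)) ^ n := by
        gcongr
    _ ≤ C * (((2 : ℝ) ^ (-s)) ^ n₀ / (1 - 2 ^ (-s))) := by
        gcongr
        exact geom_sum_Ico_le_of_lt_one (by positivity) hq
    _ ≤ C * (2 ^ s * r ^ (-s) / (1 - 2 ^ (-s))) := by gcongr
    _ = _ := by ring

theorem exists_sum_rpow_le (hb : IsBracket d b) {s : ℝ} (hs : 0 < s) : ∃ C : ℝ, 0 < C ∧
    ∀ r : ℝ, 2 ≤ r → ∀ F : Finset X, (∀ x ∈ F, b x ≤ r) →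
      ∑ x ∈ F, b x ^ (s - d) ≤ C * r ^ s := by
  obtain ⟨C, hC, hsum⟩ := hb.exists_sum_rpow_le_sum_dyadic s
  have hq : 0 < (2 : ℝ) ^ s - 1 := sub_pos.2 (Real.one_lt_rpow one_lt_two hs)
  refine ⟨C * (2 ^ s / (2 ^ s - 1)), by positivity, fun r hr F hF ↦ ?_⟩
  set n₁ := Nat.log 2 ⌊r⌋₊
  have hn₁ : ((2 : ℝ) ^ s) ^ n₁ ≤ r ^ s := by
    rw [← Real.rpow_mul_natCast two_pos.le, mul_comm, Real.rpow_natCast_mul two_pos.le]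
    exact Real.rpow_le_rpow (by positivity) (two_pow_log_floor_le (by linarith)) hs.le
  calc ∑ x ∈ F, b x ^ (s - d) ≤ C * ∑ n ∈ F.image fun x ↦ Nat.log 2 ⌊b x⌋₊, ((2 : ℝ) ^ s) ^ n :=
        hsum F
    _ ≤ C * ∑ n ∈ Finset.range (n₁ + 1), ((2 : ℝ) ^ s) ^ n := by
        gcongr
        exact image_log_floor_subset_range hF
    _ = C * ((((2 : ℝ) ^ s) ^ (n₁ + 1) - 1) / (2 ^ s - 1)) := by
        rw [geom_sum_eq (by linarith)]
    _ ≤ C * (2 ^ s * r ^ s / (2 ^ s - 1)) := by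
        gcongr
        rw [pow_succ']
        exact (sub_le_self _ zero_le_one).trans (by gcongr)
    _ = _ := by ring

theorem exists_sum_rpow_neg_dim_le (hb : IsBracket d b) : ∃ C : ℝ, 0 < C ∧
    ∀ r : ℝ, 2 ≤ r → ∀ F : Finset X, (∀ x ∈ F, b x ≤ r) →
      ∑ x ∈ F, b x ^ (-(d : ℝ)) ≤ C * Real.log r := by
  obtain ⟨C, hC, hsum⟩ := hb.exists_sum_rpow_le_sum_dyadic 0
  have hlog2 : 0 < Real.log 2 := Real.log_pos one_lt_two
  refine ⟨C * (2 / Real.log 2), by positivity, fun r hr F hF ↦ ?_⟩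
  set n₁ := Nat.log 2 ⌊r⌋₊
  have hn₁ : n₁ * Real.log 2 ≤ Real.log r := by
    rw [← Real.log_pow]
    exact Real.log_le_log (by positivity) (two_pow_log_floor_le (by linarith))
  have hlogr : Real.log 2 ≤ Real.log r := Real.log_le_log two_pos hr
  calc ∑ x ∈ F, b x ^ (-(d : ℝ))
      ≤ C * ∑ n ∈ F.image fun x ↦ Nat.log 2 ⌊b x⌋₊, ((2 : ℝ) ^ (0 : ℝ)) ^ n := by
        simpa using hsum F
    _ ≤ C * ∑ n ∈ Finset.range (n₁ + 1), ((2 : ℝ) ^ (0 : ℝ)) ^ n := by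
        gcongr
        exact image_log_floor_subset_range hF
    _ = C * (n₁ + 1) := by simp
    _ ≤ C * (2 / Real.log 2 * Real.log r) := by
        gcongr
        rw [div_mul_eq_mul_div, le_div_iff₀ hlog2]
        linarith
    _ = _ := by ring

theorem exists_sum_rpow_neg_mul_log_le (hb : IsBracket d b) {s : ℝ} (hs : 0 < s) (α : ℕ) :
    ∃ C : ℝ, 0 < C ∧ ∀ r : ℝ, 2 ≤ r → ∀ F : Finset X, (∀ x ∈ F, r ≤ b x) →
      ∑ x ∈ F, b x ^ (-(d : ℝ) - s) * Real.log (b x) ^ α ≤ C * (r ^ (-s) * Real.log r ^ α) := by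
  obtain ⟨C, hC, hsum⟩ := hb.exists_sum_rpow_neg_le (half_pos hs)
  obtain ⟨C', hC', hlog⟩ := exists_log_pow_le α (half_pos hs)
  refine ⟨C' * C, by positivity, fun r hr F hF ↦ ?_⟩
  have hr0 : 0 < r := by linarith
  have hlogr : 0 ≤ Real.log r := Real.log_nonneg (by linarith)
  have hterm (x) (hx : x ∈ F) : b x ^ (-(d : ℝ) - s) * Real.log (b x) ^ α ≤
      C' * r ^ (-(s / 2)) * Real.log r ^ α * b x ^ (-(d : ℝ) - s / 2) := by
    have hbx := hb.pos x
    calc _ ≤ b x ^ (-(d : ℝ) - s) * (C' * (b x / r) ^ (s / 2) * Real.log r ^ α) := by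
          gcongr
          exact hlog r (b x) hr (hF x hx)
      _ = C' * r ^ (-(s / 2)) * Real.log r ^ α * (b x ^ (-(d : ℝ) - s) * b x ^ (s / 2)) := by
          rw [Real.div_rpow hbx.le hr0.le, Real.rpow_neg hr0.le]; field_simp
      _ = _ := by rw [← Real.rpow_add hbx]; ring_nf
  calc _ ≤ ∑ x ∈ F, C' * r ^ (-(s / 2)) * Real.log r ^ α * b x ^ (-(d : ℝ) - s / 2) :=
        Finset.sum_le_sum hterm
    _ ≤ C' * r ^ (-(s / 2)) * Real.log r ^ α * (C * r ^ (-(s / 2))) := by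
        rw [← Finset.mul_sum]
        gcongr
        exact hsum r hr F hF
    _ = C' * C * (r ^ (-(s / 2) + -(s / 2)) * Real.log r ^ α) := by
        rw [Real.rpow_add hr0]; ring
    _ = _ := by ring_nf

theorem exists_sum_rpow_neg_dim_mul_log_le (hb : IsBracket d b) (α : ℕ) : ∃ C : ℝ, 0 < C ∧
    ∀ r : ℝ, 2 ≤ r → ∀ F : Finset X, (∀ x ∈ F, b x ≤ r) →
      ∑ x ∈ F, b x ^ (-(d : ℝ)) * Real.log (b x) ^ α ≤ C * Real.log r ^ (α + 1) := by
  obtain ⟨C, hC, hsum⟩ := hb.exists_sum_rpow_neg_dim_le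
  refine ⟨C, hC, fun r hr F hF ↦ ?_⟩
  have hlogr : 0 ≤ Real.log r := Real.log_nonneg (by linarith)
  calc _ ≤ ∑ x ∈ F, b x ^ (-(d : ℝ)) * Real.log r ^ α := by
        refine Finset.sum_le_sum fun x hx ↦ ?_
        have := hb.pos x
        have := (hb.log_pos x).le
        gcongr
        exact hF x hx
    _ ≤ C * Real.log r * Real.log r ^ α := by
        rw [← Finset.sum_mul]
        gcongr
        exact hsum r hr F hF
    _ = _ := by ring

theorem summable_rpow_neg_mul_log (hb : IsBracket d b) {s : ℝ} (hs : 0 < s) (α : ℕ) :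
    Summable fun x ↦ b x ^ (-(d : ℝ) - s) * Real.log (b x) ^ α := by
  obtain ⟨C, -, hsum⟩ := hb.exists_sum_rpow_neg_mul_log_le hs α
  exact summable_of_sum_le (fun x ↦ (hb.weight_pos _ α x).le)
    fun F ↦ hsum 2 le_rfl F fun x _ ↦ hb.two_le x

end IsBracket

/-! ### Finite differences of smooth functions -/

section Calculus

variable {E V : Type*} [NormedAddCommGroup E] [NormedAddCommGroup V]

/-- The total length of a list of steps, which bounds the radius of its stencil. -/
def totalLength (l : List E) : ℝ := (l.map (‖·‖)).sum

theorem totalLength_cons (ρ : E) (l : List E) :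
    totalLength (ρ :: l) = ‖ρ‖ + totalLength l := by
  simp [totalLength]

theorem totalLength_nonneg (l : List E) : 0 ≤ totalLength l :=
  List.sum_nonneg (by simp)

theorem norm_le_totalLength {l : List E} {y : E} (hy : y ∈ stencil l) : ‖y‖ ≤ totalLength l := by
  induction l generalizing y with
  | nil => simp [totalLength, show y = 0 from hy]
  | cons ρ l ih =>
    rw [totalLength_cons]
    rcases hy with hy | ⟨z, hz, rfl⟩
    · linarith [ih hy, norm_nonneg ρ]
    · linarith [ih hz, norm_add_le z ρ]

theorem add_mem_closedBall_totalLength {l : List E} {y : E} (hy : y ∈ stencil l) (x : E) :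
    x + y ∈ Metric.closedBall x (totalLength l) := by
  simpa using norm_le_totalLength hy

variable [NormedSpace ℝ E] [NormedSpace ℝ V] {U : Set E} {f : E → V}

theorem hasFDerivAt_iterDiff {l : List E} {f' : E → E →L[ℝ] V} {x : E}
    (h : ∀ y ∈ stencil l, HasFDerivAt f (f' (x + y)) (x + y)) :
    HasFDerivAt (iterDiff l f) (iterDiff l f' x) x := by
  induction l generalizing x with
  | nil => simpa [stencil] using h
  | cons ρ l ih =>
    have hleft := ih fun y hy ↦ h y (Or.inl hy)
    have hright : HasFDerivAt (iterDiff l f) (iterDiff l f' (x + ρ)) (x + ρ) := ih fun y hy ↦ by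
      simpa [add_assoc, add_comm ρ] using h (y + ρ) (Or.inr ⟨y, hy, rfl⟩)
    exact ((hasFDerivAt_comp_add_right ρ).2 hright).sub hleft

theorem differentiableAt_iteratedFDeriv (hU : IsOpen U) (hf : ContDiffOn ℝ (⊤ : ℕ∞) f U) (i : ℕ)
    {x : E} (hx : x ∈ U) : DifferentiableAt ℝ (iteratedFDeriv ℝ i f) x :=
  (hf.contDiffAt (hU.mem_nhds hx)).differentiableAt_iteratedFDeriv
    (by exact_mod_cast WithTop.coe_lt_top _)

theorem norm_iterDiff_fderiv_iteratedFDeriv (f : E → V) (i : ℕ) (l : List E) (x : E) :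
    ‖iterDiff l (fderiv ℝ (iteratedFDeriv ℝ i f)) x‖ =
      ‖iterDiff l (iteratedFDeriv ℝ (i + 1) f) x‖ := by
  set T := (continuousMultilinearCurryLeftEquiv ℝ (fun _ : Fin (i + 1) ↦ E) V).symm
  have hT : iterDiff l (iteratedFDeriv ℝ (i + 1) f) x =
      T (iterDiff l (fderiv ℝ (iteratedFDeriv ℝ i f)) x) := by
    rw [iteratedFDeriv_succ_eq_comp_left]
    exact (addMonoidHom_iterDiff T.toLinearEquiv.toLinearMap.toAddMonoidHom l _ x).symm
  rw [hT, LinearIsometryEquiv.norm_map]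

theorem dist_le_of_mem_segment_add {x ρ y : E} (hy : y ∈ segment ℝ x (x + ρ)) :
    dist y x ≤ ‖ρ‖ := by
  rw [segment_eq_image'] at hy
  obtain ⟨t, ⟨ht0, ht1⟩, rfl⟩ := hy
  simpa [norm_smul, abs_of_nonneg ht0] using mul_le_of_le_one_left (norm_nonneg ρ) ht1

theorem norm_iterDiff_iteratedFDeriv_le (hU : IsOpen U) (hf : ContDiffOn ℝ (⊤ : ℕ∞) f U)
    {l : List E} {i : ℕ} {x : E} {B : ℝ} (hx : Metric.closedBall x (totalLength l) ⊆ U)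
    (hB : ∀ y ∈ Metric.closedBall x (totalLength l),
      ‖iteratedFDeriv ℝ (i + l.length) f y‖ ≤ B) :
    ‖iterDiff l (iteratedFDeriv ℝ i f) x‖ ≤ B * (l.map (‖·‖)).prod := by
  induction l generalizing i x with
  | nil => simpa using hB x (by simp [totalLength])
  | cons ρ l ih =>
    have hball (y) (hy : y ∈ segment ℝ x (x + ρ)) : Metric.closedBall y (totalLength l) ⊆
        Metric.closedBall x (totalLength (ρ :: l)) := by
      apply Metric.closedBall_subset_closedBall'
      linarith [totalLength_cons ρ l, dist_le_of_mem_segment_add hy]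
    have hderiv (y) (hy : y ∈ segment ℝ x (x + ρ)) :
        HasFDerivWithinAt (iterDiff l (iteratedFDeriv ℝ i f))
          (iterDiff l (fderiv ℝ (iteratedFDeriv ℝ i f)) y) (segment ℝ x (x + ρ)) y :=
      (hasFDerivAt_iterDiff fun z hz ↦ (differentiableAt_iteratedFDeriv hU hf i
        (hx (hball y hy (add_mem_closedBall_totalLength hz y)))).hasFDerivAt).hasFDerivWithinAt
    have hbound (y) (hy : y ∈ segment ℝ x (x + ρ)) :
        ‖iterDiff l (fderiv ℝ (iteratedFDeriv ℝ i f)) y‖ ≤ B * (l.map (‖·‖)).prod := by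
      rw [norm_iterDiff_fderiv_iteratedFDeriv]
      refine ih ((hball y hy).trans hx) fun z hz ↦ ?_
      have hz' := hB z (hball y hy hz)
      rwa [List.length_cons, ← add_assoc, add_right_comm] at hz'
    have hmv := (convex_segment x (x + ρ)).norm_image_sub_le_of_norm_hasFDerivWithin_le
      hderiv hbound (left_mem_segment _ _ _) (right_mem_segment _ _ _)
    rw [iterDiff_cons_apply]
    refine hmv.trans_eq ?_
    rw [add_sub_cancel_left, List.map_cons, List.prod_cons]
    ring

theorem hasDerivAt_sum_mul_pow_div_factorial (c : ℕ → ℝ) (n : ℕ) (t : ℝ) :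
    HasDerivAt (fun t ↦ ∑ i ∈ Finset.range (n + 1), c i * t ^ i / (i.factorial : ℝ))
      (∑ i ∈ Finset.range n, c (i + 1) * t ^ i / (i.factorial : ℝ)) t := by
  have hterm (i : ℕ) : HasDerivAt (fun t ↦ c (i + 1) * t ^ (i + 1) / ((i + 1).factorial : ℝ))
      (c (i + 1) * t ^ i / (i.factorial : ℝ)) t := by
    refine (((hasDerivAt_pow (i + 1) t).const_mul (c (i + 1))).div_const _).congr_deriv ?_
    rw [Nat.factorial_succ]
    push_cast
    field_simp
  simp_rw [Finset.sum_range_succ' _ n, pow_zero]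
  exact (HasDerivAt.fun_sum fun i _ ↦ hterm i).add_const _

theorem abs_sub_sum_taylor_le {n : ℕ} {ψ : ℕ → ℝ → ℝ} {B : ℝ}
    (hψ : ∀ i < n, ∀ t ∈ Set.Icc (0 : ℝ) 1, HasDerivAt (ψ i) (ψ (i + 1) t) t)
    (hB : ∀ t ∈ Set.Icc (0 : ℝ) 1, |ψ n t| ≤ B) {t : ℝ} (ht : t ∈ Set.Icc (0 : ℝ) 1) :
    |ψ 0 t - ∑ i ∈ Finset.range n, ψ i 0 * t ^ i / (i.factorial : ℝ)| ≤ B := by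
  induction n generalizing ψ t with
  | zero => simpa using hB t ht
  | succ n ih =>
    have hderiv (s) (hs : s ∈ Set.Icc (0 : ℝ) 1) : HasDerivWithinAt
        (fun t ↦ ψ 0 t - ∑ i ∈ Finset.range (n + 1), ψ i 0 * t ^ i / (i.factorial : ℝ))
        (ψ 1 s - ∑ i ∈ Finset.range n, ψ (i + 1) 0 * s ^ i / (i.factorial : ℝ))
        (Set.Icc 0 1) s :=
      ((hψ 0 n.succ_pos s hs).sub
        (hasDerivAt_sum_mul_pow_div_factorial (ψ · 0) n s)).hasDerivWithinAt
    have hbound (s) (hs : s ∈ Set.Icc (0 : ℝ) 1) :=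
      ih (ψ := fun i ↦ ψ (i + 1)) (fun i hi ↦ hψ (i + 1) (Nat.succ_lt_succ hi)) hB hs
    have hmv := (convex_Icc (0 : ℝ) 1).norm_image_sub_le_of_norm_hasDerivWithin_le hderiv
      hbound (Set.left_mem_Icc.2 zero_le_one) ht
    have hzero : ψ 0 0 - ∑ i ∈ Finset.range (n + 1), ψ i 0 * 0 ^ i / (i.factorial : ℝ) = 0 := by
      simp [Finset.sum_range_succ']
    rw [hzero, sub_zero, sub_zero, Real.norm_eq_abs, Real.norm_of_nonneg ht.1] at hmv
    exact hmv.trans (mul_le_of_le_one_right ((abs_nonneg _).trans (hB t ht)) ht.2)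

theorem iterDiff_iteratedFDeriv_apply (f : E → V) (l : List E) (i : ℕ) (v : Fin i → E) (x : E) :
    iterDiff l (fun y ↦ iteratedFDeriv ℝ i f y v) x = iterDiff l (iteratedFDeriv ℝ i f) x v :=
  (addMonoidHom_iterDiff
    (ContinuousMultilinearMap.apply ℝ (fun _ : Fin i ↦ E) V v).toLinearMap.toAddMonoidHom
    l (iteratedFDeriv ℝ i f) x).symm

theorem hasDerivAt_iterDiff_iteratedFDeriv_apply (hU : IsOpen U)
    (hf : ContDiffOn ℝ (⊤ : ℕ∞) f U) {l : List E} (i : ℕ) {x v : E} {t : ℝ}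
    (hx : Metric.closedBall (x + t • v) (totalLength l) ⊆ U) :
    HasDerivAt (fun t : ℝ ↦ iterDiff l (fun y ↦ iteratedFDeriv ℝ i f y fun _ ↦ v) (x + t • v))
      (iterDiff l (fun y ↦ iteratedFDeriv ℝ (i + 1) f y fun _ ↦ v) (x + t • v)) t := by
  set T := ContinuousMultilinearMap.apply ℝ (fun _ : Fin i ↦ E) V (fun _ ↦ v)
  have hderiv : HasFDerivAt (iterDiff l fun y ↦ T (iteratedFDeriv ℝ i f y))
      (iterDiff l (fun y ↦ T ∘L fderiv ℝ (iteratedFDeriv ℝ i f) y) (x + t • v)) (x + t • v) :=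
    hasFDerivAt_iterDiff fun z hz ↦ T.hasFDerivAt.comp _ (differentiableAt_iteratedFDeriv hU hf i
      (hx (add_mem_closedBall_totalLength hz _))).hasFDerivAt
  have hline : HasDerivAt (fun t : ℝ ↦ x + t • v) v t := by
    simpa using ((hasDerivAt_id t).smul_const v).const_add x
  refine (hderiv.comp_hasDerivAt t hline).congr_deriv ?_
  exact addMonoidHom_iterDiff (ContinuousLinearMap.apply ℝ V v).toLinearMap.toAddMonoidHom l _ _

theorem abs_iterDiff_sub_sum_taylor_le {f : E → ℝ} (hU : IsOpen U)
    (hf : ContDiffOn ℝ (⊤ : ℕ∞) f U) {l : List E} {n : ℕ} {x v : E} {B : ℝ}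
    (hx : ∀ t ∈ Set.Icc (0 : ℝ) 1, Metric.closedBall (x + t • v) (totalLength l) ⊆ U)
    (hB : ∀ t ∈ Set.Icc (0 : ℝ) 1, ∀ y ∈ Metric.closedBall (x + t • v) (totalLength l),
      ‖iteratedFDeriv ℝ (n + l.length) f y‖ ≤ B) :
    |iterDiff l f (x + v) - ∑ i ∈ Finset.range n,
      iterDiff l (fun y ↦ iteratedFDeriv ℝ i f y fun _ ↦ v) x / (i.factorial : ℝ)| ≤
      B * (l.map (‖·‖)).prod * ‖v‖ ^ n := by
  have htaylor := abs_sub_sum_taylor_le (n := n) (B := B * (l.map (‖·‖)).prod * ‖v‖ ^ n)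
    (ψ := fun i t ↦ iterDiff l (fun y ↦ iteratedFDeriv ℝ i f y fun _ ↦ v) (x + t • v))
    (fun i _ t ht ↦ hasDerivAt_iterDiff_iteratedFDeriv_apply hU hf i (hx t ht))
    (fun t ht ↦ ?_) (Set.right_mem_Icc.2 zero_le_one)
  · simpa using htaylor
  · have hop := (iterDiff l (iteratedFDeriv ℝ n f) (x + t • v)).le_opNorm fun _ ↦ v
    rw [Finset.prod_const, Finset.card_univ, Fintype.card_fin] at hop
    rw [iterDiff_iteratedFDeriv_apply]
    refine hop.trans ?_
    gcongr
    exact norm_iterDiff_iteratedFDeriv_le hU hf (hx t ht) (hB t ht)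

theorem norm_iterDiff_le (hU : IsOpen U) (hf : ContDiffOn ℝ (⊤ : ℕ∞) f U) {l : List E} {x : E}
    {B : ℝ} (hx : Metric.closedBall x (totalLength l) ⊆ U)
    (hB : ∀ y ∈ Metric.closedBall x (totalLength l), ‖iteratedFDeriv ℝ l.length f y‖ ≤ B) :
    ‖iterDiff l f x‖ ≤ B * (l.map (‖·‖)).prod := by
  refine le_trans ?_ (norm_iterDiff_iteratedFDeriv_le (i := 0) hU hf hx (by rwa [zero_add]))
  have hop := (iterDiff l (iteratedFDeriv ℝ 0 f) x).le_opNorm 0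
  rw [← iterDiff_iteratedFDeriv_apply] at hop
  simpa using hop

theorem norm_iteratedFDeriv_comp_const_smul_le (f : E → V) (i : ℕ) {t : ℝ} (ht : t ≠ 0) (x : E) :
    ‖iteratedFDeriv ℝ i (fun y ↦ f (t • y)) x‖ ≤ |t| ^ i * ‖iteratedFDeriv ℝ i f (t • x)‖ := by
  let g : E ≃L[ℝ] E := ContinuousLinearEquiv.smulLeft (Units.mk0 t ht)
  have hcomp : iteratedFDeriv ℝ i (f ∘ g) x =
      (iteratedFDeriv ℝ i f (g x)).compContinuousLinearMap fun _ ↦ (g : E →L[ℝ] E) := by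
    simpa [iteratedFDerivWithin_univ] using
      g.iteratedFDerivWithin_comp_right f uniqueDiffOn_univ (x := x) (Set.mem_univ _) i
  have hg : ‖(g : E →L[ℝ] E)‖ ≤ |t| :=
    ContinuousLinearMap.opNorm_le_bound _ (abs_nonneg t) fun z ↦ (norm_smul t z).le
  calc ‖iteratedFDeriv ℝ i (f ∘ g) x‖
      ≤ ‖iteratedFDeriv ℝ i f (g x)‖ * ∏ _j : Fin i, ‖(g : E →L[ℝ] E)‖ :=
        hcomp ▸ ContinuousMultilinearMap.norm_compContinuousLinearMap_le _ _
    _ ≤ ‖iteratedFDeriv ℝ i f (g x)‖ * |t| ^ i := by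
        rw [Finset.prod_const, Finset.card_univ, Fintype.card_fin]
        gcongr
    _ = |t| ^ i * ‖iteratedFDeriv ℝ i f (t • x)‖ := mul_comm _ _

theorem norm_iteratedFDeriv_le_of_homogeneous {f : E → ℝ}
    (hf : ContDiffOn ℝ (⊤ : ℕ∞) f {x | x ≠ 0}) {e : ℝ} {κ : ℝ → ℝ}
    (hhom : ∀ t : ℝ, 0 < t → ∀ x : E, x ≠ 0 → f (t • x) = t ^ e * f x + κ t) {i : ℕ} (hi : i ≠ 0)
    {x : E} (hx : x ≠ 0) :
    ‖iteratedFDeriv ℝ i f x‖ ≤ ‖x‖ ^ (e - i) * ‖iteratedFDeriv ℝ i f (‖x‖⁻¹ • x)‖ := by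
  set t := ‖x‖
  have ht : 0 < t := norm_pos_iff.2 hx
  have hnear : f =ᶠ[𝓝 x] fun z ↦ t ^ e * f (t⁻¹ • z) + κ t := by
    filter_upwards [isOpen_ne.mem_nhds hx] with z hz
    rw [← hhom t ht _ (smul_ne_zero (inv_ne_zero ht.ne') hz), smul_inv_smul₀ ht.ne']
  have hsmooth : ContDiffAt ℝ i (fun z ↦ f (t⁻¹ • z)) x := by
    have hcont := hf.contDiffAt (isOpen_ne.mem_nhds (smul_ne_zero (inv_ne_zero ht.ne') hx))
    exact (hcont.of_le (by exact_mod_cast le_top)).comp x (contDiff_const_smul _).contDiffAt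
  have heq : iteratedFDeriv ℝ i f x = t ^ e • iteratedFDeriv ℝ i (fun z ↦ f (t⁻¹ • z)) x := by
    rw [(hnear.iteratedFDeriv ℝ i).eq_of_nhds,
      fun_iteratedFDeriv_add_apply (contDiffAt_const.mul hsmooth) contDiffAt_const,
      iteratedFDeriv_const_of_ne hi, Pi.zero_apply, add_zero]
    exact iteratedFDeriv_const_smul_apply' (a := t ^ e) hsmooth
  calc ‖iteratedFDeriv ℝ i f x‖ = t ^ e * ‖iteratedFDeriv ℝ i (fun z ↦ f (t⁻¹ • z)) x‖ := by
        rw [heq, norm_smul, Real.norm_of_nonneg (Real.rpow_nonneg ht.le e)]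
    _ ≤ t ^ e * (|t⁻¹| ^ i * ‖iteratedFDeriv ℝ i f (t⁻¹ • x)‖) := by
        gcongr
        exact norm_iteratedFDeriv_comp_const_smul_le f i (inv_ne_zero ht.ne') x
    _ = t ^ (e - i) * ‖iteratedFDeriv ℝ i f (t⁻¹ • x)‖ := by
        rw [abs_of_pos (inv_pos.2 ht), inv_pow, Real.rpow_sub ht, Real.rpow_natCast]
        ring

theorem exists_norm_iteratedFDeriv_le_of_homogeneous [FiniteDimensional ℝ E] {f : E → ℝ}
    (hf : ContDiffOn ℝ (⊤ : ℕ∞) f {x | x ≠ 0}) {e : ℝ} {κ : ℝ → ℝ}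
    (hhom : ∀ t : ℝ, 0 < t → ∀ x : E, x ≠ 0 → f (t • x) = t ^ e * f x + κ t) {i : ℕ}
    (hi : i ≠ 0) :
    ∃ C : ℝ, 0 < C ∧ ∀ x : E, x ≠ 0 → ‖iteratedFDeriv ℝ i f x‖ ≤ C * ‖x‖ ^ (e - i) := by
  have hcont : ContinuousOn (iteratedFDeriv ℝ i f) (Metric.sphere (0 : E) 1) := fun x hx ↦
    (differentiableAt_iteratedFDeriv isOpen_ne hf i
      (Metric.ne_of_mem_sphere hx one_ne_zero)).continuousAt.continuousWithinAt
  obtain ⟨C, hC⟩ := (isCompact_sphere (0 : E) 1).exists_bound_of_continuousOn hcont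
  refine ⟨max C 1, by positivity, fun x hx ↦ ?_⟩
  have hunit : ‖x‖⁻¹ • x ∈ Metric.sphere (0 : E) 1 := by simp [norm_smul, hx]
  refine (norm_iteratedFDeriv_le_of_homogeneous hf hhom hi hx).trans ?_
  rw [mul_comm]
  gcongr
  exact (hC _ hunit).trans (le_max_left _ _)

end Calculus

/-! ### The lattice in index coordinates -/

section Lattice

variable {d : ℕ} {A : Matrix (Fin d) (Fin d) ℝ}

/-- The parametrization `z ↦ A z` of the Bravais lattice as an additive homomorphism. -/
def latticeHom (A : Matrix (Fin d) (Fin d) ℝ) : (Fin d → ℤ) →+ Vec d where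
  toFun := latticePt d A
  map_zero' := by funext i; simp [latticePt]
  map_add' x y := by funext i; simp [latticePt, mul_add, Finset.sum_add_distrib]

/-- The sup-norm version of `⟨·⟩`, pulled back to the index lattice `ℤ^d`. -/
def latticeBracket (A : Matrix (Fin d) (Fin d) ℝ) (z : Fin d → ℤ) : ℝ := ‖latticeHom A z‖ + 2

theorem exists_abs_coord_le_norm_latticeHom (hA : IsUnit A.det) :
    ∃ K : ℝ, 0 < K ∧ ∀ z i, |(z i : ℝ)| ≤ K * ‖latticeHom A z‖ := by
  have hker : LinearMap.ker A.mulVecLin = ⊥ :=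
    LinearMap.ker_eq_bot.2 (Matrix.mulVec_injective_iff_isUnit.2 ((A.isUnit_iff_isUnit_det).2 hA))
  obtain ⟨K, hK, hanti⟩ := A.mulVecLin.exists_antilipschitzWith hker
  refine ⟨K, hK, fun z i ↦ ?_⟩
  have hz := hanti.le_mul_dist (fun j ↦ (z j : ℝ)) 0
  rw [map_zero, dist_zero_right, dist_zero_right] at hz
  exact (norm_le_pi_norm (fun j ↦ (z j : ℝ)) i).trans hz

theorem latticeHom_injective (hA : IsUnit A.det) : Function.Injective (latticeHom A) := by
  obtain ⟨K, -, hK⟩ := exists_abs_coord_le_norm_latticeHom hA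
  refine (injective_iff_map_eq_zero _).2 fun z hz ↦ funext fun i ↦ ?_
  have hi := hK z i
  rw [hz, norm_zero, mul_zero] at hi
  exact_mod_cast abs_nonpos_iff.1 hi

theorem natAbs_le_floor {z : ℤ} {r : ℝ} (hz : |(z : ℝ)| ≤ r) : z.natAbs ≤ ⌊r⌋₊ :=
  Nat.le_floor (by rwa [Nat.cast_natAbs, Int.cast_abs])

theorem isBracket_latticeBracket (hA : IsUnit A.det) : IsBracket d (latticeBracket A) where
  two_le z := by simp [latticeBracket]
  map_neg z := by simp [latticeBracket]
  map_add_le x y := by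
    simp only [latticeBracket, map_add]
    linarith [norm_add_le (latticeHom A x) (latticeHom A y)]
  card_le := by
    obtain ⟨K, hK, hcoord⟩ := exists_abs_coord_le_norm_latticeHom hA
    refine ⟨(2 * K + 1) ^ d, by positivity, fun r hr F hF ↦ ?_⟩
    rcases F.eq_empty_or_nonempty with rfl | ⟨z₀, hz₀⟩
    · simpa using by positivity
    have hr1 : 1 ≤ r := by
      have := hF z₀ hz₀
      simp only [latticeBracket] at this
      linarith [norm_nonneg (latticeHom A z₀)]
    set M : ℕ := ⌊K * r⌋₊
    have hsub : F ⊆ Finset.Icc (fun _ ↦ -(M : ℤ)) (fun _ ↦ (M : ℤ)) := fun z hz ↦ by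
      have hzM (i) : (z i).natAbs ≤ M := by
        refine natAbs_le_floor ((hcoord z i).trans ?_)
        gcongr
        have := hF z hz
        simp only [latticeBracket] at this
        linarith
      exact Finset.mem_Icc.2 ⟨fun i ↦ by grind, fun i ↦ by grind⟩
    have hcard : (Finset.Icc (fun _ : Fin d ↦ -(M : ℤ)) fun _ ↦ (M : ℤ)).card =
        (2 * M + 1) ^ d := by
      rw [Pi.card_Icc, Finset.prod_const, Int.card_Icc, Finset.card_univ, Fintype.card_fin]
      congr 1
      lia
    calc (F.card : ℝ) ≤ (2 * M + 1 : ℝ) ^ d := by exact_mod_cast hcard ▸ Finset.card_le_card hsub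
      _ ≤ (2 * (K * r) + r) ^ d := by
        gcongr
        exact Nat.floor_le (by positivity)
      _ = (2 * K + 1) ^ d * r ^ d := by rw [← mul_pow]; ring

/-! ### Slowly varying functions grow sublinearly -/

theorem neg_one_le_sign (z : ℤ) : -1 ≤ z.sign := by
  rcases z.sign_trichotomy with h | h | h <;> simp [h]

theorem sign_le_one (z : ℤ) : z.sign ≤ 1 := by
  rcases z.sign_trichotomy with h | h | h <;> simp [h]

theorem natAbs_sub_sign_le {z : ℤ} {n : ℕ} (hz : z.natAbs ≤ n + 1) :
    (z - z.sign).natAbs ≤ n := by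
  rcases lt_trichotomy z 0 with h | rfl | h
  · rw [Int.sign_eq_neg_one_of_neg h]; lia
  · simp
  · rw [Int.sign_eq_one_of_pos h]; lia

theorem exists_norm_le_add_mul {V : Type*} [NormedAddCommGroup V] {w : (Fin d → ℤ) → V}
    (hw : ∀ a, Tendsto (fun m ↦ w (m + a) - w m) cofinite (𝓝 0)) {ε : ℝ} (hε : 0 < ε) :
    ∃ B : ℝ, ∀ (n : ℕ) (m : Fin d → ℤ), (∀ i, (m i).natAbs ≤ n) → ‖w m‖ ≤ B + ε * n := by
  have hsmall : ∀ᶠ m in cofinite, ∀ a ∈ Set.Icc (-1 : Fin d → ℤ) 1, ‖w (m - a) - w m‖ < ε := by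
    refine (eventually_all_finite (Set.finite_Icc _ _)).2 fun a _ ↦ ?_
    simpa [sub_eq_add_neg] using (hw (-a)).norm.eventually_lt_const (by simpa using hε)
  obtain ⟨B, hB⟩ := ((hsmall.insert 0).image (‖w ·‖)).bddAbove
  refine ⟨B, fun n ↦ ?_⟩
  induction n with
  | zero =>
    intro m hm
    have hm0 : m = 0 := funext fun i ↦ by simpa using hm i
    simpa using hB ⟨0, Set.mem_insert _ _, by rw [hm0]⟩
  | succ n ih =>
    intro m hm
    by_cases hmε : ∀ a ∈ Set.Icc (-1 : Fin d → ℤ) 1, ‖w (m - a) - w m‖ < ε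
    · set a : Fin d → ℤ := fun i ↦ (m i).sign
      have hstep := hmε a ⟨fun i ↦ neg_one_le_sign _, fun i ↦ sign_le_one _⟩
      have hprev := ih (m - a) fun i ↦ natAbs_sub_sign_le (hm i)
      have htri := norm_le_norm_add_norm_sub' (w m) (w (m - a))
      rw [norm_sub_rev] at htri
      push_cast
      linarith
    · have : ‖w m‖ ≤ B := hB ⟨m, Or.inr hmε, rfl⟩
      have : 0 ≤ ε * ((n + 1 : ℕ) : ℝ) := by positivity
      linarith

theorem isLittleO_latticeBracket_of_tendsto_sub {V : Type*} [NormedAddCommGroup V]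
    (hA : IsUnit A.det) {w : (Fin d → ℤ) → V}
    (hw : ∀ a, Tendsto (fun m ↦ w (m + a) - w m) cofinite (𝓝 0)) (y : Fin d → ℤ) :
    (fun m ↦ w (m + y)) =o[cofinite] latticeBracket A := by
  have hb := isBracket_latticeBracket hA
  obtain ⟨K, hK, hcoord⟩ := exists_abs_coord_le_norm_latticeHom hA
  have hw₀ : w =o[cofinite] latticeBracket A := isLittleO_iff.2 fun c hc ↦ by
    obtain ⟨B, hB⟩ := exists_norm_le_add_mul hw (ε := c / (2 * K)) (by positivity)
    filter_upwards [hb.tendsto_cofinite_atTop.eventually_ge_atTop (2 * B / c)] with m hm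
    rw [div_le_iff₀ hc] at hm
    have hfloor : (⌊K * ‖latticeHom A m‖⌋₊ : ℝ) ≤ K * ‖latticeHom A m‖ :=
      Nat.floor_le (by positivity)
    calc ‖w m‖ ≤ B + c / (2 * K) * ⌊K * ‖latticeHom A m‖⌋₊ :=
          hB _ m fun i ↦ natAbs_le_floor (hcoord m i)
      _ ≤ B + c / (2 * K) * (K * ‖latticeHom A m‖) := by gcongr
      _ = B + c / 2 * (latticeBracket A m - 2) := by
        rw [latticeBracket]; field_simp; ring
      _ ≤ c * ‖latticeBracket A m‖ := by
        rw [Real.norm_of_nonneg (hb.pos m).le]; linarith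
  have hone : (fun _ ↦ (1 : ℝ)) =O[cofinite] latticeBracket A :=
    isBigO_of_le _ fun m ↦ by
      rw [norm_one, Real.norm_of_nonneg (hb.pos m).le]; linarith [hb.two_le m]
  simpa using hw₀.add (((isLittleO_one_iff ℝ).2 (hw y)).trans_isBigO hone)

/-! ### Smooth cutoffs on the lattice -/

/-- The profile of the cutoff functions `latticeCutoff`. -/
def standardBump (d : ℕ) : ContDiffBump (0 : Vec d) := ⟨1 / 8, 1 / 4, by norm_num, by norm_num⟩

/-- A smooth cutoff at scale `T` around `x₀`, restricted to the lattice: it equals `1` within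
distance `T / 8` of `x₀` and vanishes beyond distance `T / 4`. -/
def latticeCutoff (A : Matrix (Fin d) (Fin d) ℝ) (x₀ : Vec d) (T : ℝ) (z : Fin d → ℤ) : ℝ :=
  standardBump d (T⁻¹ • (latticeHom A z - x₀))

theorem norm_inv_smul_of_pos {E : Type*} [NormedAddCommGroup E] [NormedSpace ℝ E] {T : ℝ}
    (hT : 0 < T) (x : E) : ‖T⁻¹ • x‖ = ‖x‖ / T := by
  rw [norm_smul, Real.norm_of_nonneg (inv_nonneg.2 hT.le), inv_mul_eq_div]

theorem latticeCutoff_eq_zero {x₀ : Vec d} {T : ℝ} (hT : 0 < T) {z : Fin d → ℤ}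
    (h : T / 4 ≤ ‖latticeHom A z - x₀‖) : latticeCutoff A x₀ T z = 0 := by
  refine (standardBump d).zero_of_le_dist ?_
  rw [dist_zero_right, norm_inv_smul_of_pos hT]
  exact (le_div_iff₀ hT).2 (by simp only [standardBump]; linarith)

theorem latticeCutoff_eq_one {x₀ : Vec d} {T : ℝ} (hT : 0 < T) {z : Fin d → ℤ}
    (h : ‖latticeHom A z - x₀‖ ≤ T / 8) : latticeCutoff A x₀ T z = 1 := by
  refine (standardBump d).one_of_mem_closedBall ?_
  rw [Metric.mem_closedBall, dist_zero_right, norm_inv_smul_of_pos hT]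
  exact (div_le_iff₀ hT).2 (by simp only [standardBump]; linarith)

theorem abs_latticeCutoff_le_one (x₀ : Vec d) (T : ℝ) (z : Fin d → ℤ) :
    |latticeCutoff A x₀ T z| ≤ 1 := by
  rw [latticeCutoff, abs_of_nonneg (standardBump d).nonneg]
  exact (standardBump d).le_one

theorem exists_abs_iterDiff_latticeCutoff_le (A : Matrix (Fin d) (Fin d) ℝ)
    (l : List (Fin d → ℤ)) : ∃ C : ℝ, 0 < C ∧ ∀ (x₀ : Vec d) (T : ℝ), 0 < T → ∀ z,
      |iterDiff l (latticeCutoff A x₀ T) z| ≤ C * T⁻¹ ^ l.length := by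
  have hsmooth : ContDiff ℝ (⊤ : ℕ∞) (standardBump d) := (standardBump d).contDiff
  obtain ⟨B, hB⟩ := ((standardBump d).hasCompactSupport.iteratedFDeriv
    (𝕜 := ℝ) l.length).exists_bound_of_continuous
      (hsmooth.continuous_iteratedFDeriv (m := l.length) (by exact_mod_cast le_top))
  refine ⟨max (B * (l.map fun z ↦ ‖latticeHom A z‖).prod) 1, by positivity, fun x₀ T hT z ↦ ?_⟩
  let φ : (Fin d → ℤ) →+ Vec d :=
    (DistribSMul.toAddMonoidHom (Vec d) T⁻¹).comp (latticeHom A)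
  have hrescale : iterDiff l (latticeCutoff A x₀ T) z =
      iterDiff (l.map φ) (standardBump d) (φ z + -(T⁻¹ • x₀)) := by
    rw [← iterDiff_comp_add_right, ← iterDiff_comp_addMonoidHom]
    congr 1
    funext z
    rw [latticeCutoff, smul_sub, sub_eq_add_neg]
    rfl
  have hprod : ((l.map φ).map (‖·‖)).prod =
      (l.map fun z ↦ ‖latticeHom A z‖).prod * T⁻¹ ^ l.length := by
    have hφ (z) : ‖φ z‖ = ‖latticeHom A z‖ * T⁻¹ := norm_inv_smul_of_pos hT _
    simp [List.map_map, Function.comp_def, hφ, List.prod_map_mul]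
  calc |iterDiff l (latticeCutoff A x₀ T) z| ≤ B * ((l.map φ).map (‖·‖)).prod := by
        rw [hrescale]
        exact norm_iterDiff_le isOpen_univ hsmooth.contDiffOn (Set.subset_univ _)
          fun y _ ↦ by rw [List.length_map]; exact hB y
    _ = B * (l.map fun z ↦ ‖latticeHom A z‖).prod * T⁻¹ ^ l.length := by rw [hprod, mul_assoc]
    _ ≤ _ := by gcongr; exact le_max_left _ _

end Lattice

/-! ### Summation by parts -/

section SummationByParts

theorem summable_mul_of_finite_support {X : Type*} (G : X → ℝ) {h : X → ℝ}
    (hh : (Function.support h).Finite) : Summable fun m ↦ G m * h m :=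
  summable_of_hasFiniteSupport (hh.subset (Function.support_mul_subset_right G h))

variable {X : Type*} [AddCommGroup X] {M : Type*} [AddCommGroup M]

theorem iterDiff_perm {l l' : List X} (h : l.Perm l') (f : X → M) :
    iterDiff l f = iterDiff l' f := by
  have : LeftCommutative (fwdDiff (M := X) (G := M)) := ⟨fun a b f ↦ by
    funext x
    simp only [fwdDiff, add_right_comm x b a]
    abel⟩
  exact h.foldr_eq f

theorem iterDiff_comp_sub_left (l : List X) (f : X → M) (a x : X) :
    iterDiff l (fun y ↦ f (a - y)) x = iterDiff (l.map Neg.neg) f (a - x) := by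
  have hneg := iterDiff_comp_addMonoidHom (-AddMonoidHom.id X) l (fun y ↦ f (y + a)) x
  simp only [AddMonoidHom.neg_apply, AddMonoidHom.id_apply, iterDiff_comp_add_right,
    neg_add_eq_sub] at hneg
  exact hneg

theorem finite_support_iterDiff (l : List X) {h : X → M} (hh : (Function.support h).Finite) :
    (Function.support (iterDiff l h)).Finite := by
  induction l with
  | nil => exact hh
  | cons ρ l ih =>
    exact ((ih.preimage (add_left_injective ρ).injOn).union ih).subset
      (Function.support_sub (fun x ↦ iterDiff l h (x + ρ)) (iterDiff l h))

theorem tsum_mul_iterDiff (l : List X) (G : X → ℝ) {h : X → ℝ}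
    (hh : (Function.support h).Finite) :
    ∑' m, G m * iterDiff l h m = ∑' m, iterDiff (l.map Neg.neg) G m * h m := by
  induction l generalizing G with
  | nil => rfl
  | cons ρ l ih =>
    have hl := finite_support_iterDiff l hh
    have hsum (G' : X → ℝ) := summable_mul_of_finite_support G' hl
    have hshift : HasSum (fun m ↦ G m * iterDiff l h (m + ρ))
        (∑' m, G (m + -ρ) * iterDiff l h m) := by
      refine ((Equiv.addRight ρ).hasSum_iff.2 (hsum fun m ↦ G (m + -ρ)).hasSum).congr_fun ?_
      simp
    calc ∑' m, G m * iterDiff (ρ :: l) h m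
        = ∑' m, (G m * iterDiff l h (m + ρ) - G m * iterDiff l h m) := by
          simp only [iterDiff_cons_apply, mul_sub]
      _ = ∑' m, iterDiff [-ρ] G m * iterDiff l h m := by
          rw [(hshift.sub (hsum G).hasSum).tsum_eq, ← (hsum fun m ↦ G (m + -ρ)).tsum_sub (hsum G)]
          simp only [iterDiff_singleton_apply, sub_mul]
      _ = ∑' m, iterDiff (l.map Neg.neg ++ [-ρ]) G m * h m := by rw [ih, iterDiff_append]
      _ = _ := by rw [iterDiff_perm List.perm_append_comm]; rfl

theorem tsum_iterDiff_sub_mul (l : List X) (G : X → ℝ) {h : X → ℝ}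
    (hh : (Function.support h).Finite) (ℓ : X) :
    ∑' m, iterDiff l G (ℓ - m) * h m = ∑' m, G (ℓ - m) * iterDiff l h m := by
  rw [tsum_mul_iterDiff l (fun m ↦ G (ℓ - m)) hh]
  refine tsum_congr fun m ↦ ?_
  simp [iterDiff_comp_sub_left]

theorem tendsto_sub_of_closure_eq_top {R : Set X} (hR : AddSubgroup.closure R = ⊤)
    [TopologicalSpace M] [IsTopologicalAddGroup M] {w : X → M}
    (hw : ∀ ρ ∈ R, Tendsto (fun m ↦ w (m + ρ) - w m) cofinite (𝓝 0)) (a : X) :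
    Tendsto (fun m ↦ w (m + a) - w m) cofinite (𝓝 0) := by
  have ha : a ∈ AddSubgroup.closure R := hR ▸ AddSubgroup.mem_top a
  induction ha using AddSubgroup.closure_induction with
  | mem x hx => exact hw x hx
  | zero => simpa using tendsto_const_nhds
  | add x y _ _ hx hy =>
    have hadd := (hy.comp (add_left_injective x).tendsto_cofinite).add hx
    rw [add_zero] at hadd
    exact hadd.congr fun m ↦ by simp only [Function.comp_apply, add_assoc]; abel
  | neg x _ hx =>
    have hneg := (hx.comp (add_left_injective (-x)).tendsto_cofinite).neg
    rw [neg_zero] at hneg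
    exact hneg.congr fun m ↦ by simp

end SummationByParts

/-! ### The lattice operator and Green's second identity -/

section LatticeOperator

variable {X ι : Type*} [AddCommGroup X] [Fintype ι] {R : Finset X} {C : X → X → ι → ι → ℝ}

/-- The operator `∑ C_{σρ} D_{-σ} D_ρ` on an arbitrary commutative group; `Hop` is its
conjugate by the parametrization `latticeHom` of the lattice. -/
def latticeOp (R : Finset X) (C : X → X → ι → ι → ℝ) (w : X → ι → ℝ) (m : X) (i : ι) : ℝ :=
  ∑ σ ∈ R, ∑ ρ ∈ R, ∑ k, C σ ρ i k * iterDiff [-σ, ρ] (fun y ↦ w y k) m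

theorem latticeOp_sub (w w' : X → ι → ℝ) (m : X) (i : ι) :
    latticeOp R C (fun y k ↦ w y k - w' y k) m i = latticeOp R C w m i - latticeOp R C w' m i := by
  simp only [latticeOp, iterDiff_sub, mul_sub, Finset.sum_sub_distrib]

theorem latticeOp_comp_add_right (w : X → ι → ℝ) (a m : X) (i : ι) :
    latticeOp R C (fun y ↦ w (y + a)) m i = latticeOp R C w (m + a) i := by
  refine Finset.sum_congr rfl fun σ _ ↦ Finset.sum_congr rfl fun ρ _ ↦
    Finset.sum_congr rfl fun k _ ↦ ?_
  rw [iterDiff_comp_add_right _ fun y ↦ w y k]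

theorem tsum_mul_latticeOp_of_finite_support (hC : ∀ σ ρ i k, C σ ρ i k = C ρ σ k i)
    (w : X → ι → ℝ) {v : X → ι → ℝ} (hv : (Function.support v).Finite) :
    ∑' m, ∑ i, w m i * latticeOp R C v m i = ∑' m, ∑ i, latticeOp R C w m i * v m i := by
  have hvk (k : ι) : (Function.support fun m ↦ v m k).Finite :=
    hv.subset fun m hm h ↦ hm (congrFun h k)
  have hleft : HasSum (fun m ↦ ∑ i, w m i * latticeOp R C v m i)
      (∑ i, ∑ σ ∈ R, ∑ ρ ∈ R, ∑ k,
        C σ ρ i k * ∑' m, w m i * iterDiff [-σ, ρ] (fun y ↦ v y k) m) := by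
    simp only [latticeOp, Finset.mul_sum, mul_left_comm (w _ _)]
    exact hasSum_sum fun i _ ↦ hasSum_sum fun σ _ ↦ hasSum_sum fun ρ _ ↦ hasSum_sum fun k _ ↦
      (summable_mul_of_finite_support _ (finite_support_iterDiff _ (hvk k))).hasSum.mul_left _
  have hright : HasSum (fun m ↦ ∑ i, latticeOp R C w m i * v m i)
      (∑ i, ∑ σ ∈ R, ∑ ρ ∈ R, ∑ k,
        C σ ρ i k * ∑' m, iterDiff [-σ, ρ] (fun y ↦ w y k) m * v m i) := by
    simp only [latticeOp, Finset.sum_mul, mul_assoc]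
    exact hasSum_sum fun i _ ↦ hasSum_sum fun σ _ ↦ hasSum_sum fun ρ _ ↦ hasSum_sum fun k _ ↦
      (summable_mul_of_finite_support _ (hvk i)).hasSum.mul_left _
  have hparts (σ ρ : X) (i k : ι) : C σ ρ i k * ∑' m, w m i * iterDiff [-σ, ρ] (fun y ↦ v y k) m =
      C ρ σ k i * ∑' m, iterDiff [-ρ, σ] (fun y ↦ w y i) m * v m k := by
    rw [tsum_mul_iterDiff _ _ (hvk k), hC]
    simp only [List.map_cons, List.map_nil, neg_neg, iterDiff_perm (List.Perm.swap (-ρ) σ [])]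
  have hswap (F : X → X → ι → ι → ℝ) :
      ∑ i, ∑ σ ∈ R, ∑ ρ ∈ R, ∑ k, F σ ρ i k = ∑ σ ∈ R, ∑ ρ ∈ R, ∑ i, ∑ k, F σ ρ i k := by
    rw [Finset.sum_comm]
    exact Finset.sum_congr rfl fun σ _ ↦ Finset.sum_comm
  rw [hleft.tsum_eq, hright.tsum_eq, hswap, hswap, Finset.sum_comm]
  refine Finset.sum_congr rfl fun ρ _ ↦ Finset.sum_congr rfl fun σ _ ↦ ?_
  rw [Finset.sum_comm]
  exact Finset.sum_congr rfl fun k _ ↦ Finset.sum_congr rfl fun i _ ↦ hparts σ ρ i k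

theorem finite_support_latticeOp {v : X → ι → ℝ} (hv : (Function.support v).Finite) :
    (Function.support (latticeOp R C v)).Finite := by
  refine ((R.finite_toSet.biUnion fun σ _ ↦ R.finite_toSet.biUnion fun ρ _ ↦
    finite_support_iterDiff [-σ, ρ] hv)).subset fun m hm ↦ ?_
  by_contra hcon
  simp only [Set.mem_iUnion, Function.mem_support, not_exists, not_not] at hcon
  refine hm (funext fun i ↦ Finset.sum_eq_zero fun σ hσ ↦ Finset.sum_eq_zero fun ρ hρ ↦
    Finset.sum_eq_zero fun k _ ↦ ?_)
  have hk := addMonoidHom_iterDiff (Pi.evalAddMonoidHom (fun _ ↦ ℝ) k) [-σ, ρ] v m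
  rw [hcon σ hσ ρ hρ, map_zero] at hk
  exact mul_eq_zero_of_right _ hk.symm

theorem sum_tsum_mul_latticeOp_cutoff (hC : ∀ σ ρ i k, C σ ρ i k = C ρ σ k i)
    (w κ : X → ι → ℝ) {η : X → ℝ} (hη : (Function.support η).Finite) :
    ∑ i, (∑' m, κ m i * (η m * latticeOp R C w m i) +
      ∑' m, κ m i * (latticeOp R C (fun y k ↦ η y * w y k) m i - η m * latticeOp R C w m i)) =
      ∑' m, ∑ i, latticeOp R C κ m i * (η m * w m i) := by
  have hηw : (Function.support fun y k ↦ η y * w y k).Finite :=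
    hη.subset fun m hm hm₀ ↦ hm (funext fun k ↦ by simp [hm₀])
  have hcut (i : ι) : Summable fun m ↦ κ m i * (η m * latticeOp R C w m i) :=
    summable_mul_of_finite_support _
      (hη.subset (Function.support_mul_subset_left η fun m ↦ latticeOp R C w m i))
  have hop (i : ι) : Summable fun m ↦ κ m i * latticeOp R C (fun y k ↦ η y * w y k) m i :=
    summable_mul_of_finite_support _
      ((finite_support_latticeOp hηw).subset fun m hm h ↦ hm (congrFun h i))
  rw [← tsum_mul_latticeOp_of_finite_support hC κ hηw, Summable.tsum_finsetSum fun i _ ↦ hop i]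
  refine Finset.sum_congr rfl fun i _ ↦ ?_
  simp only [mul_sub]
  rw [(hop i).tsum_sub (hcut i), add_sub_cancel]

end LatticeOperator

theorem IsBracket.tendsto_inv_mul_sum_rpow_mul {X : Type*} [AddCommGroup X] {d : ℕ} {b : X → ℝ}
    (hb : IsBracket d b) {e : X → ℝ} (he : Tendsto e cofinite (𝓝 0)) {K : ℝ} (hK : 0 < K) :
    Tendsto (fun T : ℝ ↦ T⁻¹ *
      ∑ m ∈ (hb.finite_setOf_le (K * T)).toFinset, b m ^ ((1 : ℝ) - d) * |e m|) atTop (𝓝 0) := by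
  classical
  obtain ⟨C, hC, hsum⟩ := hb.exists_sum_rpow_le one_pos
  have hterm (m : X) : 0 ≤ b m ^ ((1 : ℝ) - d) * |e m| :=
    mul_nonneg (Real.rpow_nonneg (hb.pos m).le _) (abs_nonneg _)
  rw [Metric.tendsto_atTop]
  intro ε hε
  set δ := ε / (2 * C * K)
  have hδ : 0 < δ := by positivity
  have hlarge : {m | ¬ |e m| < δ}.Finite :=
    eventually_cofinite.1 (he.abs.eventually_lt_const (by simpa using hδ))
  set B : ℝ := ∑ m ∈ hlarge.toFinset, b m ^ ((1 : ℝ) - d) * |e m|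
  refine ⟨max (2 / K) (2 * B / ε + 1), fun T hT ↦ ?_⟩
  obtain ⟨hTK, hTB⟩ := max_le_iff.1 hT
  have hT0 : 0 < T := (by positivity : 0 < 2 / K).trans_le hTK
  set S := (hb.finite_setOf_le (K * T)).toFinset
  have hS : ∑ m ∈ S \ hlarge.toFinset, b m ^ ((1 : ℝ) - d) ≤ C * (K * T) := by
    refine (hsum (K * T) (by rwa [div_le_iff₀' hK] at hTK) _ fun m hm ↦ ?_).trans_eq (by simp)
    simpa [S] using (Finset.mem_sdiff.1 hm).1
  have hbound : ∑ m ∈ S, b m ^ ((1 : ℝ) - d) * |e m| ≤ B + δ * (C * (K * T)) := by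
    rw [← Finset.sum_inter_add_sum_sdiff S hlarge.toFinset]
    gcongr
    · exact Finset.sum_le_sum_of_subset_of_nonneg Finset.inter_subset_right fun m _ _ ↦ hterm m
    · refine le_trans ?_ (mul_le_mul_of_nonneg_left hS hδ.le)
      rw [Finset.mul_sum]
      refine Finset.sum_le_sum fun m hm ↦ ?_
      have hm : |e m| < δ := by simpa using (Finset.mem_sdiff.1 hm).2
      rw [mul_comm]
      exact mul_le_mul_of_nonneg_right hm.le (Real.rpow_nonneg (hb.pos m).le _)
  rw [dist_zero_right, Real.norm_of_nonneg
    (mul_nonneg (inv_nonneg.2 hT0.le) (Finset.sum_nonneg fun m _ ↦ hterm m)), inv_mul_lt_iff₀ hT0]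
  have hδT : δ * (C * (K * T)) = T * ε / 2 := by simp only [δ]; field_simp
  have hBT : 2 * B < T * ε := by
    rw [← div_lt_iff₀ hε]; linarith
  linarith

theorem iterDiff_pair_mul {X : Type*} [AddCommGroup X] (a ρ : X) (η w : X → ℝ) (m : X) :
    iterDiff [a, ρ] (fun y ↦ η y * w y) m = η m * iterDiff [a, ρ] w m +
      (iterDiff [a] η m * iterDiff [ρ] w (m + a) + iterDiff [ρ] η m * iterDiff [a] w (m + ρ) +
        iterDiff [a, ρ] η m * w (m + (a + ρ))) := by
  simp only [iterDiff_cons_apply, iterDiff_nil, ← add_assoc, add_right_comm m ρ a]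
  ring

section Green

variable {d : ℕ} {A : Matrix (Fin d) (Fin d) ℝ}

theorem map_mem_stencil {X Y : Type*} [AddCommGroup X] [AddCommGroup Y] (φ : X →+ Y) {l : List X}
    {y : X} (hy : y ∈ stencil l) : φ y ∈ stencil (l.map φ) := by
  induction l generalizing y with
  | nil => simpa [stencil] using congrArg φ (show y = 0 from hy)
  | cons ρ l ih =>
    rcases hy with hy | ⟨z, hz, rfl⟩
    · exact Or.inl (ih hy)
    · exact Or.inr ⟨φ z, ih hz, (map_add φ z ρ).symm⟩

theorem iterDiff_latticeCutoff_eq_zero {l : List (Fin d → ℤ)} {L T : ℝ}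
    (hl : totalLength (l.map (latticeHom A)) ≤ L) (hL : 0 ≤ L) (hT : 1 ≤ T) {m : Fin d → ℤ}
    (hm : (L + 3) * T < latticeBracket A m) : iterDiff l (latticeCutoff A 0 T) m = 0 := by
  rw [iterDiff_congr (g := fun _ ↦ 0), iterDiff_zero]
  intro y hy
  refine latticeCutoff_eq_zero (zero_lt_one.trans_le hT) ?_
  have hly := norm_le_totalLength (map_mem_stencil (latticeHom A) hy)
  have htri := norm_sub_le_norm_add (latticeHom A m) (latticeHom A y)
  have hLT := le_mul_of_one_le_right hL hT
  rw [sub_zero, map_add]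
  rw [latticeBracket] at hm
  linarith

theorem exists_abs_commutator_latticeCutoff_le (hA : IsUnit A.det) {w : (Fin d → ℤ) → ℝ}
    (hw : ∀ a, Tendsto (fun m ↦ w (m + a) - w m) cofinite (𝓝 0)) (a ρ : Fin d → ℤ) :
    ∃ (K : ℝ) (e : (Fin d → ℤ) → ℝ), 0 < K ∧ Tendsto e cofinite (𝓝 0) ∧ ∀ T : ℝ, 1 ≤ T → ∀ m,
      |iterDiff [a, ρ] (fun y ↦ latticeCutoff A 0 T y * w y) m -
        latticeCutoff A 0 T m * iterDiff [a, ρ] w m| ≤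
          if latticeBracket A m ≤ K * T then T⁻¹ * |e m| else 0 := by
  have hb := isBracket_latticeBracket hA
  obtain ⟨C₁, -, h₁⟩ := exists_abs_iterDiff_latticeCutoff_le A [a]
  obtain ⟨C₂, -, h₂⟩ := exists_abs_iterDiff_latticeCutoff_le A [ρ]
  obtain ⟨C₃, hC₃, h₃⟩ := exists_abs_iterDiff_latticeCutoff_le A [a, ρ]
  set L : ℝ := ‖latticeHom A a‖ + ‖latticeHom A ρ‖
  set K : ℝ := L + 3
  have hK : 0 < K := by positivity
  let e : (Fin d → ℤ) → ℝ := fun m ↦ C₁ * |iterDiff [ρ] w (m + a)| +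
    C₂ * |iterDiff [a] w (m + ρ)| + C₃ * K * |w (m + (a + ρ)) / latticeBracket A m|
  have hdiff (ρ a : Fin d → ℤ) : Tendsto (fun m ↦ iterDiff [ρ] w (m + a)) cofinite (𝓝 0) :=
    (hw ρ).comp (add_left_injective a).tendsto_cofinite
  have he : Tendsto e cofinite (𝓝 0) := by
    simpa using (((hdiff ρ a).abs.const_mul C₁).add ((hdiff a ρ).abs.const_mul C₂)).add
      ((isLittleO_latticeBracket_of_tendsto_sub hA hw (a + ρ)).tendsto_div_nhds_zero.abs.const_mul
        (C₃ * K))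
  refine ⟨K, e, hK, he, fun T hT m ↦ ?_⟩
  have hT₀ : 0 < T := by linarith
  rw [iterDiff_pair_mul, add_sub_cancel_left]
  split_ifs with hm
  · have hb₀ := hb.pos m
    have hmT : 1 ≤ K * T / latticeBracket A m := (one_le_div hb₀).2 hm
    have hlast : |iterDiff [a, ρ] (latticeCutoff A 0 T) m * w (m + (a + ρ))| ≤
        T⁻¹ * (C₃ * K * |w (m + (a + ρ)) / latticeBracket A m|) := by
      calc _ ≤ C₃ * T⁻¹ ^ 2 * |w (m + (a + ρ))| * 1 := by
            rw [abs_mul, mul_one]; gcongr; exact h₃ 0 T hT₀ m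
        _ ≤ C₃ * T⁻¹ ^ 2 * |w (m + (a + ρ))| * (K * T / latticeBracket A m) := by gcongr
        _ = _ := by rw [abs_div, abs_of_pos hb₀]; field_simp
    have hfirst {s t C : ℝ} (hs : |s| ≤ C * T⁻¹ ^ 1) : |s * t| ≤ T⁻¹ * (C * |t|) := by
      rw [abs_mul, ← mul_assoc, mul_comm T⁻¹, ← pow_one T⁻¹]
      exact mul_le_mul_of_nonneg_right hs (abs_nonneg t)
    calc _ ≤ T⁻¹ * e m := by
          simp only [e, mul_add]
          exact (abs_add_three _ _ _).trans
            (add_le_add_three (hfirst (h₁ 0 T hT₀ m)) (hfirst (h₂ 0 T hT₀ m)) hlast)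
      _ ≤ _ := by gcongr; exact le_abs_self _
  · have hzero {l : List (Fin d → ℤ)} (hl : totalLength (l.map (latticeHom A)) ≤ L) :
        iterDiff l (latticeCutoff A 0 T) m = 0 :=
      iterDiff_latticeCutoff_eq_zero hl (by positivity) hT (not_le.1 hm)
    simp [hzero (l := [a]) (by simp [totalLength, L]), hzero (l := [ρ]) (by simp [totalLength, L]),
      hzero (l := [a, ρ]) (by simp [totalLength, L])]

theorem tendsto_tsum_mul_commutator (hA : IsUnit A.det) {w κ : (Fin d → ℤ) → ℝ}
    (hw : ∀ a, Tendsto (fun m ↦ w (m + a) - w m) cofinite (𝓝 0))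
    (hκ : κ =O[⊤] fun m ↦ latticeBracket A m ^ ((1 : ℝ) - d)) (a ρ : Fin d → ℤ) :
    Tendsto (fun T : ℝ ↦ ∑' m, κ m * (iterDiff [a, ρ] (fun y ↦ latticeCutoff A 0 T y * w y) m -
      latticeCutoff A 0 T m * iterDiff [a, ρ] w m)) atTop (𝓝 0) := by
  have hb := isBracket_latticeBracket hA
  obtain ⟨K, e, hK, he, hcomm⟩ := exists_abs_commutator_latticeCutoff_le hA hw a ρ
  obtain ⟨C, hC, hκ⟩ := hκ.exists_pos
  have hκ := isBigOWith_top.1 hκ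
  refine squeeze_zero_norm' ?_ (by simpa using (hb.tendsto_inv_mul_sum_rpow_mul he hK).const_mul C)
  filter_upwards [eventually_ge_atTop 1] with T hT
  rw [tsum_eq_sum (s := (hb.finite_setOf_le (K * T)).toFinset) fun m hm ↦ ?_, Finset.mul_sum,
    Finset.mul_sum]
  · refine norm_sum_le_of_le _ fun m hm ↦ ?_
    have hTm := hcomm T hT m
    rw [if_pos (by simpa using hm)] at hTm
    rw [norm_mul, mul_left_comm T⁻¹, ← mul_assoc]
    refine mul_le_mul ((hκ m).trans_eq ?_) hTm (abs_nonneg _) ?_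
    · rw [Real.norm_of_nonneg (Real.rpow_nonneg (hb.pos m).le _)]
    · exact mul_nonneg hC.le (Real.rpow_nonneg (hb.pos m).le _)
  · have hTm := hcomm T hT m
    rw [if_neg (by simpa using hm)] at hTm
    rw [abs_nonpos_iff.1 hTm, mul_zero]

theorem finite_support_latticeCutoff (hA : IsUnit A.det) {T : ℝ} (hT : 0 < T) :
    (Function.support (latticeCutoff A 0 T)).Finite := by
  refine ((isBracket_latticeBracket hA).finite_setOf_le (T / 4 + 2)).subset fun m hm ↦ ?_
  by_contra hcon
  refine hm (latticeCutoff_eq_zero hT ?_)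
  rw [Set.mem_ofPred_eq, latticeBracket] at hcon
  rw [sub_zero]
  linarith

theorem eventually_latticeCutoff_eq_one (m : Fin d → ℤ) :
    ∀ᶠ T in atTop, latticeCutoff A 0 T m = 1 := by
  filter_upwards [eventually_gt_atTop 0, eventually_ge_atTop (8 * ‖latticeHom A m‖)] with T hT hm
  exact latticeCutoff_eq_one hT (by rw [sub_zero]; linarith)

variable {ι : Type*} [Fintype ι] {R : Finset (Fin d → ℤ)}
  {C : (Fin d → ℤ) → (Fin d → ℤ) → ι → ι → ℝ}

theorem tendsto_tsum_mul_latticeOp_cutoff_sub (hA : IsUnit A.det) {w : (Fin d → ℤ) → ι → ℝ}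
    {κ : (Fin d → ℤ) → ℝ} (hw : ∀ k a, Tendsto (fun m ↦ w (m + a) k - w m k) cofinite (𝓝 0))
    (hκ : κ =O[⊤] fun m ↦ latticeBracket A m ^ ((1 : ℝ) - d)) (i : ι) :
    Tendsto (fun T : ℝ ↦ ∑' m, κ m * (latticeOp R C (fun y k ↦ latticeCutoff A 0 T y * w y k) m i -
      latticeCutoff A 0 T m * latticeOp R C w m i)) atTop (𝓝 0) := by
  have hlim : Tendsto (fun T : ℝ ↦ ∑ σ ∈ R, ∑ ρ ∈ R, ∑ k, C σ ρ i k *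
      ∑' m, κ m * (iterDiff [-σ, ρ] (fun y ↦ latticeCutoff A 0 T y * w y k) m -
        latticeCutoff A 0 T m * iterDiff [-σ, ρ] (fun y ↦ w y k) m)) atTop
      (𝓝 (∑ σ ∈ R, ∑ ρ ∈ R, ∑ k, C σ ρ i k * 0)) :=
    tendsto_finsetSum _ fun σ _ ↦ tendsto_finsetSum _ fun ρ _ ↦ tendsto_finsetSum _ fun k _ ↦
      (tendsto_tsum_mul_commutator hA (hw k) hκ (-σ) ρ).const_mul _
  simp only [mul_zero, Finset.sum_const_zero] at hlim
  refine hlim.congr' ?_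
  filter_upwards [eventually_gt_atTop 0] with T hT
  have hη := finite_support_latticeCutoff hA hT
  have hfin (v : (Fin d → ℤ) → ℝ) :
      (Function.support fun m ↦ latticeCutoff A 0 T m * v m).Finite :=
    hη.subset (Function.support_mul_subset_left _ v)
  have hcomm (σ ρ : Fin d → ℤ) (k : ι) : Summable fun m ↦
      κ m * (iterDiff [-σ, ρ] (fun y ↦ latticeCutoff A 0 T y * w y k) m -
        latticeCutoff A 0 T m * iterDiff [-σ, ρ] (fun y ↦ w y k) m) := by
    refine summable_mul_of_finite_support _ (((finite_support_iterDiff [-σ, ρ]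
      (hfin fun m ↦ w m k)).union (hfin (iterDiff [-σ, ρ] fun y ↦ w y k))).subset ?_)
    exact Function.support_sub _ _
  refine ((hasSum_sum fun σ _ ↦ hasSum_sum fun ρ _ ↦ hasSum_sum fun k _ ↦
    (hcomm σ ρ k).hasSum.mul_left (C σ ρ i k)).congr_fun fun m ↦ ?_).tsum_eq.symm
  simp only [latticeOp, Finset.mul_sum, ← Finset.sum_sub_distrib]
  refine Finset.sum_congr rfl fun σ _ ↦ Finset.sum_congr rfl fun ρ _ ↦
    Finset.sum_congr rfl fun k _ ↦ ?_
  ring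

theorem hasSum_mul_latticeOp (hA : IsUnit A.det) (hC : ∀ σ ρ i k, C σ ρ i k = C ρ σ k i)
    {w κ : (Fin d → ℤ) → ι → ℝ}
    (hw : ∀ k a, Tendsto (fun m ↦ w (m + a) k - w m k) cofinite (𝓝 0))
    (hsum : ∀ i, Summable fun m ↦ latticeBracket A m ^ ((1 : ℝ) - d) * latticeOp R C w m i)
    (hκ : ∀ i, (κ · i) =O[⊤] fun m ↦ latticeBracket A m ^ ((1 : ℝ) - d))
    (hHκ : (Function.support (latticeOp R C κ)).Finite) :
    HasSum (fun m ↦ ∑ i, κ m i * latticeOp R C w m i)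
      (∑' m, ∑ i, latticeOp R C κ m i * w m i) := by
  have hκw (i : ι) : Summable fun m ↦ κ m i * latticeOp R C w m i :=
    summable_of_isBigO (hsum i).abs
      (((hκ i).mono le_top).mul (isBigO_refl (fun m ↦ latticeOp R C w m i) _)).abs_right
  have hdom (T : ℝ) (i : ι) (m : Fin d → ℤ) :
      ‖κ m i * (latticeCutoff A 0 T m * latticeOp R C w m i)‖ ≤ ‖κ m i * latticeOp R C w m i‖ := by
    rw [mul_left_comm, norm_mul]
    exact mul_le_of_le_one_left (norm_nonneg _) (abs_latticeCutoff_le_one 0 T m)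
  have hmain (i : ι) : Tendsto
      (fun T ↦ ∑' m, κ m i * (latticeCutoff A 0 T m * latticeOp R C w m i)) atTop
      (𝓝 (∑' m, κ m i * latticeOp R C w m i)) := by
    refine tendsto_tsum_of_dominated_convergence (hκw i).norm (fun m ↦ ?_)
      (Eventually.of_forall fun T ↦ hdom T i)
    refine tendsto_const_nhds.congr' ?_
    filter_upwards [eventually_latticeCutoff_eq_one m] with T hT
    rw [hT, one_mul]
  have hlim : Tendsto (fun T ↦ ∑' m, ∑ i, latticeOp R C κ m i * (latticeCutoff A 0 T m * w m i))
      atTop (𝓝 (∑ i, (∑' m, κ m i * latticeOp R C w m i + 0))) := by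
    refine (tendsto_finsetSum _ fun i _ ↦ (hmain i).add
      (tendsto_tsum_mul_latticeOp_cutoff_sub (R := R) (C := C) hA hw (hκ i) i)).congr' ?_
    filter_upwards [eventually_gt_atTop 0] with T hT
    exact sum_tsum_mul_latticeOp_cutoff hC w κ (finite_support_latticeCutoff hA hT)
  have hev : (fun _ ↦ ∑' m, ∑ i, latticeOp R C κ m i * w m i) =ᶠ[atTop]
      fun T ↦ ∑' m, ∑ i, latticeOp R C κ m i * (latticeCutoff A 0 T m * w m i) := by
    filter_upwards [(eventually_all_finite hHκ).2 fun m _ ↦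
      eventually_latticeCutoff_eq_one (A := A) m] with T hT
    refine tsum_congr fun m ↦ Finset.sum_congr rfl fun i _ ↦ ?_
    by_cases hm : m ∈ Function.support (latticeOp R C κ)
    · rw [hT m hm, one_mul]
    · rw [congrFun (Function.notMem_support.1 hm) i, Pi.zero_apply, zero_mul, zero_mul]
  rw [tendsto_nhds_unique (tendsto_const_nhds.congr' hev) hlim]
  simp only [add_zero]
  exact hasSum_sum fun i _ ↦ (hκw i).hasSum

end Green

/-! ### The convolution representation -/

section Convolution

theorem hasSum_iterDiff_sub_mul {X ι : Type*} [AddCommGroup X] [Fintype ι] {K f : X → ι → ℝ}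
    {h : X → ℝ} (hK : ∀ ℓ, HasSum (fun m ↦ ∑ i, K (ℓ - m) i * f m i) (h ℓ)) (l : List X) (ℓ : X) :
    HasSum (fun m ↦ ∑ i, iterDiff l (K · i) (ℓ - m) * f m i) (iterDiff l h ℓ) := by
  induction l generalizing ℓ with
  | nil => exact hK ℓ
  | cons ρ l ih =>
    refine ((ih (ℓ + ρ)).sub (ih ℓ)).congr_fun fun m ↦ ?_
    rw [← Finset.sum_sub_distrib]
    refine Finset.sum_congr rfl fun i _ ↦ ?_
    rw [iterDiff_cons_apply, sub_mul, add_sub_right_comm]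

variable {d : ℕ} {A : Matrix (Fin d) (Fin d) ℝ} {ι : Type*} [Fintype ι] [DecidableEq ι]
  {R : Finset (Fin d → ℤ)} {C : (Fin d → ℤ) → (Fin d → ℤ) → ι → ι → ℝ}
  {g : (Fin d → ℤ) → ι → ι → ℝ}

/-- `g` is a Green's function of `latticeOp R C` in lattice coordinates: its `k`-th column solves
the equation with right-hand side `δ₀ e_k`, and its differences decay at the expected rates. -/
structure IsGreen (A : Matrix (Fin d) (Fin d) ℝ) (R : Finset (Fin d → ℤ))
    (C : (Fin d → ℤ) → (Fin d → ℤ) → ι → ι → ℝ) (g : (Fin d → ℤ) → ι → ι → ℝ) : Prop where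
  latticeOp_eq : ∀ k, latticeOp R C (fun y i ↦ g y i k) = Pi.single 0 (Pi.single k 1)
  isBigO : ∀ l : List (Fin d → ℤ), l ≠ [] → (∀ ρ ∈ l, ρ ∈ R) → ∀ i k,
    iterDiff l (fun y ↦ g y i k) =O[⊤] fun z ↦ latticeBracket A z ^ ((2 : ℝ) - d - l.length)

theorem hasSum_single_single_mul {X : Type*} [DecidableEq X] (a : X) (k : ι) (w : X → ι → ℝ) :
    HasSum (fun m ↦ ∑ i, (Pi.single a (Pi.single k 1) : X → ι → ℝ) m i * w m i) (w a k) := by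
  convert hasSum_single a fun m hm ↦ ?_ using 1
  · simp [Pi.single_apply]
  · simp [hm]

theorem IsGreen.tendsto_sub (hg : IsGreen A R C g) (hd : 2 ≤ d) (hA : IsUnit A.det)
    (hR : AddSubgroup.closure (R : Set (Fin d → ℤ)) = ⊤) (i k : ι) (a : Fin d → ℤ) :
    Tendsto (fun m ↦ g (m + a) i k - g m i k) cofinite (𝓝 0) := by
  refine tendsto_sub_of_closure_eq_top (w := fun m ↦ g m i k) hR (fun ρ hρ ↦ ?_) a
  have hd' : (2 : ℝ) ≤ d := by exact_mod_cast hd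
  refine ((hg.isBigO [ρ] (by simp) (by simpa using hρ) i k).mono le_top).trans_tendsto ?_
  convert (tendsto_rpow_neg_atTop (y := (d : ℝ) - 1) (by linarith)).comp
    (isBracket_latticeBracket hA).tendsto_cofinite_atTop using 2 with z
  simp only [List.length_singleton, Nat.cast_one, Function.comp_apply]
  ring_nf

theorem IsGreen.sub_isBigO (hg : IsGreen A R C g) (hA : IsUnit A.det) {ρ : Fin d → ℤ}
    (hρ : ρ ∈ R) (ℓ : Fin d → ℤ) (i k : ι) :
    (fun m ↦ g (m - ℓ) i k - g (m - (ℓ + ρ)) i k) =O[⊤]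
      fun m ↦ latticeBracket A m ^ ((1 : ℝ) - d) := by
  have h1 := (hg.isBigO [ρ] (by simp) (by simpa using hρ) i k).comp_tendsto
    (tendsto_top (f := fun m ↦ m + -(ℓ + ρ)) (l := ⊤))
  have h2 := (isBracket_latticeBracket hA).weight_comp_add_isBigO ((1 : ℝ) - d) 0 (-(ℓ + ρ))
  refine (h1.congr (fun m ↦ ?_) fun m ↦ ?_).trans (h2.congr_right fun m ↦ ?_)
  · simp only [Function.comp_apply, iterDiff_singleton_apply]
    rw [neg_add, add_assoc, neg_add_cancel_right, ← neg_add, ← sub_eq_add_neg, ← sub_eq_add_neg]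
  · simp only [List.length_singleton, Nat.cast_one, Function.comp_apply, pow_zero, mul_one]
    ring_nf
  · rw [pow_zero, mul_one]

theorem IsGreen.hasSum_sub_mul (hg : IsGreen A R C g) (hA : IsUnit A.det)
    (hC : ∀ σ ρ i k, C σ ρ i k = C ρ σ k i) {w : (Fin d → ℤ) → ι → ℝ}
    (hw : ∀ k a, Tendsto (fun m ↦ w (m + a) k - w m k) cofinite (𝓝 0))
    (hsum : ∀ i, Summable fun m ↦ latticeBracket A m ^ ((1 : ℝ) - d) * latticeOp R C w m i)
    {ρ : Fin d → ℤ} (hρ : ρ ∈ R) (ℓ : Fin d → ℤ) (k : ι) :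
    HasSum (fun m ↦ ∑ i, (g (m - (ℓ + ρ)) i k - g (m - ℓ) i k) * latticeOp R C w m i)
      (w (ℓ + ρ) k - w ℓ k) := by
  have hshift (a : Fin d → ℤ) : latticeOp R C (fun m i ↦ g (m - a) i k) =
      Pi.single a (Pi.single k 1) := by
    funext m i
    simp only [sub_eq_add_neg _ a]
    rw [latticeOp_comp_add_right (fun y i ↦ g y i k), hg.latticeOp_eq]
    simp [Pi.single_apply, ← sub_eq_add_neg, sub_eq_zero]
  have hκ : latticeOp R C (fun m i ↦ g (m - (ℓ + ρ)) i k - g (m - ℓ) i k) =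
      Pi.single (ℓ + ρ) (Pi.single k 1) - Pi.single ℓ (Pi.single k 1) := by
    funext m i
    rw [latticeOp_sub (fun m i ↦ g (m - (ℓ + ρ)) i k), hshift, hshift]; rfl
  have hfin : (Function.support (latticeOp R C
      fun m i ↦ g (m - (ℓ + ρ)) i k - g (m - ℓ) i k)).Finite := by
    refine (Set.toFinite {ℓ + ρ, ℓ}).subset fun m hm ↦ ?_
    by_contra h
    rw [Set.mem_insert_iff, Set.mem_singleton_iff, not_or] at h
    exact hm (by simp [hκ, h.1, h.2])
  convert hasSum_mul_latticeOp hA hC hw hsum (fun i ↦ ?_) hfin using 1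
  · rw [hκ, ← ((hasSum_single_single_mul (ℓ + ρ) k w).sub
      (hasSum_single_single_mul ℓ k w)).tsum_eq]
    simp only [Pi.sub_apply, sub_mul, Finset.sum_sub_distrib]
  · exact ((hg.sub_isBigO hA hρ ℓ i k).neg_left).congr_left fun m ↦ neg_sub _ _

/-- The symmetry `𝒢 (-ℓ) = (𝒢 ℓ)ᵀ` itself can fail, as `𝒢` is only determined up to a constant. -/
theorem IsGreen.sub_eq_sub_neg (hg : IsGreen A R C g) (hd : 2 ≤ d) (hA : IsUnit A.det)
    (hR : AddSubgroup.closure (R : Set (Fin d → ℤ)) = ⊤)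
    (hC : ∀ σ ρ i k, C σ ρ i k = C ρ σ k i) {ρ : Fin d → ℤ} (hρ : ρ ∈ R) (ℓ : Fin d → ℤ)
    (i k : ι) : g (ℓ + ρ) i k - g ℓ i k = g (-(ℓ + ρ)) k i - g (-ℓ) k i := by
  have h := hg.hasSum_sub_mul hA hC (w := fun y i ↦ g y i k)
    (fun i a ↦ hg.tendsto_sub hd hA hR i k a) (fun j ↦ ?_) hρ ℓ i
  · rw [hg.latticeOp_eq] at h
    have h' := hasSum_single_single_mul 0 k fun m j ↦ g (m - (ℓ + ρ)) j i - g (m - ℓ) j i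
    rw [← zero_sub, ← zero_sub ℓ]
    exact h.unique (h'.congr_fun fun m ↦ Finset.sum_congr rfl fun j _ ↦ mul_comm _ _)
  · rw [hg.latticeOp_eq]
    refine summable_of_hasFiniteSupport ((Set.finite_singleton 0).subset fun m hm ↦ ?_)
    by_contra h
    exact hm (by simp [Set.mem_singleton_iff.not.1 h])

theorem summable_rpow_mul_of_isBigO (hd : 2 ≤ d) (hA : IsUnit A.det) {α : ℕ}
    {f : (Fin d → ℤ) → ℝ} (hf : f =O[cofinite] fun m ↦
      latticeBracket A m ^ (-(d : ℝ)) * Real.log (latticeBracket A m) ^ α) :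
    Summable fun m ↦ latticeBracket A m ^ ((1 : ℝ) - d) * f m := by
  have hb := isBracket_latticeBracket hA
  have hd' : (2 : ℝ) ≤ d := by exact_mod_cast hd
  refine summable_of_isBigO (hb.summable_rpow_neg_mul_log (s := (d : ℝ) - 1) (by linarith) α)
    (((isBigO_refl _ _).mul hf).congr_right fun m ↦ ?_)
  rw [← mul_assoc, ← Real.rpow_add (hb.pos m)]
  ring_nf

theorem IsGreen.hasSum_iterDiff (hg : IsGreen A R C g) (hd : 2 ≤ d) (hA : IsUnit A.det)
    (hR : AddSubgroup.closure (R : Set (Fin d → ℤ)) = ⊤)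
    (hC : ∀ σ ρ i k, C σ ρ i k = C ρ σ k i) {u : (Fin d → ℤ) → ι → ℝ}
    (hu : ∀ k, ∀ ρ ∈ R, Tendsto (fun m ↦ u (m + ρ) k - u m k) cofinite (𝓝 0)) {α : ℕ}
    (hf : ∀ i, (latticeOp R C u · i) =O[cofinite] fun m ↦
      latticeBracket A m ^ (-(d : ℝ)) * Real.log (latticeBracket A m) ^ α)
    {l : List (Fin d → ℤ)} (hl : l ≠ []) (hlR : ∀ ρ ∈ l, ρ ∈ R) (k : ι) (ℓ : Fin d → ℤ) :
    HasSum (fun m ↦ ∑ i, iterDiff l (fun y ↦ g y k i) (ℓ - m) * latticeOp R C u m i)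
      (iterDiff l (fun y ↦ u y k) ℓ) := by
  obtain ⟨ρ, l, rfl⟩ := List.exists_cons_of_ne_nil hl
  have hρ : ρ ∈ R := hlR ρ (by simp)
  have hstep (ℓ : Fin d → ℤ) : HasSum
      (fun m ↦ ∑ i, (g (ℓ - m + ρ) k i - g (ℓ - m) k i) * latticeOp R C u m i)
      (u (ℓ + ρ) k - u ℓ k) := by
    convert hg.hasSum_sub_mul hA hC
      (fun k a ↦ tendsto_sub_of_closure_eq_top (w := fun m ↦ u m k) hR (hu k) a)
      (fun i ↦ summable_rpow_mul_of_isBigO hd hA (hf i)) hρ ℓ k using 4 with m i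
    rw [hg.sub_eq_sub_neg hd hA hR hC hρ (ℓ - m) k i]
    congr 3 <;> abel
  simp only [iterDiff_cons_eq_iterDiff_sub ρ l]
  exact hasSum_iterDiff_sub_mul (K := fun y i ↦ g (y + ρ) k i - g y k i) hstep l ℓ

end Convolution

/-! ### The near part of the convolution -/

section Near

theorem isBigO_iterDiff_mul {P X : Type*} [AddCommGroup X] {F : Filter P} {m : P → X}
    {T : P → ℝ} {l : List X} {χ f : P → X → ℝ} {B Q : P → ℝ}
    (hχ : ∀ s, s.Sublist l → ∀ y ∈ stencil l,
      (fun p ↦ iterDiff s (χ p) (m p + y)) =O[F] fun p ↦ B p * T p ^ s.length)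
    (hf : ∀ s, s.Sublist l → ∀ y ∈ stencil l,
      (fun p ↦ iterDiff s (f p) (m p + y)) =O[F] fun p ↦ Q p * T p ^ s.length) :
    (fun p ↦ iterDiff l (fun x ↦ χ p x * f p x) (m p)) =O[F]
      fun p ↦ B p * Q p * T p ^ l.length := by
  induction l generalizing χ f B Q with
  | nil =>
    simpa using (hχ [] (List.Sublist.refl _) 0 rfl).mul (hf [] (List.Sublist.refl _) 0 rfl)
  | cons ρ l ih =>
    have hsplit (p : P) : iterDiff (ρ :: l) (fun x ↦ χ p x * f p x) (m p) =
        iterDiff l (fun x ↦ (χ p (x + ρ) - χ p x) * f p x) (m p) +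
          iterDiff l (fun x ↦ χ p (x + ρ) * (f p (x + ρ) - f p x)) (m p) := by
      rw [iterDiff_cons_eq_iterDiff_sub, ← iterDiff_add]
      congr 1; funext y; ring
    simp only [hsplit]
    refine IsBigO.add (?_ : _ =O[F] _) ?_
    · refine (ih (χ := fun p x ↦ χ p (x + ρ) - χ p x) (B := fun p ↦ B p * T p)
        (fun s hs y hy ↦ ?_) fun s hs y hy ↦ hf s (hs.cons ρ) y (.inl hy)).congr_right
          fun p ↦ by rw [List.length_cons]; ring
      refine (hχ _ (hs.cons_cons ρ) y (.inl hy)).congr (fun p ↦ ?_) fun p ↦ ?_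
      · rw [iterDiff_cons_eq_iterDiff_sub]
      · rw [List.length_cons]; ring
    · refine (ih (f := fun p x ↦ f p (x + ρ) - f p x) (B := B) (Q := fun p ↦ Q p * T p)
        (fun s hs y hy ↦ ?_) fun s hs y hy ↦ ?_).congr_right
          fun p ↦ by rw [List.length_cons]; ring
      · simp only [iterDiff_comp_add_right, add_assoc]
        exact hχ s (hs.cons ρ) (y + ρ) (.inr ⟨y, hy, rfl⟩)
      · refine (hf _ (hs.cons_cons ρ) y (.inl hy)).congr (fun p ↦ ?_) fun p ↦ ?_
        · rw [iterDiff_cons_eq_iterDiff_sub]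
        · rw [List.length_cons]; ring

variable {d : ℕ} {A : Matrix (Fin d) (Fin d) ℝ}

theorem norm_latticeHom_le_totalLength {l : List (Fin d → ℤ)} {y : Fin d → ℤ}
    (hy : y ∈ stencil l) : ‖latticeHom A y‖ ≤ totalLength (l.map (latticeHom A)) :=
  norm_le_totalLength (map_mem_stencil _ hy)

theorem latticeBracket_sub_eq (ℓ m : Fin d → ℤ) :
    latticeBracket A (ℓ - m) = ‖latticeHom A m - latticeHom A ℓ‖ + 2 := by
  rw [latticeBracket, map_sub, norm_sub_rev]

theorem latticeBracket_comparable {ℓ m : Fin d → ℤ}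
    (h : ‖latticeHom A m - latticeHom A ℓ‖ ≤ latticeBracket A ℓ / 2) :
    latticeBracket A m ≤ 2 * latticeBracket A ℓ ∧ latticeBracket A ℓ ≤ 2 * latticeBracket A m := by
  have h1 := norm_sub_norm_le (latticeHom A m) (latticeHom A ℓ)
  have h2 := norm_sub_norm_le (latticeHom A ℓ) (latticeHom A m)
  rw [norm_sub_rev] at h2
  have h3 := norm_nonneg (latticeHom A ℓ)
  simp only [latticeBracket] at h ⊢
  constructor <;> linarith

theorem latticeCutoff_support_subset (hA : IsUnit A.det) {ℓ m : Fin d → ℤ}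
    (h : latticeCutoff A (latticeHom A ℓ) (latticeBracket A ℓ) m ≠ 0) :
    ‖latticeHom A m - latticeHom A ℓ‖ < latticeBracket A ℓ / 4 := by
  contrapose! h
  exact latticeCutoff_eq_zero ((isBracket_latticeBracket hA).pos ℓ) h

theorem finite_support_latticeCutoff_mul (hA : IsUnit A.det) (ℓ : Fin d → ℤ)
    (f : (Fin d → ℤ) → ℝ) : (Function.support fun m ↦
      latticeCutoff A (latticeHom A ℓ) (latticeBracket A ℓ) m * f m).Finite := by
  have hb := isBracket_latticeBracket hA
  refine (hb.finite_setOf_le (2 * latticeBracket A ℓ)).subset fun m hm ↦ ?_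
  have hlt := latticeCutoff_support_subset hA (left_ne_zero_of_mul hm)
  exact (latticeBracket_comparable (by linarith [hb.pos ℓ])).1

theorem norm_sub_lt_of_iterDiff_cutoff_mul_ne_zero (hA : IsUnit A.det) {l : List (Fin d → ℤ)}
    {f : (Fin d → ℤ) → ℝ} {ℓ m : Fin d → ℤ}
    (h : iterDiff l (fun y ↦ latticeCutoff A (latticeHom A ℓ) (latticeBracket A ℓ) y * f y) m ≠ 0) :
    ‖latticeHom A m - latticeHom A ℓ‖ <
      latticeBracket A ℓ / 4 + totalLength (l.map (latticeHom A)) := by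
  contrapose! h
  refine (iterDiff_congr fun y hy ↦ ?_).trans (iterDiff_zero l m)
  have h1 := norm_latticeHom_le_totalLength (A := A) hy
  have h2 : latticeHom A m - latticeHom A ℓ =
      latticeHom A (m + y) - latticeHom A ℓ - latticeHom A y := by rw [map_add]; abel
  have h3 := norm_sub_le (latticeHom A (m + y) - latticeHom A ℓ) (latticeHom A y)
  rw [← h2] at h3
  rw [latticeCutoff_eq_zero ((isBracket_latticeBracket hA).pos ℓ) (by linarith), zero_mul]

theorem iterDiff_cutoff_mul_eq_zero (hA : IsUnit A.det) {l : List (Fin d → ℤ)}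
    {f : (Fin d → ℤ) → ℝ} {ℓ m : Fin d → ℤ}
    (hℓ : 8 * totalLength (l.map (latticeHom A)) + 8 ≤ latticeBracket A ℓ)
    (hm : latticeBracket A ℓ < latticeBracket A m) :
    iterDiff l (fun y ↦ latticeCutoff A (latticeHom A ℓ) (latticeBracket A ℓ) y * f y) (ℓ - m) =
      0 := by
  by_contra hne
  have h1 := norm_sub_lt_of_iterDiff_cutoff_mul_ne_zero hA hne
  have h2 := latticeBracket_sub_eq (A := A) ℓ (ℓ - m)
  rw [sub_sub_cancel] at h2
  linarith [(isBracket_latticeBracket hA).two_le ℓ]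

theorem isBigO_iterDiff_latticeCutoff (hA : IsUnit A.det) (l : List (Fin d → ℤ)) :
    (fun p : (Fin d → ℤ) × (Fin d → ℤ) ↦
      iterDiff l (latticeCutoff A (latticeHom A p.1) (latticeBracket A p.1)) p.2) =O[⊤]
        fun p ↦ (latticeBracket A p.1)⁻¹ ^ l.length := by
  obtain ⟨K, -, hK⟩ := exists_abs_iterDiff_latticeCutoff_le A l
  refine .of_bound K (.of_forall fun p ↦ ?_)
  have hpos := (isBracket_latticeBracket hA).pos p.1
  rw [Real.norm_eq_abs, Real.norm_of_nonneg (by positivity)]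
  exact hK _ _ hpos _

theorem exists_isBigO_iterDiff_cutoff_mul (hA : IsUnit A.det) {f : (Fin d → ℤ) → ℝ}
    {l : List (Fin d → ℤ)} {e : ℝ} {α : ℕ} (hf : ∀ s, s.Sublist l → iterDiff s f =O[⊤]
      fun z ↦ latticeBracket A z ^ (e - s.length) * Real.log (latticeBracket A z) ^ α) :
    ∃ L : ℝ, (fun p : (Fin d → ℤ) × (Fin d → ℤ) ↦ iterDiff l
      (fun y ↦ latticeCutoff A (latticeHom A p.1) (latticeBracket A p.1) y * f y) p.2)
        =O[𝓟 {p | L ≤ latticeBracket A p.1}] fun p ↦ latticeBracket A p.1 ^ (e - l.length) *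
          Real.log (latticeBracket A p.1) ^ α := by
  have hb := isBracket_latticeBracket hA
  set r := totalLength (l.map (latticeHom A))
  set S : Set ((Fin d → ℤ) × (Fin d → ℤ)) := {p | 8 * r ≤ latticeBracket A p.1 ∧
    ‖latticeHom A p.2 - latticeHom A p.1‖ < latticeBracket A p.1 / 4 + r}
  have hpow (s : List (Fin d → ℤ)) (p : (Fin d → ℤ) × (Fin d → ℤ)) :
      latticeBracket A p.1 ^ (e - s.length) =
        latticeBracket A p.1 ^ e * (latticeBracket A p.1)⁻¹ ^ s.length := by
    rw [Real.rpow_sub (hb.pos _), Real.rpow_natCast, inv_pow]; rfl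
  have hfS (s : List (Fin d → ℤ)) (hs : s.Sublist l) (y : Fin d → ℤ) (hy : y ∈ stencil l) :
      (fun p : (Fin d → ℤ) × (Fin d → ℤ) ↦ iterDiff s f (p.2 + y)) =O[𝓟 S] fun p ↦
        latticeBracket A p.1 ^ e * Real.log (latticeBracket A p.1) ^ α *
          (latticeBracket A p.1)⁻¹ ^ s.length := by
    refine ((hf s hs).comp_tendsto tendsto_top).trans ?_
    obtain ⟨K, -, hK⟩ := exists_weight_le_weight 2 (e - s.length) α
    refine .of_bound K (eventually_principal.2 fun p hp ↦ ?_)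
    rw [mul_right_comm, ← hpow, Real.norm_of_nonneg (hb.weight_pos _ _ _).le,
      Function.comp_apply, Real.norm_of_nonneg (hb.weight_pos _ _ _).le]
    have h1 := norm_add_le (latticeHom A p.2 - latticeHom A p.1) (latticeHom A y)
    rw [← add_sub_right_comm, ← map_add] at h1
    have h2 := norm_latticeHom_le_totalLength (A := A) hy
    obtain ⟨h3, h4⟩ := latticeBracket_comparable (A := A) (ℓ := p.1) (m := p.2 + y)
      (by linarith [hp.1, hp.2])
    exact hK _ _ (hb.two_le _) (hb.two_le _) h3 h4
  have hcut (s : List (Fin d → ℤ)) (y : Fin d → ℤ) :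
      (fun p : (Fin d → ℤ) × (Fin d → ℤ) ↦
        iterDiff s (latticeCutoff A (latticeHom A p.1) (latticeBracket A p.1)) (p.2 + y)) =O[𝓟 S]
          fun p ↦ 1 * (latticeBracket A p.1)⁻¹ ^ s.length := by
    simp only [one_mul]
    exact (isBigO_iterDiff_latticeCutoff hA s).comp_tendsto
      (tendsto_top (f := fun p : (Fin d → ℤ) × (Fin d → ℤ) ↦ (p.1, p.2 + y)))
  obtain ⟨K, hK0, hK⟩ :=
    (isBigO_iterDiff_mul (fun s _ y _ ↦ hcut s y) hfS).exists_nonneg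
  refine ⟨8 * r, .of_bound K (eventually_principal.2 fun p hp ↦ ?_)⟩
  by_cases h : iterDiff l
      (fun y ↦ latticeCutoff A (latticeHom A p.1) (latticeBracket A p.1) y * f y) p.2 = 0
  · rw [h, norm_zero]
    positivity
  · have hp' := norm_sub_lt_of_iterDiff_cutoff_mul_ne_zero hA h
    refine (isBigOWith_principal.1 hK p ⟨hp, hp'⟩).trans_eq ?_
    rw [one_mul, mul_right_comm, ← hpow]

theorem IsBracket.exists_sum_rpow_two_sub_le {X : Type*} [AddCommGroup X] {b : X → ℝ}
    (hb : IsBracket d b) {n : ℕ} (hn : n = 1 ∨ n = 2) : ∃ C : ℝ, 0 < C ∧ ∀ r : ℝ, 2 ≤ r →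
      ∀ F : Finset X, (∀ x ∈ F, b x ≤ r) →
        ∑ x ∈ F, b x ^ ((2 : ℝ) - d - n) ≤ C * (r ^ ((2 : ℝ) - n) * Real.log r) := by
  rcases hn with rfl | rfl
  · obtain ⟨C, hC, h⟩ := hb.exists_sum_rpow_le one_pos
    have hlog := Real.log_pos one_lt_two
    refine ⟨C / Real.log 2, by positivity, fun r hr F hF ↦ ?_⟩
    rw [Nat.cast_one, sub_right_comm, show (2 : ℝ) - 1 = 1 by norm_num]
    calc _ ≤ C / Real.log 2 * (r ^ (1 : ℝ) * Real.log 2) := by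
          rw [mul_left_comm, div_mul_cancel₀ _ hlog.ne', mul_comm]
          exact h r hr F hF
      _ ≤ _ := by gcongr
  · obtain ⟨C, hC, h⟩ := hb.exists_sum_rpow_neg_dim_le
    refine ⟨C, hC, fun r hr F hF ↦ ?_⟩
    rw [Nat.cast_two, sub_right_comm, sub_self, zero_sub, Real.rpow_zero, one_mul]
    exact h r hr F hF

theorem abs_tsum_le_of_sum_abs_le {X : Type*} {φ : X → ℝ} {B : ℝ}
    (h : ∀ F : Finset X, ∑ m ∈ F, |φ m| ≤ B) : |∑' m, φ m| ≤ B := by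
  have hs : Summable fun m ↦ ‖φ m‖ := summable_of_sum_le (fun _ ↦ norm_nonneg _) h
  exact (norm_tsum_le_tsum_norm hs).trans (hs.tsum_le_of_sum_le h)

theorem tsum_iterDiff_append_sub_mul {X : Type*} [AddCommGroup X] (l₁ l₂ : List X) (g : X → ℝ)
    {h : X → ℝ} (hh : (Function.support h).Finite) (ℓ : X) :
    ∑' m, iterDiff (l₂ ++ l₁) g (ℓ - m) * h m = ∑' m, iterDiff l₁ g m * iterDiff l₂ h (ℓ - m) := by
  rw [iterDiff_append, tsum_iterDiff_sub_mul _ _ hh, ← (Equiv.subLeft ℓ).tsum_eq]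
  simp only [Equiv.subLeft_apply, sub_sub_cancel]

theorem isBigO_tsum_iterDiff_mul_cutoff (hA : IsUnit A.det) {g f : (Fin d → ℤ) → ℝ}
    {l₁ l₂ : List (Fin d → ℤ)} (hl₁ : l₁.length = 1 ∨ l₁.length = 2) {e : ℝ} {α : ℕ}
    (hg : iterDiff l₁ g =O[⊤] fun z ↦ latticeBracket A z ^ ((2 : ℝ) - d - l₁.length))
    (hf : ∀ s, s.Sublist l₂ → iterDiff s f =O[⊤]
      fun z ↦ latticeBracket A z ^ (e - s.length) * Real.log (latticeBracket A z) ^ α) :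
    (fun ℓ ↦ ∑' m, iterDiff (l₂ ++ l₁) g (ℓ - m) *
      (latticeCutoff A (latticeHom A ℓ) (latticeBracket A ℓ) m * f m)) =O[cofinite]
        fun ℓ ↦ latticeBracket A ℓ ^ (e + 2 - (l₂ ++ l₁).length) *
          Real.log (latticeBracket A ℓ) ^ (α + 1) := by
  have hb := isBracket_latticeBracket hA
  obtain ⟨Cg, hCg, hg⟩ := hg.exists_pos
  obtain ⟨L, hf⟩ := exists_isBigO_iterDiff_cutoff_mul hA hf
  obtain ⟨Cf, hCf, hf⟩ := hf.exists_pos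
  obtain ⟨C, -, hsum⟩ := hb.exists_sum_rpow_two_sub_le hl₁
  refine .of_bound (C * Cg * Cf) ?_
  filter_upwards [hb.tendsto_cofinite_atTop.eventually_ge_atTop
    (max L (8 * totalLength (l₂.map (latticeHom A)) + 8))] with ℓ hℓ
  set b := latticeBracket A ℓ
  obtain ⟨hL, hb8⟩ := max_le_iff.1 hℓ
  set h := fun m ↦ latticeCutoff A (latticeHom A ℓ) b m * f m
  have hbound (m) : |iterDiff l₂ h m| ≤ Cf * (b ^ (e - l₂.length) * Real.log b ^ α) := by
    have h1 := isBigOWith_principal.1 hf (ℓ, m) hL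
    rwa [Real.norm_of_nonneg (hb.weight_pos _ _ _).le] at h1
  have hterm (m) : |iterDiff l₁ g m * iterDiff l₂ h (ℓ - m)| ≤ if latticeBracket A m ≤ b then
      Cg * (Cf * (b ^ (e - l₂.length) * Real.log b ^ α)) *
        latticeBracket A m ^ ((2 : ℝ) - d - l₁.length) else 0 := by
    split_ifs with hm
    · rw [abs_mul, mul_right_comm]
      have h1 := isBigOWith_top.1 hg m
      rw [Real.norm_of_nonneg (Real.rpow_nonneg (hb.pos m).le _)] at h1
      exact mul_le_mul h1 (hbound _) (abs_nonneg _) ((norm_nonneg _).trans h1)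
    · rw [iterDiff_cutoff_mul_eq_zero hA hb8 (not_le.1 hm), mul_zero, abs_zero]
  have hbpos : 0 < b := hb.pos ℓ
  have hpow : b ^ (e + 2 - (l₂ ++ l₁).length) =
      b ^ ((2 : ℝ) - l₁.length) * b ^ (e - l₂.length) := by
    rw [← Real.rpow_add hbpos, List.length_append, Nat.cast_add]
    ring_nf
  rw [tsum_iterDiff_append_sub_mul l₁ l₂ g (finite_support_latticeCutoff_mul hA ℓ f),
    Real.norm_of_nonneg (hb.weight_pos _ _ _).le]
  refine abs_tsum_le_of_sum_abs_le fun F ↦ (Finset.sum_le_sum fun m _ ↦ hterm m).trans ?_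
  rw [← Finset.sum_filter, ← Finset.mul_sum, hpow]
  have hker := hsum b (hb.two_le ℓ) (F.filter fun m ↦ latticeBracket A m ≤ b)
    fun m hm ↦ (Finset.mem_filter.1 hm).2
  have hw := (hb.weight_pos (e - l₂.length) α ℓ).le
  calc _ ≤ Cg * (Cf * (b ^ (e - l₂.length) * Real.log b ^ α)) *
        (C * (b ^ ((2 : ℝ) - l₁.length) * Real.log b)) := by gcongr
    _ = _ := by ring

end Near

section Symbol

variable {E : Type*} [NormedAddCommGroup E] [NormedSpace ℝ E]

/-- A symbol of order `e`: smooth away from the origin, with derivatives of every order `k ≥ 1`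
decaying at the rate `‖x‖ ^ (e - k)` of a function that is homogeneous of degree `e`. Nothing is
required of the size of `γ` itself, so that `log ‖x‖` is a symbol of order `0`. -/
structure IsSymbol (e : ℝ) (γ : E → ℝ) : Prop where
  contDiffOn : ContDiffOn ℝ (⊤ : ℕ∞) γ {x | x ≠ 0}
  isBigO : ∀ k ≠ 0, iteratedFDeriv ℝ k γ =O[𝓟 {x | x ≠ 0}] fun x ↦ ‖x‖ ^ (e - k)

theorem IsSymbol.of_homogeneous [FiniteDimensional ℝ E] {e : ℝ} {γ : E → ℝ} {κ : ℝ → ℝ}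
    (hγ : ContDiffOn ℝ (⊤ : ℕ∞) γ {x | x ≠ 0})
    (hhom : ∀ t : ℝ, 0 < t → ∀ x : E, x ≠ 0 → γ (t • x) = t ^ e * γ x + κ t) : IsSymbol e γ where
  contDiffOn := hγ
  isBigO _ hk := by
    obtain ⟨C, -, hC⟩ := exists_norm_iteratedFDeriv_le_of_homogeneous hγ hhom hk
    exact .of_bound C <| eventually_principal.2 fun x hx ↦
      (hC x hx).trans_eq (by rw [Real.norm_of_nonneg (by positivity)])

/-- The `i`-th order term in the Taylor expansion in `v` of the difference `iterDiff l γ (x + v)`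
about `v = 0`. -/
def taylorTerm (l : List E) (γ : E → ℝ) (i : ℕ) (x v : E) : ℝ :=
  iterDiff l (fun y ↦ iteratedFDeriv ℝ i γ y fun _ ↦ v) x / (i.factorial : ℝ)

theorem IsSymbol.exists_norm_iteratedFDeriv_le {e : ℝ} {γ : E → ℝ} (hγ : IsSymbol e γ) {k : ℕ}
    (hk : k ≠ 0) (he : e ≤ k) : ∃ C : ℝ, 0 ≤ C ∧ ∀ x y : E, x ≠ 0 → ‖x‖ ≤ 2 * ‖y‖ →
      ‖iteratedFDeriv ℝ k γ y‖ ≤ C * ‖x‖ ^ (e - k) := by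
  obtain ⟨C, hC0, hC⟩ := (hγ.isBigO k hk).exists_nonneg
  refine ⟨C * (2⁻¹ : ℝ) ^ (e - k), by positivity, fun x y hx hxy ↦ ?_⟩
  have hx0 := norm_pos_iff.2 hx
  have hy0 : 0 < ‖y‖ := by linarith
  have hy := isBigOWith_principal.1 hC y (norm_pos_iff.1 hy0)
  rw [Real.norm_of_nonneg (by positivity)] at hy
  refine hy.trans ?_
  rw [mul_assoc, ← Real.mul_rpow (by norm_num) hx0.le]
  exact mul_le_mul_of_nonneg_left
    (Real.rpow_le_rpow_of_nonpos (by positivity) (by linarith) (by linarith)) hC0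

theorem norm_le_two_mul_of_mem_closedBall {x v y : E} {r t : ℝ} (ht : t ∈ Set.Icc (0 : ℝ) 1)
    (hr : 4 * r ≤ ‖x‖) (hv : 4 * ‖v‖ ≤ ‖x‖) (hy : y ∈ Metric.closedBall (x + t • v) r) :
    ‖x‖ ≤ 2 * ‖y‖ := by
  rw [mem_closedBall_iff_norm'] at hy
  have h1 := norm_sub_norm_le (x + t • v) y
  have h2 := norm_sub_norm_le x (-(t • v))
  rw [sub_neg_eq_add, norm_neg, norm_smul, Real.norm_of_nonneg ht.1] at h2
  linarith [mul_le_of_le_one_left (norm_nonneg v) ht.2]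

theorem IsSymbol.isBigO_taylorTerm {e : ℝ} {γ : E → ℝ} (hγ : IsSymbol e γ) (he : e ≤ 0)
    {l : List E} (hl : l ≠ []) (i : ℕ) :
    (fun p : E × E ↦ taylorTerm l γ i p.1 p.2) =O[Bornology.cobounded E ×ˢ ⊤]
      fun p ↦ ‖p.1‖ ^ (e - i - l.length) * ‖p.2‖ ^ i := by
  obtain ⟨C, -, hC⟩ := hγ.exists_norm_iteratedFDeriv_le (k := i + l.length)
    (by simp [hl]) (he.trans (Nat.cast_nonneg _))
  refine .of_bound (C * (l.map (‖·‖)).prod) ?_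
  filter_upwards [(tendsto_norm_cobounded_atTop.eventually_gt_atTop
    (4 * totalLength l)).prod_inl ⊤] with ⟨x, v⟩ hx
  have hx0 : 0 < ‖x‖ := by linarith [totalLength_nonneg l]
  have hball (y) (hy : y ∈ Metric.closedBall x (totalLength l)) : ‖x‖ ≤ 2 * ‖y‖ :=
    norm_le_two_mul_of_mem_closedBall (v := 0) (t := 0) (by simp) hx.le (by simp)
      (by simpa using hy)
  have hD := norm_iterDiff_iteratedFDeriv_le isOpen_ne hγ.contDiffOn (l := l) (i := i) (x := x)
    (fun y hy ↦ norm_pos_iff.1 (by linarith [hball y hy]))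
    fun y hy ↦ hC x y (norm_pos_iff.1 hx0) (hball y hy)
  have hop := (iterDiff l (iteratedFDeriv ℝ i γ) x).le_of_opNorm_le hD fun _ ↦ v
  rw [Finset.prod_const, Finset.card_univ, Fintype.card_fin] at hop
  have hfac : (1 : ℝ) ≤ i.factorial := by exact_mod_cast i.factorial_pos
  rw [taylorTerm, iterDiff_iteratedFDeriv_apply, norm_div, Real.norm_natCast,
    Real.norm_of_nonneg (show 0 ≤ ‖x‖ ^ (e - i - l.length) * ‖v‖ ^ i by positivity)]
  refine (div_le_self (norm_nonneg _) hfac).trans (hop.trans_eq ?_)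
  rw [Nat.cast_add, ← sub_sub]
  ring

theorem IsSymbol.isBigO_sub_sum_taylorTerm {e : ℝ} {γ : E → ℝ} (hγ : IsSymbol e γ) (he : e ≤ 0)
    {l : List E} (hl : l ≠ []) (n : ℕ) :
    (fun p : E × E ↦ iterDiff l γ (p.1 + p.2) - ∑ i ∈ Finset.range n, taylorTerm l γ i p.1 p.2)
      =O[Bornology.cobounded E ×ˢ ⊤ ⊓ 𝓟 {p | 4 * ‖p.2‖ ≤ ‖p.1‖}]
        fun p ↦ ‖p.1‖ ^ (e - n - l.length) * ‖p.2‖ ^ n := by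
  obtain ⟨C, -, hC⟩ := hγ.exists_norm_iteratedFDeriv_le (k := n + l.length)
    (by simp [hl]) (he.trans (Nat.cast_nonneg _))
  refine .of_bound (C * (l.map (‖·‖)).prod) (eventually_inf_principal.2 ?_)
  filter_upwards [(tendsto_norm_cobounded_atTop.eventually_gt_atTop
    (4 * totalLength l)).prod_inl ⊤] with ⟨x, v⟩ hx hv
  have hx0 : 0 < ‖x‖ := by linarith [totalLength_nonneg l]
  have hball (t) (ht : t ∈ Set.Icc (0 : ℝ) 1) (y)
      (hy : y ∈ Metric.closedBall (x + t • v) (totalLength l)) : ‖x‖ ≤ 2 * ‖y‖ :=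
    norm_le_two_mul_of_mem_closedBall ht hx.le hv hy
  refine (abs_iterDiff_sub_sum_taylor_le isOpen_ne hγ.contDiffOn
    (fun t ht y hy ↦ norm_pos_iff.1 (by linarith [hball t ht y hy]))
    fun t ht y hy ↦ hC x y (norm_pos_iff.1 hx0) (hball t ht y hy)).trans_eq ?_
  rw [Real.norm_of_nonneg (by positivity), Nat.cast_add, ← sub_sub]
  ring

end Symbol

section Far

theorem tendsto_cofinite_of_tendsto_atTop {P X : Type*} {F : Filter P} {φ : P → X} {b : X → ℝ}
    (h : Tendsto (fun q ↦ b (φ q)) F atTop) : Tendsto φ F cofinite :=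
  le_cofinite_iff_eventually_ne.2 fun x ↦ eventually_map.2 <|
    (h.eventually_gt_atTop (b x)).mono fun _ hq hx ↦ (hx ▸ hq).false

variable {X : Type*} [AddCommGroup X] {d : ℕ} {b : X → ℝ}

theorem IsBracket.exists_sum_weight_le_of_le_mul (hb : IsBracket d b) {s : ℝ} (hs : 0 < s) (α : ℕ)
    {K : ℝ} (hK : 0 < K) : ∃ C : ℝ, ∀ r : ℝ, 2 * K ≤ r → 2 ≤ r → ∀ F : Finset X,
      (∀ x ∈ F, r ≤ K * b x) →
        ∑ x ∈ F, b x ^ (-(d : ℝ) - s) * Real.log (b x) ^ α ≤ C * (r ^ (-s) * Real.log r ^ α) := by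
  obtain ⟨C, hC, hsum⟩ := hb.exists_sum_rpow_neg_mul_log_le hs α
  obtain ⟨C', -, hw⟩ := exists_weight_le_weight (max K K⁻¹) (-s) α
  refine ⟨C * C', fun r hr hr2 F hF ↦ ?_⟩
  have : 0 < r := by linarith
  have hrK : 2 ≤ r / K := (le_div_iff₀ hK).2 hr
  have hle := hw (r / K) r hrK hr2
    (by rw [div_eq_inv_mul]; gcongr; exact le_max_right _ _)
    (by rw [← div_le_iff₀' (lt_max_of_lt_left hK)]; gcongr; exact le_max_left _ _)
  rw [mul_assoc]
  exact (hsum _ hrK F fun x hx ↦ (div_le_iff₀' hK).2 (hF x hx)).trans (by gcongr)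

theorem IsBracket.exists_eventually_sum_abs_mul_le (hb : IsBracket d b) {κ : X → X → ℝ}
    {f W V : X → ℝ} {S : Set (X × X)} {s t : ℝ} {α : ℕ} (hW : ∀ x, 0 ≤ W x)
    (hκ : (fun q : X × X ↦ κ q.1 q.2) =O[cofinite ×ˢ ⊤ ⊓ 𝓟 S] fun q ↦ W q.1 * b q.2 ^ t)
    (hf : f =O[⊤] fun x ↦ b x ^ s * Real.log (b x) ^ α)
    (hsum : ∃ C : ℝ, ∀ᶠ x in cofinite, ∀ F : Finset X, (∀ y ∈ F, (x, y) ∈ S) →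
      ∑ y ∈ F, b y ^ (t + s) * Real.log (b y) ^ α ≤ C * V x) :
    ∃ C : ℝ, ∀ᶠ x in cofinite, ∀ F : Finset X, (∀ y ∈ F, (x, y) ∈ S) →
      ∑ y ∈ F, |κ x y * f y| ≤ C * (W x * V x) := by
  obtain ⟨C₁, hC₁, hf⟩ := hf.exists_pos
  obtain ⟨C₂, hC₂, hκ⟩ := hκ.exists_pos
  obtain ⟨C₃, hC₃⟩ := hsum
  have hκ' := (mem_prod_top.1 (eventually_inf_principal.1 hκ.bound))
  refine ⟨C₂ * C₁ * C₃, ?_⟩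
  filter_upwards [hκ', hC₃] with x hx hx' F hF
  have hterm (y) (hy : y ∈ F) :
      |κ x y * f y| ≤ C₂ * C₁ * W x * (b y ^ (t + s) * Real.log (b y) ^ α) := by
    have h1 := hx y (hF y hy)
    have h2 := isBigOWith_top.1 hf y
    have hby := hb.pos y
    have hWx := hW x
    rw [Real.norm_of_nonneg (show 0 ≤ W x * b y ^ t by positivity)] at h1
    rw [Real.norm_of_nonneg (hb.weight_pos _ _ _).le] at h2
    calc |κ x y * f y| ≤ C₂ * (W x * b y ^ t) * (C₁ * (b y ^ s * Real.log (b y) ^ α)) := by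
          rw [abs_mul]
          exact mul_le_mul h1 h2 (abs_nonneg _) (by positivity)
      _ = _ := by rw [Real.rpow_add hby]; ring
  have := hW x
  calc _ ≤ C₂ * C₁ * W x * ∑ y ∈ F, b y ^ (t + s) * Real.log (b y) ^ α := by
        rw [Finset.mul_sum]
        exact Finset.sum_le_sum hterm
    _ ≤ C₂ * C₁ * W x * (C₃ * V x) := by gcongr; exact hx' F hF
    _ = _ := by ring

theorem IsBracket.isBigO_tsum_mul (hb : IsBracket d b) {κ : X → X → ℝ} {f : X → ℝ} {e p : ℝ}
    {α : ℕ}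
    (hin : (fun q : X × X ↦ κ q.1 q.2) =O[cofinite ×ˢ ⊤ ⊓ 𝓟 {q | 8 * b q.2 ≤ b q.1}]
      fun q ↦ b q.1 ^ e * b q.2 ^ p)
    (hout : (fun q : X × X ↦ κ q.1 q.2) =O[cofinite ×ˢ ⊤ ⊓ 𝓟 {q | b q.1 < 8 * b q.2}]
      fun q ↦ b q.1 ^ (e + 1) * b q.2 ^ (p - 1))
    (hf : f =O[⊤] fun x ↦ b x ^ (-(d : ℝ) - p) * Real.log (b x) ^ α) :
    (fun x ↦ ∑' y, κ x y * f y) =O[cofinite] fun x ↦ b x ^ e * Real.log (b x) ^ (α + 1) := by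
  classical
  obtain ⟨C₁, h₁⟩ := hb.exists_eventually_sum_abs_mul_le
    (V := fun x ↦ Real.log (b x) ^ (α + 1)) (fun x ↦ Real.rpow_nonneg (hb.pos x).le _) hin hf <| by
      obtain ⟨C, -, hC⟩ := hb.exists_sum_rpow_neg_dim_mul_log_le α
      refine ⟨C, .of_forall fun x F hF ↦ ?_⟩
      rw [add_sub_cancel]
      exact hC _ (hb.two_le x) F fun y hy ↦ by
        linarith [show 8 * b y ≤ b x from hF y hy, hb.pos y]
  obtain ⟨C₂, h₂⟩ := hb.exists_eventually_sum_abs_mul_le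
    (V := fun x ↦ b x ^ (-1 : ℝ) * Real.log (b x) ^ α)
    (fun x ↦ Real.rpow_nonneg (hb.pos x).le _) hout hf <| by
      obtain ⟨C, hC⟩ := hb.exists_sum_weight_le_of_le_mul one_pos α (K := 8) (by norm_num)
      refine ⟨C, ?_⟩
      filter_upwards [hb.tendsto_cofinite_atTop.eventually_ge_atTop 16] with x hx F hF
      rw [show p - 1 + (-d - p) = -(d : ℝ) - 1 by ring]
      exact hC _ (by linarith) (hb.two_le x) F fun y hy ↦ (hF y hy).le
  refine .of_bound (C₁ + |C₂| / Real.log 2) ?_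
  filter_upwards [h₁, h₂] with x hx₁ hx₂
  rw [Real.norm_of_nonneg (hb.weight_pos _ _ _).le]
  refine abs_tsum_le_of_sum_abs_le fun F ↦ ?_
  rw [← Finset.sum_filter_add_sum_filter_not F (fun y ↦ 8 * b y ≤ b x), add_mul]
  refine add_le_add (hx₁ _ fun y hy ↦ (Finset.mem_filter.1 hy).2)
    ((hx₂ _ fun y hy ↦ not_le.1 (Finset.mem_filter.1 hy).2).trans ?_)
  have hbx := hb.pos x
  have := Real.log_pos one_lt_two
  have hlog : Real.log 2 ≤ Real.log (b x) := Real.log_le_log two_pos (hb.two_le x)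
  have hlogx := hb.log_pos x
  calc _ = C₂ / Real.log 2 * (b x ^ e * (Real.log (b x) ^ α * Real.log 2)) := by
        rw [← mul_assoc (b x ^ (e + 1)), ← Real.rpow_add hbx, add_neg_cancel_right]
        field_simp
    _ ≤ |C₂| / Real.log 2 * (b x ^ e * (Real.log (b x) ^ α * Real.log (b x))) := by
        gcongr
        exact le_abs_self C₂
    _ = _ := by rw [pow_succ]

end Far

section Kernel

variable {d : ℕ} {A : Matrix (Fin d) (Fin d) ℝ}

theorem tendsto_latticeHom_cofinite_cobounded (hA : IsUnit A.det) :
    Tendsto (latticeHom A) cofinite (Bornology.cobounded (Vec d)) := by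
  rw [← tendsto_norm_atTop_iff_cobounded]
  simpa [latticeBracket] using tendsto_atTop_add_const_right _ (-2 : ℝ)
    (isBracket_latticeBracket hA).tendsto_cofinite_atTop

theorem norm_latticeHom_rpow_isBigO (hA : IsUnit A.det) (s : ℝ) :
    (fun z ↦ ‖latticeHom A z‖ ^ s) =O[cofinite] fun z ↦ latticeBracket A z ^ s := by
  obtain ⟨C, -, hC⟩ := exists_weight_le_weight 2 s 0
  refine .of_bound C ?_
  filter_upwards [(isBracket_latticeBracket hA).tendsto_cofinite_atTop.eventually_ge_atTop 4]
    with z hz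
  simp only [latticeBracket] at hz ⊢
  rw [Real.norm_of_nonneg (by positivity), Real.norm_of_nonneg (by positivity)]
  simpa using hC _ _ (by linarith) (by linarith) (by linarith) (by linarith)

theorem norm_latticeHom_neg_pow_isBigO (i : ℕ) :
    (fun z ↦ ‖-latticeHom A z‖ ^ i) =O[⊤] fun z ↦ latticeBracket A z ^ i :=
  .of_bound 1 <| .of_forall fun z ↦ by
    have : 0 < latticeBracket A z := by simp only [latticeBracket]; positivity
    rw [norm_neg, Real.norm_of_nonneg (by positivity), Real.norm_of_nonneg (by positivity), one_mul]
    gcongr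
    simp [latticeBracket]

theorem norm_latticeHom_rpow_mul_pow_isBigO (hA : IsUnit A.det) (s : ℝ) (i : ℕ) :
    (fun q : (Fin d → ℤ) × (Fin d → ℤ) ↦ ‖latticeHom A q.1‖ ^ s * ‖-latticeHom A q.2‖ ^ i)
      =O[cofinite ×ˢ ⊤] fun q ↦ latticeBracket A q.1 ^ s * latticeBracket A q.2 ^ i :=
  ((norm_latticeHom_rpow_isBigO hA s).comp_tendsto tendsto_fst).mul
    ((norm_latticeHom_neg_pow_isBigO i).comp_tendsto tendsto_top)

theorem tendsto_latticeHom_prod (hA : IsUnit A.det) :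
    Tendsto (fun q : (Fin d → ℤ) × (Fin d → ℤ) ↦ (latticeHom A q.1, -latticeHom A q.2))
      (cofinite ×ˢ ⊤) (Bornology.cobounded (Vec d) ×ˢ ⊤) :=
  ((tendsto_latticeHom_cofinite_cobounded hA).comp tendsto_fst).prodMk tendsto_top

variable {e : ℝ} {γ : Vec d → ℝ} {l : List (Fin d → ℤ)}

theorem IsSymbol.isBigO_latticeTaylorTerm (hγ : IsSymbol e γ) (he : e ≤ 0) (hA : IsUnit A.det)
    (hl : l ≠ []) (i : ℕ) : (fun q : (Fin d → ℤ) × (Fin d → ℤ) ↦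
      taylorTerm (l.map (latticeHom A)) γ i (latticeHom A q.1) (-latticeHom A q.2))
        =O[cofinite ×ˢ ⊤]
          fun q ↦ latticeBracket A q.1 ^ (e - i - l.length) * latticeBracket A q.2 ^ i := by
  have h := hγ.isBigO_taylorTerm he (l := l.map (latticeHom A)) (by simpa using hl) i
  rw [List.length_map] at h
  exact (h.comp_tendsto (tendsto_latticeHom_prod hA)).trans
    (norm_latticeHom_rpow_mul_pow_isBigO hA _ i)

theorem IsSymbol.isBigO_sub_sum_latticeTaylorTerm (hγ : IsSymbol e γ) (he : e ≤ 0)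
    (hA : IsUnit A.det) (hl : l ≠ []) (n : ℕ) : (fun q : (Fin d → ℤ) × (Fin d → ℤ) ↦
      iterDiff l (fun z ↦ γ (latticeHom A z)) (q.1 - q.2) - ∑ i ∈ Finset.range n,
        taylorTerm (l.map (latticeHom A)) γ i (latticeHom A q.1) (-latticeHom A q.2))
          =O[cofinite ×ˢ ⊤ ⊓ 𝓟 {q | 8 * latticeBracket A q.2 ≤ latticeBracket A q.1}]
            fun q ↦ latticeBracket A q.1 ^ (e - n - l.length) * latticeBracket A q.2 ^ n := by
  have h := hγ.isBigO_sub_sum_taylorTerm he (l := l.map (latticeHom A)) (by simpa using hl) n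
  rw [List.length_map] at h
  have htend := (tendsto_latticeHom_prod hA).inf
    (tendsto_principal_principal.2 fun (q : (Fin d → ℤ) × (Fin d → ℤ))
      (hq : 8 * latticeBracket A q.2 ≤ latticeBracket A q.1) ↦ show
        (latticeHom A q.1, -latticeHom A q.2) ∈ {p : Vec d × Vec d | 4 * ‖p.2‖ ≤ ‖p.1‖} by
      simp only [latticeBracket, Set.mem_ofPred_eq, norm_neg] at hq ⊢
      linarith [norm_nonneg (latticeHom A q.2)])
  refine ((h.comp_tendsto htend).congr_left fun q ↦ ?_).trans
    ((norm_latticeHom_rpow_mul_pow_isBigO hA _ n).mono inf_le_left)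
  simp only [Function.comp_apply, iterDiff_comp_addMonoidHom]
  rw [map_sub, ← sub_eq_add_neg]

/-- The part of the Taylor expansion about `m = 0` of `∑ n, iterDiff l (γ n ∘ φ) (ℓ - m)`,
`φ = latticeHom A`, in which the `n`-th kernel, a symbol of order `2 - d - 2 * n`, is expanded to
order `p - 2 * n`; the terms that are left out are `O(|ℓ| ^ (2 - d - p - |l|))`. -/
def taylorSum (A : Matrix (Fin d) (Fin d) ℝ) (l : List (Fin d → ℤ)) (γ : ℕ → Vec d → ℝ) (p : ℕ)
    (ℓ m : Fin d → ℤ) : ℝ :=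
  ∑ n ∈ Finset.range ((p + 1) / 2), ∑ i ∈ Finset.range (p - 2 * n),
    taylorTerm (l.map (latticeHom A)) (γ n) i (latticeHom A ℓ) (-latticeHom A m)

variable {g : (Fin d → ℤ) → ℝ} {Γ : ℕ → Vec d → ℝ} {p : ℕ}

theorem isBigO_comp_sub_of_isBigO (hA : IsUnit A.det) {h : (Fin d → ℤ) → ℝ} {s : ℝ}
    (hh : h =O[cofinite] fun z ↦ latticeBracket A z ^ s) :
    (fun q : (Fin d → ℤ) × (Fin d → ℤ) ↦ h (q.1 - q.2))
      =O[cofinite ×ˢ ⊤ ⊓ 𝓟 {q | 8 * latticeBracket A q.2 ≤ latticeBracket A q.1}]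
        fun q ↦ latticeBracket A q.1 ^ s := by
  have hb := isBracket_latticeBracket hA
  set F : Filter ((Fin d → ℤ) × (Fin d → ℤ)) :=
    cofinite ×ˢ ⊤ ⊓ 𝓟 {q | 8 * latticeBracket A q.2 ≤ latticeBracket A q.1}
  have hcmp : ∀ᶠ q in F, latticeBracket A (q.1 - q.2) ≤ 2 * latticeBracket A q.1 ∧
      latticeBracket A q.1 ≤ 2 * latticeBracket A (q.1 - q.2) :=
    eventually_inf_principal.2 <| .of_forall fun q hq ↦ latticeBracket_comparable <| by
      have : 8 * latticeBracket A q.2 ≤ latticeBracket A q.1 := hq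
      rw [map_sub, sub_sub_cancel_left, norm_neg]
      simp only [latticeBracket] at this ⊢
      linarith [norm_nonneg (latticeHom A q.2)]
  have hfst : Tendsto (fun q ↦ latticeBracket A q.1) F atTop :=
    (hb.tendsto_cofinite_atTop.comp tendsto_fst).mono_left inf_le_left
  have htend : Tendsto (fun q ↦ q.1 - q.2) F cofinite :=
    tendsto_cofinite_of_tendsto_atTop <| tendsto_atTop_mono' _
      (hcmp.mono fun q hq ↦ (div_le_iff₀' two_pos).2 hq.2) (hfst.atTop_div_const two_pos)
  obtain ⟨C, -, hC⟩ := exists_weight_le_weight 2 s 0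
  refine (hh.comp_tendsto htend).trans (.of_bound C (hcmp.mono fun q hq ↦ ?_))
  rw [Function.comp_apply, Real.norm_of_nonneg (Real.rpow_nonneg (hb.pos _).le _),
    Real.norm_of_nonneg (Real.rpow_nonneg (hb.pos _).le _)]
  simpa using hC _ _ (hb.two_le _) (hb.two_le _) hq.1 hq.2

theorem isBigO_sub_taylorSum (hd : 2 ≤ d) (hA : IsUnit A.det) (hl : l ≠ [])
    (hΓ : ∀ n : ℕ, IsSymbol ((2 : ℝ) - 2 * n - d) (Γ n))
    (hg : iterDiff l (fun z ↦ g z - ∑ n ∈ Finset.range ((p + 1) / 2), Γ n (latticeHom A z))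
      =O[cofinite] fun z ↦ latticeBracket A z ^ ((2 : ℝ) - d - p - l.length)) :
    (fun q : (Fin d → ℤ) × (Fin d → ℤ) ↦ iterDiff l g (q.1 - q.2) - taylorSum A l Γ p q.1 q.2)
      =O[cofinite ×ˢ ⊤ ⊓ 𝓟 {q | 8 * latticeBracket A q.2 ≤ latticeBracket A q.1}] fun q ↦
        latticeBracket A q.1 ^ ((2 : ℝ) - d - p - l.length) * latticeBracket A q.2 ^ (p : ℝ) := by
  have hb := isBracket_latticeBracket hA
  have hd' : (2 : ℝ) ≤ d := by exact_mod_cast hd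
  have hsplit (q : (Fin d → ℤ) × (Fin d → ℤ)) :
      iterDiff l (fun z ↦ g z - ∑ n ∈ Finset.range ((p + 1) / 2), Γ n (latticeHom A z))
          (q.1 - q.2) +
        ∑ n ∈ Finset.range ((p + 1) / 2), (iterDiff l (fun z ↦ Γ n (latticeHom A z)) (q.1 - q.2) -
          ∑ i ∈ Finset.range (p - 2 * n),
            taylorTerm (l.map (latticeHom A)) (Γ n) i (latticeHom A q.1) (-latticeHom A q.2)) =
      iterDiff l g (q.1 - q.2) - taylorSum A l Γ p q.1 q.2 := by
    rw [iterDiff_sub, iterDiff_sum, Finset.sum_sub_distrib, taylorSum]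
    ring
  refine .congr_left (.add ((isBigO_comp_sub_of_isBigO hA hg).trans ?_)
    (.fun_sum fun n hn ↦ ?_)) hsplit
  · refine .of_bound' (.of_forall fun q ↦ ?_)
    rw [norm_mul]
    exact le_mul_of_one_le_right (norm_nonneg _) <|
      (Real.one_le_rpow (by linarith [hb.two_le q.2]) (Nat.cast_nonneg p)).trans (le_abs_self _)
  · have hn' : 2 * n ≤ p := by grind
    refine ((hΓ n).isBigO_sub_sum_latticeTaylorTerm (by linarith [n.cast_nonneg (α := ℝ)]) hA hl
      (p - 2 * n)).trans (.of_bound' (.of_forall fun q ↦ ?_))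
    rw [Real.rpow_natCast, norm_mul, norm_mul, Nat.cast_sub hn', norm_pow, norm_pow]
    push_cast
    have h1 : 1 ≤ ‖latticeBracket A q.2‖ := (one_le_two.trans (hb.two_le _)).trans (le_abs_self _)
    exact mul_le_mul (by ring_nf; rfl) (pow_le_pow_right₀ h1 (Nat.sub_le _ _)) (by positivity)
      (by positivity)

theorem isBigO_comp_sub_mul_one_sub_latticeCutoff {h : (Fin d → ℤ) → ℝ} {s : ℝ} (hs : s ≤ 0)
    (hh : h =O[⊤] fun z ↦ latticeBracket A z ^ s) :
    (fun q : (Fin d → ℤ) × (Fin d → ℤ) ↦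
      h (q.1 - q.2) * (1 - latticeCutoff A (latticeHom A q.1) (latticeBracket A q.1) q.2))
        =O[⊤] fun q ↦ latticeBracket A q.2 ^ s := by
  obtain ⟨c, hc₀, hc⟩ := hh.exists_nonneg
  rw [isBigOWith_top] at hc
  refine .of_bound (c * (9 : ℝ)⁻¹ ^ s * 2) (.of_forall fun ⟨ℓ, m⟩ ↦ ?_)
  have hpos (z : Fin d → ℤ) : 0 < latticeBracket A z := by simp only [latticeBracket]; positivity
  rcases le_or_gt ‖latticeHom A m - latticeHom A ℓ‖ (latticeBracket A ℓ / 8) with hnear | hfar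
  · rw [latticeCutoff_eq_one (hpos ℓ) hnear, sub_self, mul_zero, norm_zero]
    positivity
  have hle : 9⁻¹ * latticeBracket A m ≤ latticeBracket A (ℓ - m) := by
    have := norm_le_norm_add_norm_sub' (latticeHom A m) (latticeHom A ℓ)
    rw [latticeBracket_sub_eq]
    simp only [latticeBracket] at hfar ⊢
    linarith
  have hcut : ‖1 - latticeCutoff A (latticeHom A ℓ) (latticeBracket A ℓ) m‖ ≤ 2 := by
    have := abs_le.1 (abs_latticeCutoff_le_one (A := A) (latticeHom A ℓ) (latticeBracket A ℓ) m)
    exact abs_le.2 ⟨by linarith, by linarith⟩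
  rw [norm_mul, mul_right_comm]
  refine mul_le_mul ((hc _).trans ?_) hcut (norm_nonneg _) (by positivity)
  rw [Real.norm_of_nonneg (Real.rpow_nonneg (hpos _).le _),
    Real.norm_of_nonneg (Real.rpow_nonneg (hpos _).le _), mul_assoc,
    ← Real.mul_rpow (by positivity) (hpos m).le]
  exact mul_le_mul_of_nonneg_left (Real.rpow_le_rpow_of_nonpos (by positivity [hpos m]) hle hs) hc₀

theorem IsBracket.rpow_isBigO_rpow {X : Type*} [AddCommGroup X] {b : X → ℝ} (hb : IsBracket d b)
    {r s : ℝ} (h : r ≤ s) : (fun x ↦ b x ^ r) =O[⊤] fun x ↦ b x ^ s :=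
  .of_bound' <| .of_forall fun x ↦ by
    rw [Real.norm_of_nonneg (Real.rpow_nonneg (hb.pos x).le _),
      Real.norm_of_nonneg (Real.rpow_nonneg (hb.pos x).le _)]
    exact Real.rpow_le_rpow_of_exponent_le (one_le_two.trans (hb.two_le x)) h

theorem IsBracket.rpow_add_mul_rpow_isBigO {X : Type*} [AddCommGroup X] {b : X → ℝ}
    (hb : IsBracket d b) {t : ℝ} (ht : 0 ≤ t) (r s : ℝ) :
    (fun q : X × X ↦ b q.1 ^ (r + t) * b q.2 ^ s) =O[𝓟 {q | b q.1 < 8 * b q.2}]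
      fun q ↦ b q.1 ^ r * b q.2 ^ (s + t) := by
  refine .of_bound (8 ^ t) (eventually_principal.2 fun q (hq : b q.1 < 8 * b q.2) ↦ ?_)
  have h₁ := hb.pos q.1
  have h₂ := hb.pos q.2
  rw [Real.norm_of_nonneg (by positivity), Real.norm_of_nonneg (by positivity)]
  calc b q.1 ^ (r + t) * b q.2 ^ s ≤ b q.1 ^ r * (8 * b q.2) ^ t * b q.2 ^ s := by
        rw [Real.rpow_add h₁]
        gcongr
    _ = _ := by
        rw [Real.mul_rpow (by norm_num) h₂.le, Real.rpow_add h₂]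
        ring

theorem isBigO_taylorSum (hd : 2 ≤ d) (hA : IsUnit A.det) (hl : l ≠ [])
    (hΓ : ∀ n : ℕ, IsSymbol ((2 : ℝ) - 2 * n - d) (Γ n)) :
    (fun q : (Fin d → ℤ) × (Fin d → ℤ) ↦ taylorSum A l Γ p q.1 q.2)
      =O[cofinite ×ˢ ⊤ ⊓ 𝓟 {q | latticeBracket A q.1 < 8 * latticeBracket A q.2}] fun q ↦
        latticeBracket A q.1 ^ ((2 : ℝ) - d - p - l.length + 1) *
          latticeBracket A q.2 ^ ((p : ℝ) - 1) := by
  have hb := isBracket_latticeBracket hA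
  have hd' : (2 : ℝ) ≤ d := by exact_mod_cast hd
  refine .fun_sum fun n _ ↦ .fun_sum fun i hi ↦ ?_
  have hni : (2 : ℝ) * n + i + 1 ≤ p := by
    have : 2 * n + i + 1 ≤ p := by grind
    exact_mod_cast this
  have h := (hΓ n).isBigO_latticeTaylorTerm (by linarith [n.cast_nonneg (α := ℝ)]) hA hl i
  refine (h.mono inf_le_left).trans <| ((((hb.rpow_isBigO_rpow
    (s := (2 : ℝ) - d - i - l.length) ?_).comp_tendsto tendsto_top).mul (isBigO_refl _ _)).mono
      le_top).trans (.mono ?_ inf_le_right)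
  · linarith [n.cast_nonneg (α := ℝ)]
  refine (hb.rpow_add_mul_rpow_isBigO (t := p - 1 - i) (by linarith [n.cast_nonneg (α := ℝ)])
    ((2 : ℝ) - d - p - l.length + 1) i).congr (fun q ↦ ?_) fun q ↦ ?_
  · rw [Real.rpow_natCast, Function.comp_apply]
    ring_nf
  · ring_nf

theorem isBigO_tsum_mul_one_sub_latticeCutoff_sub_taylorSum (hd : 2 ≤ d) (hA : IsUnit A.det)
    (hl : l ≠ []) (hΓ : ∀ n : ℕ, IsSymbol ((2 : ℝ) - 2 * n - d) (Γ n))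
    (hg : iterDiff l g =O[⊤] fun z ↦ latticeBracket A z ^ ((2 : ℝ) - d - l.length))
    (hgΓ : iterDiff l (fun z ↦ g z - ∑ n ∈ Finset.range ((p + 1) / 2), Γ n (latticeHom A z))
      =O[cofinite] fun z ↦ latticeBracket A z ^ ((2 : ℝ) - d - p - l.length))
    {f : (Fin d → ℤ) → ℝ} {α : ℕ} (hf : f =O[⊤] fun z ↦
      latticeBracket A z ^ (-(d : ℝ) - p) * Real.log (latticeBracket A z) ^ α) :
    (fun ℓ ↦ ∑' m, (iterDiff l g (ℓ - m) *
        (1 - latticeCutoff A (latticeHom A ℓ) (latticeBracket A ℓ) m) -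
          taylorSum A l Γ p ℓ m) * f m) =O[cofinite] fun z ↦
      latticeBracket A z ^ ((2 : ℝ) - d - p - l.length) *
        Real.log (latticeBracket A z) ^ (α + 1) := by
  have hb := isBracket_latticeBracket hA
  have hd' : (2 : ℝ) ≤ d := by exact_mod_cast hd
  have hl' : (1 : ℝ) ≤ l.length := by exact_mod_cast List.length_pos_iff.2 hl
  refine hb.isBigO_tsum_mul (κ := fun ℓ m ↦ iterDiff l g (ℓ - m) *
    (1 - latticeCutoff A (latticeHom A ℓ) (latticeBracket A ℓ) m) - taylorSum A l Γ p ℓ m) ?_ ?_ hf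
  · refine (isBigO_sub_taylorSum hd hA hl hΓ hgΓ).congr' (eventually_inf_principal.2 <|
      .of_forall fun q (hq : 8 * latticeBracket A q.2 ≤ latticeBracket A q.1) ↦ ?_) .rfl
    dsimp only
    rw [latticeCutoff_eq_zero (hb.pos _), sub_zero, mul_one]
    have := norm_le_norm_add_norm_sub (latticeHom A q.2) (latticeHom A q.1)
    simp only [latticeBracket] at hq ⊢
    linarith [norm_nonneg (latticeHom A q.2)]
  · refine .sub ?_ (isBigO_taylorSum hd hA hl hΓ)
    refine ((isBigO_comp_sub_mul_one_sub_latticeCutoff (by linarith) hg).mono le_top).trans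
      (.mono ?_ inf_le_right)
    refine (hb.rpow_add_mul_rpow_isBigO (t := -((2 : ℝ) - d - p - l.length + 1))
      (by linarith [p.cast_nonneg (α := ℝ)]) ((2 : ℝ) - d - p - l.length + 1)
      (2 - d - l.length)).congr (fun q ↦ ?_) fun q ↦ ?_
    · rw [add_neg_cancel, Real.rpow_zero, one_mul]
    · ring_nf

end Kernel

/-! ### Moment tensors -/

section Moments

variable {d : ℕ}

theorem iteratedFDeriv_apply_const_eq_aContract (i : ℕ) (γ : Vec d → ℝ) (x v : Vec d) :
    iteratedFDeriv ℝ i γ x (fun _ ↦ v) = aContract i (tensorPow fun _ ↦ v) γ x := by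
  conv_lhs => rw [← Finset.univ_sum_single v]
  rw [ContinuousMultilinearMap.map_sum]
  refine Finset.sum_congr rfl fun js _ ↦ ?_
  rw [tensorPow, pderivMulti, ← smul_eq_mul, ← ContinuousMultilinearMap.map_smul_univ]
  simp [← Pi.single_smul]

theorem iterDiff_aContract (l : List (Vec d)) (i : ℕ) (a : (Fin i → Fin d) → ℝ) (γ : Vec d → ℝ)
    (x : Vec d) :
    iterDiff l (aContract i a γ) x = ∑ js, a js * iterDiff l (pderivMulti i js γ) x :=
  (iterDiff_sum _ l _ x).trans <| Finset.sum_congr rfl fun js _ ↦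
    (addMonoidHom_iterDiff (AddMonoidHom.mulLeft (a js)) l (pderivMulti i js γ) x).symm

theorem taylorTerm_eq_sum (l : List (Vec d)) (γ : Vec d → ℝ) (i : ℕ) (x v : Vec d) :
    taylorTerm l γ i x v = ∑ js : Fin i → Fin d,
      tensorPow (fun _ ↦ v) js / i.factorial * iterDiff l (pderivMulti i js γ) x := by
  have h : (fun y ↦ iteratedFDeriv ℝ i γ y fun _ ↦ v) = aContract i (tensorPow fun _ ↦ v) γ :=
    funext fun y ↦ iteratedFDeriv_apply_const_eq_aContract i γ y v
  simp only [taylorTerm, h, iterDiff_aContract, Finset.sum_div, mul_div_right_comm]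

variable {A : Matrix (Fin d) (Fin d) ℝ} {f : (Fin d → ℤ) → ℝ} {p α : ℕ}

/-- The moment tensor `(1 / i!) ∑ m, (-A m)^⊗ⁱ f(m)`, normalized so that it contracts with `∇ⁱ γ` to
the `i`-th term of the Taylor expansion of `∑ m, γ(ℓ - A m) f(m)` at `ℓ`. -/
def momentTensor (A : Matrix (Fin d) (Fin d) ℝ) (f : (Fin d → ℤ) → ℝ) (i : ℕ)
    (js : Fin i → Fin d) : ℝ :=
  ∑' m, tensorPow (fun _ ↦ -latticeHom A m) js / i.factorial * f m

theorem symArr_momentTensor (A : Matrix (Fin d) (Fin d) ℝ) (f : (Fin d → ℤ) → ℝ) (i : ℕ) :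
    SymArr (momentTensor A f i) := fun π js ↦
  tsum_congr fun m ↦ congrArg (· / (i.factorial : ℝ) * f m) <|
    Equiv.prod_comp π fun r ↦ (-latticeHom A m) (js r)

theorem abs_tensorPow_const_le (v : Vec d) {i : ℕ} (js : Fin i → Fin d) :
    |tensorPow (fun _ ↦ v) js| ≤ ‖v‖ ^ i := by
  rw [tensorPow, Finset.abs_prod]
  refine (Finset.prod_le_prod (fun _ _ ↦ abs_nonneg _) fun r _ ↦ norm_le_pi_norm v (js r)).trans ?_
  simp

theorem summable_tensorPow_mul (hA : IsUnit A.det)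
    (hf : f =O[⊤] fun z ↦
      latticeBracket A z ^ (-(d : ℝ) - p) * Real.log (latticeBracket A z) ^ α)
    {i : ℕ} (hi : i < p) (js : Fin i → Fin d) :
    Summable fun m ↦ tensorPow (fun _ ↦ -latticeHom A m) js / i.factorial * f m := by
  have hb := isBracket_latticeBracket hA
  have hip : (i : ℝ) < p := by exact_mod_cast hi
  refine summable_of_isBigO (hb.summable_rpow_neg_mul_log (s := (p : ℝ) - i) (by linarith) α)
    (.mono ?_ le_top)
  have h : (fun m ↦ tensorPow (fun _ : Fin i ↦ -latticeHom A m) js) =O[⊤]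
      fun m ↦ latticeBracket A m ^ i :=
    .trans (.of_bound' <| .of_forall fun m ↦ (abs_tensorPow_const_le _ js).trans (le_abs_self _))
      (norm_latticeHom_neg_pow_isBigO i)
  refine ((h.const_mul_left (i.factorial : ℝ)⁻¹).mul hf).congr (fun m ↦ ?_) fun m ↦ ?_
  · rw [inv_mul_eq_div]
  · rw [← mul_assoc, ← Real.rpow_natCast, ← Real.rpow_add (hb.pos m)]
    ring_nf

theorem hasSum_taylorTerm_mul (hA : IsUnit A.det)
    (hf : f =O[⊤] fun z ↦
      latticeBracket A z ^ (-(d : ℝ) - p) * Real.log (latticeBracket A z) ^ α)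
    {i : ℕ} (hi : i < p) (l : List (Vec d)) (γ : Vec d → ℝ) (x : Vec d) :
    HasSum (fun m ↦ taylorTerm l γ i x (-latticeHom A m) * f m)
      (iterDiff l (aContract i (momentTensor A f i) γ) x) := by
  rw [iterDiff_aContract]
  refine (hasSum_sum fun js _ ↦ (summable_tensorPow_mul hA hf hi js).hasSum.mul_right
    (iterDiff l (pderivMulti i js γ) x)).congr_fun fun m ↦ ?_
  rw [taylorTerm_eq_sum, Finset.sum_mul]
  exact Finset.sum_congr rfl fun js _ ↦ mul_right_comm _ _ _

theorem hasSum_taylorSum_mul (hA : IsUnit A.det)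
    (hf : f =O[⊤] fun z ↦
      latticeBracket A z ^ (-(d : ℝ) - p) * Real.log (latticeBracket A z) ^ α)
    (l : List (Fin d → ℤ)) (Γ : ℕ → Vec d → ℝ) (ℓ : Fin d → ℤ) :
    HasSum (fun m ↦ taylorSum A l Γ p ℓ m * f m)
      (∑ n ∈ Finset.range ((p + 1) / 2), ∑ i ∈ Finset.range (p - 2 * n),
        iterDiff (l.map (latticeHom A)) (aContract i (momentTensor A f i) (Γ n))
          (latticeHom A ℓ)) := by
  refine (hasSum_sum fun n _ ↦ hasSum_sum fun i hi ↦ hasSum_taylorTerm_mul hA hf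
    (by grind) (l.map (latticeHom A)) (Γ n) (latticeHom A ℓ)).congr_fun fun m ↦ ?_
  simp only [taylorSum, Finset.sum_mul]

end Moments

/-! ### The expansion in lattice coordinates -/

section Expansion

variable {d : ℕ} {A : Matrix (Fin d) (Fin d) ℝ} {p α : ℕ}

theorem summable_comp_sub_mul (hA : IsUnit A.det) {K f : (Fin d → ℤ) → ℝ} {s : ℝ} (hs : s < 0)
    (hK : K =O[⊤] fun z ↦ latticeBracket A z ^ s)
    (hf : f =O[⊤] fun z ↦
      latticeBracket A z ^ (-(d : ℝ) - p) * Real.log (latticeBracket A z) ^ α)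
    (ℓ : Fin d → ℤ) : Summable fun m ↦ K (ℓ - m) * f m := by
  have hb := isBracket_latticeBracket hA
  have hK' : (fun m ↦ K (ℓ - m)) =O[⊤] fun m ↦ latticeBracket A m ^ s := by
    refine (hK.comp_tendsto (tendsto_top (f := fun m ↦ ℓ - m) (l := ⊤))).trans
      ((hb.weight_comp_add_isBigO s 0 (-ℓ)).congr (fun m ↦ ?_) fun m ↦ ?_)
    · rw [pow_zero, mul_one, Function.comp_apply, ← hb.map_neg, neg_add, neg_neg, neg_add_eq_sub]
    · rw [pow_zero, mul_one]
  refine summable_of_isBigO (hb.summable_rpow_neg_mul_log (s := p - s)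
    (by linarith [p.cast_nonneg (α := ℝ)]) α) (((hK'.mul hf).mono le_top).congr_right fun m ↦ ?_)
  rw [← mul_assoc, ← Real.rpow_add (hb.pos m)]
  ring_nf

variable {l₁ l₂ : List (Fin d → ℤ)}

theorem isBigO_tsum_iterDiff_mul_sub_multipole (hd : 2 ≤ d) (hA : IsUnit A.det)
    (hl₁ : l₁.length = 1 ∨ l₁.length = 2) {g f : (Fin d → ℤ) → ℝ} {Γ : ℕ → Vec d → ℝ}
    (hΓ : ∀ n : ℕ, IsSymbol ((2 : ℝ) - 2 * n - d) (Γ n))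
    (hg₁ : iterDiff l₁ g =O[⊤] fun z ↦ latticeBracket A z ^ ((2 : ℝ) - d - l₁.length))
    (hg : iterDiff (l₂ ++ l₁) g =O[⊤]
      fun z ↦ latticeBracket A z ^ ((2 : ℝ) - d - (l₂ ++ l₁).length))
    (hgΓ : iterDiff (l₂ ++ l₁)
        (fun z ↦ g z - ∑ n ∈ Finset.range ((p + 1) / 2), Γ n (latticeHom A z))
      =O[cofinite] fun z ↦ latticeBracket A z ^ ((2 : ℝ) - d - p - (l₂ ++ l₁).length))
    (hf : ∀ s, s.Sublist l₂ → iterDiff s f =O[⊤] fun z ↦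
      latticeBracket A z ^ (-(d : ℝ) - p - s.length) * Real.log (latticeBracket A z) ^ α) :
    (fun ℓ ↦ ∑' m, iterDiff (l₂ ++ l₁) g (ℓ - m) * f m -
      ∑ n ∈ Finset.range ((p + 1) / 2), ∑ i ∈ Finset.range (p - 2 * n),
        iterDiff ((l₂ ++ l₁).map (latticeHom A)) (aContract i (momentTensor A f i) (Γ n))
          (latticeHom A ℓ)) =O[cofinite] fun z ↦
      latticeBracket A z ^ ((2 : ℝ) - d - p - (l₂ ++ l₁).length) *
        Real.log (latticeBracket A z) ^ (α + 1) := by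
  have hd' : (2 : ℝ) ≤ d := by exact_mod_cast hd
  have hl : l₂ ++ l₁ ≠ [] :=
    List.append_ne_nil_of_right_ne_nil l₂ (List.ne_nil_of_length_pos (by lia))
  have hl' : (1 : ℝ) ≤ (l₂ ++ l₁).length := by exact_mod_cast List.length_pos_iff.2 hl
  have hf₀ : f =O[⊤] fun z ↦
      latticeBracket A z ^ (-(d : ℝ) - p) * Real.log (latticeBracket A z) ^ α := by
    simpa using hf [] (List.nil_sublist _)
  have hnear := isBigO_tsum_iterDiff_mul_cutoff hA hl₁ hg₁ hf
  have hfar := isBigO_tsum_mul_one_sub_latticeCutoff_sub_taylorSum hd hA hl hΓ hg hgΓ hf₀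
  refine ((hnear.congr_right fun ℓ ↦ ?_).add hfar).congr_left fun ℓ ↦ ?_
  · ring_nf
  have hK := summable_comp_sub_mul hA (by linarith) hg hf₀ ℓ
  have hKχ := summable_mul_of_finite_support (fun m ↦ iterDiff (l₂ ++ l₁) g (ℓ - m))
    (finite_support_latticeCutoff_mul hA ℓ f)
  have hT := hasSum_taylorSum_mul hA hf₀ (l₂ ++ l₁) Γ ℓ
  have hκ := (hK.sub hT.summable).sub hKχ
  rw [← hT.tsum_eq, ← hK.tsum_sub hT.summable]
  refine ((hKχ.tsum_add (hκ.congr fun m ↦ ?_)).symm.trans (tsum_congr fun m ↦ ?_)) <;> ring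

variable {ι : Type*} [Fintype ι] [DecidableEq ι] {R : Finset (Fin d → ℤ)}
  {C : (Fin d → ℤ) → (Fin d → ℤ) → ι → ι → ℝ} {g : (Fin d → ℤ) → ι → ι → ℝ}

theorem IsGreen.isBigO_iterDiff_sub_multipole (hg : IsGreen A R C g) (hd : 2 ≤ d)
    (hA : IsUnit A.det) (hR : AddSubgroup.closure (R : Set (Fin d → ℤ)) = ⊤)
    (hC : ∀ σ ρ i k, C σ ρ i k = C ρ σ k i) {Γ : ℕ → Vec d → ι → ι → ℝ}
    (hΓ : ∀ n : ℕ, ∀ i k, IsSymbol ((2 : ℝ) - 2 * n - d) (Γ n · i k))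
    {u : (Fin d → ℤ) → ι → ℝ}
    (hu : ∀ k, ∀ ρ ∈ R, Tendsto (fun m ↦ u (m + ρ) k - u m k) cofinite (𝓝 0))
    (hl₁ : l₁.length = 1 ∨ l₁.length = 2) (hlR : ∀ ρ ∈ l₂ ++ l₁, ρ ∈ R)
    (hgΓ : ∀ i k, iterDiff (l₂ ++ l₁)
        (fun z ↦ g z i k - ∑ n ∈ Finset.range ((p + 1) / 2), Γ n (latticeHom A z) i k)
      =O[cofinite] fun z ↦ latticeBracket A z ^ ((2 : ℝ) - d - p - (l₂ ++ l₁).length))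
    (hf : ∀ i s, s.Sublist l₂ → iterDiff s (latticeOp R C u · i) =O[⊤] fun z ↦
      latticeBracket A z ^ (-(d : ℝ) - p - s.length) * Real.log (latticeBracket A z) ^ α)
    (i : ι) :
    iterDiff (l₂ ++ l₁) (fun z ↦ u z i - ∑ k, ∑ n ∈ Finset.range ((p + 1) / 2),
      ∑ i' ∈ Finset.range (p - 2 * n), aContract i' (momentTensor A (latticeOp R C u · k) i')
        (Γ n · i k) (latticeHom A z)) =O[cofinite] fun z ↦
      latticeBracket A z ^ ((2 : ℝ) - d - p - (l₂ ++ l₁).length) *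
        Real.log (latticeBracket A z) ^ (α + 1) := by
  have hb := isBracket_latticeBracket hA
  have hd' : (2 : ℝ) ≤ d := by exact_mod_cast hd
  have hl₁' : l₁ ≠ [] := List.ne_nil_of_length_pos (by lia)
  have hl : l₂ ++ l₁ ≠ [] := List.append_ne_nil_of_right_ne_nil l₂ hl₁'
  have hl' : (1 : ℝ) ≤ (l₂ ++ l₁).length := by exact_mod_cast List.length_pos_iff.2 hl
  have hf₀ (k : ι) : (latticeOp R C u · k) =O[⊤] fun z ↦
      latticeBracket A z ^ (-(d : ℝ) - p) * Real.log (latticeBracket A z) ^ α := by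
    simpa using hf k [] (List.nil_sublist _)
  have hf₁ (k : ι) : (latticeOp R C u · k) =O[cofinite] fun z ↦
      latticeBracket A z ^ (-(d : ℝ)) * Real.log (latticeBracket A z) ^ α :=
    ((hf₀ k).trans ((hb.rpow_isBigO_rpow (by linarith [p.cast_nonneg (α := ℝ)])).mul
      (isBigO_refl _ _))).mono le_top
  refine (IsBigO.sum fun k (_ : k ∈ Finset.univ) ↦ isBigO_tsum_iterDiff_mul_sub_multipole hd hA
    hl₁ (hΓ · i k) (hg.isBigO l₁ hl₁' (fun ρ hρ ↦ hlR ρ (by simp [hρ])) i k)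
    (hg.isBigO _ hl hlR i k) (hgΓ i k) (hf k)).congr_left fun ℓ ↦ ?_
  have hK (k : ι) := summable_comp_sub_mul hA (by linarith) (hg.isBigO _ hl hlR i k) (hf₀ k) ℓ
  simp only [Finset.sum_apply, Finset.sum_sub_distrib, iterDiff_sub, iterDiff_sum,
    iterDiff_comp_addMonoidHom, ← Summable.tsum_finsetSum fun k _ ↦ hK k,
    (hg.hasSum_iterDiff hd hA hR hC hu hf₁ hl hlR i ℓ).tsum_eq]

end Expansion

/-! ### Euclidean norms -/

section EuclideanNorm

variable {n : ℕ}

theorem enorm_nonneg (v : Vec n) : 0 ≤ enorm v :=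
  Real.sqrt_nonneg _

theorem two_le_ang (v : Vec n) : 2 ≤ ang v :=
  le_add_of_nonneg_left (enorm_nonneg v)

theorem ang_rpow_nonneg (s : ℝ) (v : Vec n) : 0 ≤ ang v ^ s :=
  Real.rpow_nonneg (zero_le_two.trans (two_le_ang v)) s

theorem ang_weight_nonneg (s : ℝ) (α : ℕ) (v : Vec n) : 0 ≤ ang v ^ s * Real.log (ang v) ^ α :=
  mul_nonneg (ang_rpow_nonneg s v)
    (pow_nonneg (Real.log_nonneg (one_le_two.trans (two_le_ang v))) α)

theorem abs_le_enorm (v : Vec n) (i : Fin n) : |v i| ≤ enorm v :=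
  Real.abs_le_sqrt (Finset.single_le_sum (f := fun i ↦ v i ^ 2) (fun _ _ ↦ sq_nonneg _)
    (Finset.mem_univ i))

theorem sqrt_sum_sq_le_sum {ι : Type*} {s : Finset ι} {f : ι → ℝ} (hf : ∀ i ∈ s, 0 ≤ f i) :
    √(∑ i ∈ s, f i ^ 2) ≤ ∑ i ∈ s, f i :=
  Real.sqrt_le_iff.2 ⟨Finset.sum_nonneg hf, Finset.sum_sq_le_sq_sum_of_nonneg hf⟩

theorem enorm_le_sum_abs (v : Vec n) : enorm v ≤ ∑ i, |v i| := by
  simpa only [enorm, sq_abs] using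
    sqrt_sum_sq_le_sum fun i (_ : i ∈ Finset.univ) ↦ abs_nonneg (v i)

theorem norm_le_enorm (v : Vec n) : ‖v‖ ≤ enorm v :=
  (pi_norm_le_iff_of_nonneg (enorm_nonneg v)).2 (abs_le_enorm v)

theorem enorm_le_mul_norm (v : Vec n) : enorm v ≤ n * ‖v‖ :=
  calc enorm v ≤ ∑ i, |v i| := enorm_le_sum_abs v
    _ ≤ ∑ _i : Fin n, ‖v‖ := Finset.sum_le_sum fun i _ ↦ norm_le_pi_norm v i
    _ = n * ‖v‖ := by simp

theorem enorm_smul {t : ℝ} (ht : 0 ≤ t) (v : Vec n) : enorm (t • v) = t * enorm v := by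
  simp only [enorm, Pi.smul_apply, smul_eq_mul, mul_pow]
  rw [← Finset.mul_sum, Real.sqrt_mul (sq_nonneg t), Real.sqrt_sq ht]

theorem abs_le_mnorm (M : Fin n → Fin n → ℝ) (i k : Fin n) : |M i k| ≤ mnorm M :=
  Real.abs_le_sqrt <| (Finset.single_le_sum (f := fun k ↦ M i k ^ 2) (fun _ _ ↦ sq_nonneg _)
    (Finset.mem_univ k)).trans <| Finset.single_le_sum (f := fun i ↦ ∑ k, M i k ^ 2)
      (fun _ _ ↦ Finset.sum_nonneg fun _ _ ↦ sq_nonneg _) (Finset.mem_univ i)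

theorem exists_le_ang_weight_iff {X : Type*} {f : X → ℝ} {v : X → Vec n} (hf : ∀ x, 0 ≤ f x)
    {s : ℝ} {α : ℕ} : (∃ K, ∀ x, f x ≤ K * ang (v x) ^ s * Real.log (ang (v x)) ^ α) ↔
      f =O[⊤] fun x ↦ ang (v x) ^ s * Real.log (ang (v x)) ^ α := by
  simp only [isBigO_top, Real.norm_of_nonneg (hf _), Real.norm_of_nonneg (ang_weight_nonneg s α _),
    mul_assoc]

end EuclideanNorm

/-! ### Transfer to index coordinates -/

section Transfer

variable {d N : ℕ} {A : Matrix (Fin d) (Fin d) ℝ} {R : Finset (Vec d)}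

theorem ang_weight_isTheta (A : Matrix (Fin d) (Fin d) ℝ) (s : ℝ) (α : ℕ) :
    (fun z ↦ ang (latticeHom A z) ^ s * Real.log (ang (latticeHom A z)) ^ α) =Θ[⊤] fun z ↦
      latticeBracket A z ^ s * Real.log (latticeBracket A z) ^ α := by
  obtain ⟨K, -, hK⟩ := exists_weight_le_weight (d + 1) s α
  have : (0 : ℝ) ≤ d := d.cast_nonneg
  have hang (z : Fin d → ℤ) := two_le_ang (latticeHom A z)
  have hbr (z : Fin d → ℤ) : 2 ≤ latticeBracket A z := by simp [latticeBracket]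
  have hle (z : Fin d → ℤ) : latticeBracket A z ≤ ang (latticeHom A z) :=
    add_le_add_left (norm_le_enorm _) _
  have hge (z : Fin d → ℤ) : ang (latticeHom A z) ≤ (d + 1) * latticeBracket A z := by
    have := enorm_le_mul_norm (latticeHom A z)
    simp only [ang, latticeBracket]
    nlinarith [norm_nonneg (latticeHom A z)]
  have hle' (z : Fin d → ℤ) : latticeBracket A z ≤ (d + 1) * ang (latticeHom A z) := by
    nlinarith [hle z, hang z]
  have hnorm {x : ℝ} (hx : 2 ≤ x) : ‖x ^ s * Real.log x ^ α‖ = x ^ s * Real.log x ^ α :=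
    Real.norm_of_nonneg <| mul_nonneg (Real.rpow_nonneg (by linarith) _)
      (pow_nonneg (Real.log_nonneg (by linarith)) _)
  constructor <;> refine .of_bound K (Eventually.of_forall fun z ↦ ?_) <;>
    rw [hnorm (hang z), hnorm (hbr z)]
  · exact hK _ _ (hang z) (hbr z) (hge z) (hle' z)
  · exact hK _ _ (hbr z) (hang z) (hle' z) (hge z)

theorem ang_rpow_isBigO (A : Matrix (Fin d) (Fin d) ℝ) (s : ℝ) :
    (fun z ↦ ang (latticeHom A z) ^ s) =O[⊤] fun z ↦ latticeBracket A z ^ s := by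
  simpa using (ang_weight_isTheta A s 0).1

theorem iterDiff_apply {X ι : Type*} {M : ι → Type*} [AddCommGroup X] [∀ i, AddCommGroup (M i)]
    (l : List X) (v : X → ∀ i, M i) (x : X) (i : ι) :
    iterDiff l v x i = iterDiff l (fun y ↦ v y i) x :=
  addMonoidHom_iterDiff (Pi.evalAddMonoidHom M i) l v x

theorem Dmulti_latticeHom {M : Type} [AddCommGroup M] [Module ℝ M] {j : ℕ}
    (zs : Fin j → Fin d → ℤ) (v : Vec d → M) (z : Fin d → ℤ) :
    Dmulti (fun r ↦ latticeHom A (zs r)) v (latticeHom A z) =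
      iterDiff (List.ofFn zs) (fun y ↦ v (latticeHom A y)) z := by
  rw [Dmulti_eq_iterDiff, iterDiff_comp_addMonoidHom, List.map_ofFn]
  rfl

theorem DnormJ_zero (v : Vec d → Vec N) (ℓ : Vec d) : DnormJ R 0 v ℓ = enorm (v ℓ) := by
  simp [DnormJ, Dmulti_eq_iterDiff, Real.sqrt_sq (enorm_nonneg _)]

theorem enorm_Dmulti_le_DnormJ {j : ℕ} {ρs : Fin j → Vec d} (hρs : ∀ r, ρs r ∈ R)
    (v : Vec d → Vec N) (ℓ : Vec d) : enorm (Dmulti ρs v ℓ) ≤ DnormJ R j v ℓ := by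
  lift ρs to Fin j → {x // x ∈ R} using hρs
  exact Real.le_sqrt_of_sq_le (Finset.single_le_sum
    (f := fun ρs : Fin j → {x // x ∈ R} ↦ enorm (Dmulti (fun r ↦ (ρs r : Vec d)) v ℓ) ^ 2)
    (fun _ _ ↦ sq_nonneg _) (Finset.mem_univ ρs))

theorem abs_iterDiff_le_DnormJ {l : List (Fin d → ℤ)} (hl : ∀ ρ ∈ l, latticeHom A ρ ∈ R)
    (v : Vec d → Vec N) (z : Fin d → ℤ) (i : Fin N) :
    |iterDiff l (fun y ↦ v (latticeHom A y) i) z| ≤ DnormJ R l.length v (latticeHom A z) := by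
  have h := enorm_Dmulti_le_DnormJ (fun r ↦ hl _ (l.get_mem r)) v (latticeHom A z)
  rw [Dmulti_latticeHom, List.ofFn_get] at h
  rw [← iterDiff_apply]
  exact (abs_le_enorm _ i).trans h

theorem isBigO_DnormJ (hR : ∀ ρ ∈ R, ρ ∈ Lattice d A) {F : Filter (Fin d → ℤ)}
    {v : Vec d → Vec N} {j : ℕ} {W : (Fin d → ℤ) → ℝ}
    (h : ∀ l : List (Fin d → ℤ), l.length = j → (∀ ρ ∈ l, latticeHom A ρ ∈ R) → ∀ i,
      iterDiff l (fun y ↦ v (latticeHom A y) i) =O[F] W) :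
    (fun z ↦ DnormJ R j v (latticeHom A z)) =O[F] W := by
  have hcomp (ρs : Fin j → {x // x ∈ R}) (i : Fin N) :
      (fun z ↦ |Dmulti (fun r ↦ (ρs r : Vec d)) v (latticeHom A z) i|) =O[F] W := by
    choose zs hzs using fun r ↦ hR (ρs r) (ρs r).2
    replace hzs (r) : latticeHom A (zs r) = ρs r := hzs r
    refine ((h (List.ofFn zs) List.length_ofFn ?_ i).congr_left fun z ↦ ?_).abs_left
    · rintro _ hρ
      obtain ⟨r, rfl⟩ := List.mem_ofFn.1 hρ
      exact hzs r ▸ (ρs r).2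
    · simp only [← hzs, Dmulti_latticeHom, iterDiff_apply]
  refine (IsBigO.of_bound' (Eventually.of_forall fun z ↦ ?_)).trans
    (IsBigO.sum fun ρs (_ : ρs ∈ Finset.univ) ↦ IsBigO.sum fun i (_ : i ∈ Finset.univ) ↦
      hcomp ρs i)
  rw [DnormJ, Real.norm_of_nonneg (Real.sqrt_nonneg _)]
  simp only [Finset.sum_apply]
  exact ((sqrt_sum_sq_le_sum fun _ _ ↦ enorm_nonneg _).trans
    (Finset.sum_le_sum fun _ _ ↦ enorm_le_sum_abs _)).trans (le_abs_self _)

/-- The interaction range in index coordinates. -/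
def indexRange (hA : IsUnit A.det) (R : Finset (Vec d)) : Finset (Fin d → ℤ) :=
  R.preimage (latticeHom A) (latticeHom_injective hA).injOn

theorem mem_indexRange {hA : IsUnit A.det} {z : Fin d → ℤ} :
    z ∈ indexRange hA R ↔ latticeHom A z ∈ R :=
  Finset.mem_preimage

theorem sum_indexRange {M : Type*} [AddCommMonoid M] (hA : IsUnit A.det)
    (hR : ∀ ρ ∈ R, ρ ∈ Lattice d A) (F : Vec d → M) :
    ∑ z ∈ indexRange hA R, F (latticeHom A z) = ∑ ρ ∈ R, F ρ :=
  Finset.sum_preimage _ _ _ _ fun ρ hρ hρ' ↦ absurd (hR ρ hρ) hρ'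

theorem closure_indexRange (hA : IsUnit A.det) (hR : ∀ ρ ∈ R, ρ ∈ Lattice d A)
    (hspan : ∀ x ∈ Lattice d A, ∃ c : Vec d → ℤ, x = ∑ ρ ∈ R, (c ρ : ℝ) • ρ) :
    AddSubgroup.closure (indexRange hA R : Set (Fin d → ℤ)) = ⊤ := by
  refine eq_top_iff.2 fun z _ ↦ ?_
  obtain ⟨c, hc⟩ := hspan (latticeHom A z) ⟨z, rfl⟩
  have hz : z = ∑ ρ ∈ indexRange hA R, c (latticeHom A ρ) • ρ := by
    refine latticeHom_injective hA ?_
    rw [hc, map_sum, ← sum_indexRange hA hR]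
    exact Finset.sum_congr rfl fun ρ _ ↦ by rw [map_zsmul, Int.cast_smul_eq_zsmul]
  rw [hz]
  exact AddSubgroup.sum_mem _ fun ρ hρ ↦
    AddSubgroup.zsmul_mem _ (AddSubgroup.subset_closure hρ) _

variable {C : Vec d → Vec d → Fin N → Fin N → ℝ} {G : Vec d → Fin N → Fin N → ℝ}

theorem Hop_latticeHom (hA : IsUnit A.det) (hR : ∀ ρ ∈ R, ρ ∈ Lattice d A) (u : Vec d → Vec N)
    (m : Fin d → ℤ) :
    Hop d N R C u (latticeHom A m) = latticeOp (indexRange hA R)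
      (fun σ ρ ↦ C (latticeHom A σ) (latticeHom A ρ)) (fun y ↦ u (latticeHom A y)) m := by
  funext i
  simp only [Hop, ← sum_indexRange hA hR, latticeOp, Finset.sum_apply, Pi.sub_apply, mulV, D1,
    ← Finset.sum_sub_distrib, ← mul_sub, iterDiff_cons_apply, iterDiff_nil]
  simp only [sub_eq_add_neg, map_add, map_neg]

theorem IsLatticeGreen.isGreen (hG : IsLatticeGreen d N A R C G) (hA : IsUnit A.det)
    (hR : ∀ ρ ∈ R, ρ ∈ Lattice d A) :
    IsGreen A (indexRange hA R) (fun σ ρ ↦ C (latticeHom A σ) (latticeHom A ρ))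
      (fun z ↦ G (latticeHom A z)) where
  latticeOp_eq k := by
    funext m
    have hm : latticeHom A m = 0 ↔ m = 0 := map_eq_zero_iff _ (latticeHom_injective hA)
    refine (Hop_latticeHom hA hR (col G k) m).symm.trans ((hG.1 k m).trans ?_)
    by_cases h : m = 0 <;> simp_all [latticeHom]
  isBigO l hl hlR i k := by
    obtain ⟨c, hc⟩ := hG.2 l.length (List.length_pos_iff.2 hl)
    refine (IsBigO.of_bound c (Eventually.of_forall fun z ↦ ?_)).trans (ang_rpow_isBigO A _)
    rw [Real.norm_of_nonneg (ang_rpow_nonneg _ _)]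
    calc |iterDiff l (fun y ↦ G (latticeHom A y) i k) z|
      _ ≤ DnormJ R l.length (col G k) (latticeHom A z) :=
        abs_iterDiff_le_DnormJ (fun ρ hρ ↦ mem_indexRange.1 (hlR ρ hρ)) (col G k) z i
      _ ≤ DnormJmat R l.length G (latticeHom A z) :=
        Real.le_sqrt_of_sq_le (Finset.single_le_sum
          (f := fun k ↦ DnormJ R l.length (col G k) (latticeHom A z) ^ 2)
          (fun _ _ ↦ sq_nonneg _) (Finset.mem_univ k))
      _ ≤ c * ang (latticeHom A z) ^ ((2 : ℝ) - d - l.length) := hc z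

theorem InH1.tendsto_D1 {u : Vec d → Vec N} (hu : InH1 A R u) {ρ : Vec d} (hρ : ρ ∈ R) :
    Tendsto (fun z ↦ D1 ρ u (latticePt d A z)) cofinite (𝓝 0) := by
  have hsqrt : Tendsto (fun z ↦ √(Dnorm1Sq R u (latticePt d A z))) cofinite (𝓝 0) := by
    simpa using hu.tendsto_cofinite_zero.sqrt
  refine squeeze_zero_norm (fun z ↦ (norm_le_enorm _).trans ?_) hsqrt
  exact Real.le_sqrt_of_sq_le (Finset.single_le_sum
    (f := fun ρ ↦ enorm (D1 ρ u (latticePt d A z)) ^ 2) (fun _ _ ↦ sq_nonneg _) hρ)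

end Transfer

/-! ### The kernel family -/

section Kernels

variable {d N : ℕ} {A : Matrix (Fin d) (Fin d) ℝ} {R : Finset (Vec d)}
  {G : Vec d → Fin N → Fin N → ℝ} {Gn : ℕ → Vec d → Fin N → Fin N → ℝ}

theorem KernelFamily.contDiffOn (h : KernelFamily d N A R G Gn) (n : ℕ) (i k : Fin N) :
    ContDiffOn ℝ (⊤ : ℕ∞) (Gn n · i k) {x | x ≠ 0} :=
  contDiffOn_pi.1 (contDiffOn_pi.1 (h.1 n) i) k

theorem KernelFamily.isSymbol (h : KernelFamily d N A R G Gn) (hd : 2 ≤ d) (n : ℕ)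
    (i k : Fin N) : IsSymbol ((2 : ℝ) - 2 * n - d) (Gn n · i k) := by
  by_cases hn : 1 ≤ n ∨ 3 ≤ d
  · exact .of_homogeneous (κ := 0) (h.contDiffOn n i k) fun t ht x hx ↦ by
      simpa using h.2.1 n hn t ht x hx i k
  · obtain rfl : n = 0 := by lia
    obtain rfl : d = 2 := by lia
    obtain ⟨M, φ, -, hφ, hG₀⟩ := h.2.2.1 rfl
    refine .of_homogeneous (κ := fun t ↦ M i k * Real.log t) (h.contDiffOn 0 i k)
      fun t ht x hx ↦ ?_
    have hx' : enorm x ≠ 0 := ((norm_pos_iff.2 hx).trans_le (norm_le_enorm x)).ne'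
    rw [hG₀ _ (smul_ne_zero ht.ne' hx), hG₀ _ hx, enorm_smul ht.le, Real.log_mul ht.ne' hx',
      hφ t ht x hx]
    norm_num
    ring

theorem eventually_cofinite_latticeHom_add_ne_zero (hA : IsUnit A.det) (x : Vec d) :
    ∀ᶠ z in cofinite, latticeHom A z + x ≠ 0 := by
  filter_upwards [(latticeHom_injective hA).tendsto_cofinite.eventually
    (eventually_cofinite_ne (-x))] with z hz
  rwa [Ne, add_eq_zero_iff_eq_neg]

theorem KernelFamily.isBigO_iterDiff_sub (h : KernelFamily d N A R G Gn) (hA : IsUnit A.det)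
    (q : ℕ) {l : List (Fin d → ℤ)} (hl : ∀ ρ ∈ l, latticeHom A ρ ∈ R) (i k : Fin N) :
    iterDiff l (fun z ↦ G (latticeHom A z) i k -
        ∑ n ∈ Finset.range (q + 1), Gn n (latticeHom A z) i k) =O[cofinite]
      fun z ↦ latticeBracket A z ^ (-(2 : ℝ) * q - d - l.length) := by
  obtain ⟨c, hc⟩ := h.2.2.2 l.length q
  refine (IsBigO.of_bound c ?_).trans ((ang_rpow_isBigO A _).mono le_top)
  filter_upwards [eventually_all.2 fun S : Finset (Fin l.length) ↦
    eventually_cofinite_latticeHom_add_ne_zero hA (∑ r ∈ S, latticeHom A (l.get r))] with z hz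
  have hz' := hc (fun r ↦ ⟨latticeHom A (l.get r), hl _ (l.get_mem r)⟩) z hz
  rw [Real.norm_of_nonneg (ang_rpow_nonneg _ _)]
  refine le_trans ?_ ((abs_le_mnorm _ i k).trans hz')
  change _ ≤ |Dmulti (M := Fin N → Fin N → ℝ) (fun r ↦ latticeHom A (l.get r)) _
    (latticeHom A z) i k|
  rw [Dmulti_latticeHom, List.ofFn_get, iterDiff_apply, iterDiff_apply, Real.norm_eq_abs]

theorem KernelFamily.isBigO_iterDiff_sub_half (h : KernelFamily d N A R G Gn)
    (hA : IsUnit A.det) (p : ℕ) {l : List (Fin d → ℤ)} (hl : ∀ ρ ∈ l, latticeHom A ρ ∈ R)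
    {i k : Fin N} (hG : iterDiff l (fun z ↦ G (latticeHom A z) i k) =O[⊤] fun z ↦
      latticeBracket A z ^ ((2 : ℝ) - d - l.length)) :
    iterDiff l (fun z ↦ G (latticeHom A z) i k -
        ∑ n ∈ Finset.range ((p + 1) / 2), Gn n (latticeHom A z) i k) =O[cofinite]
      fun z ↦ latticeBracket A z ^ ((2 : ℝ) - d - p - l.length) := by
  obtain rfl | hp := p.eq_zero_or_pos
  · simpa using hG.mono le_top
  · have hq : (p - 1) / 2 + 1 = (p + 1) / 2 := by lia
    have hpq : (p : ℝ) ≤ 2 * ((p - 1) / 2 : ℕ) + 2 := by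
      exact_mod_cast (by lia : p ≤ 2 * ((p - 1) / 2) + 2)
    exact hq ▸ (h.isBigO_iterDiff_sub hA ((p - 1) / 2) hl i k).trans
      (((isBracket_latticeBracket hA).rpow_isBigO_rpow (by linarith)).mono le_top)

end Kernels

/-! ### The multipole expansion -/

theorem eventuallyEq_iterDiff {X M : Type*} [AddCommGroup X] [AddCommGroup M] (l : List X)
    {f g : X → M} (h : f =ᶠ[cofinite] g) : iterDiff l f =ᶠ[cofinite] iterDiff l g := by
  induction l with
  | nil => exact h
  | cons ρ l ih =>
    filter_upwards [ih, (add_left_injective ρ).tendsto_cofinite.eventually ih] with x hx hxρ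
    rw [iterDiff_cons_apply, iterDiff_cons_apply, hx, hxρ]

/-- The remainder `w̃` of the expansion of `u` into the continuum multipole terms
`a^{(i,n,k)} : ∇^i (G_n e_k)`, these being set to `0` at the origin. -/
def multipoleRemainder {d N : ℕ} (Gn : ℕ → Vec d → Fin N → Fin N → ℝ) (p : ℕ)
    (a : (i : ℕ) → ℕ → Fin N → (Fin i → Fin d) → ℝ) (u : Vec d → Vec N) : Vec d → Vec N :=
  fun ℓ i₀ ↦ u ℓ i₀ - if ℓ = 0 then 0 else
    ∑ k : Fin N, ∑ n ∈ Finset.range ((p + 1) / 2), ∑ i ∈ Finset.range (p - 2 * n),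
      aContract i (a i n k) (fun x ↦ Gn n x i₀ k) ℓ

section Main

variable {d N : ℕ} {A : Matrix (Fin d) (Fin d) ℝ} {R : Finset (Vec d)}
  {C : Vec d → Vec d → Fin N → Fin N → ℝ} {G : Vec d → Fin N → Fin N → ℝ}
  {Gn : ℕ → Vec d → Fin N → Fin N → ℝ} {u : Vec d → Vec N} {p α : ℕ}

theorem isBigO_iterDiff_multipoleRemainder (hd : 2 ≤ d) (hA : IsUnit A.det)
    (hRlat : ∀ ρ ∈ R, ρ ∈ Lattice d A)
    (hRspan : ∀ x ∈ Lattice d A, ∃ c : Vec d → ℤ, x = ∑ ρ ∈ R, (c ρ : ℝ) • ρ)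
    (hCsym : ∀ σ ρ i j, C σ ρ i j = C ρ σ j i) (hG : IsLatticeGreen d N A R C G)
    (hGn : KernelFamily d N A R G Gn)
    (hu : ∀ ρ ∈ R, Tendsto (fun z ↦ D1 ρ u (latticePt d A z)) cofinite (𝓝 0))
    {l₁ l₂ : List (Fin d → ℤ)} (hl₁ : l₁.length = 1 ∨ l₁.length = 2)
    (hlR : ∀ ρ ∈ l₂ ++ l₁, latticeHom A ρ ∈ R)
    (hf : ∀ m ≤ l₂.length, (fun z ↦ DnormJ R m (Hop d N R C u) (latticeHom A z)) =O[⊤] fun z ↦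
      ang (latticeHom A z) ^ (-(d : ℝ) - p - m) * Real.log (ang (latticeHom A z)) ^ α)
    (i : Fin N) :
    iterDiff (l₂ ++ l₁) (fun z ↦ multipoleRemainder Gn p
        (fun i _ k ↦ momentTensor A (fun y ↦ Hop d N R C u (latticeHom A y) k) i) u
        (latticeHom A z) i) =O[⊤] fun z ↦
      latticeBracket A z ^ ((2 : ℝ) - d - p - (l₂ ++ l₁).length) *
        Real.log (latticeBracket A z) ^ (α + 1) := by
  have hgreen := hG.isGreen hA hRlat
  have hl : l₂ ++ l₁ ≠ [] := List.append_ne_nil_of_right_ne_nil _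
    (List.ne_nil_of_length_pos (by lia))
  have hlR' : ∀ ρ ∈ l₂ ++ l₁, ρ ∈ indexRange hA R := fun ρ hρ ↦ mem_indexRange.2 (hlR ρ hρ)
  have hforce (k : Fin N) (s : List (Fin d → ℤ)) (hs : s.Sublist l₂) :
      iterDiff s (fun y ↦ Hop d N R C u (latticeHom A y) k) =O[⊤] fun z ↦
        latticeBracket A z ^ (-(d : ℝ) - p - s.length) * Real.log (latticeBracket A z) ^ α :=
    ((IsBigO.of_bound' (Eventually.of_forall fun z ↦ (abs_iterDiff_le_DnormJ
      (fun ρ hρ ↦ hlR ρ (List.mem_append_left _ (hs.subset hρ))) _ z k).trans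
        (le_abs_self _))).trans (hf _ hs.length_le)).trans (ang_weight_isTheta A _ α).1
  have hvanish (k : Fin N) : ∀ ρ ∈ indexRange hA R,
      Tendsto (fun m ↦ u (latticeHom A (m + ρ)) k - u (latticeHom A m) k) cofinite (𝓝 0) :=
    fun ρ hρ ↦ (tendsto_pi_nhds.1 (hu _ (mem_indexRange.1 hρ)) k).congr fun m ↦ by
      rw [map_add]; rfl
  simp only [Hop_latticeHom hA hRlat] at hforce
  have hmain := hgreen.isBigO_iterDiff_sub_multipole (Γ := Gn) (u := fun y ↦ u (latticeHom A y))
    hd hA (closure_indexRange hA hRlat hRspan) (fun _ _ _ _ ↦ hCsym _ _ _ _) (hGn.isSymbol hd)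
    hvanish hl₁ hlR'
    (fun i k ↦ hGn.isBigO_iterDiff_sub_half hA p hlR (hgreen.isBigO _ hl hlR' i k)) hforce i
  have hb := isBracket_latticeBracket hA
  have hmult (a : (i : ℕ) → ℕ → Fin N → (Fin i → Fin d) → ℝ) :
      (fun z ↦ multipoleRemainder Gn p a u (latticeHom A z) i) =ᶠ[cofinite] fun z ↦
        u (latticeHom A z) i - ∑ k, ∑ n ∈ Finset.range ((p + 1) / 2),
          ∑ i' ∈ Finset.range (p - 2 * n),
            aContract i' (a i' n k) (Gn n · i k) (latticeHom A z) := by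
    filter_upwards [eventually_cofinite_latticeHom_add_ne_zero hA 0] with z hz
    rw [add_zero] at hz
    simp only [multipoleRemainder, if_neg hz]
  simp only [Hop_latticeHom hA hRlat]
  obtain ⟨c, hc⟩ := (isBigO_cofinite_iff fun z hz ↦ absurd hz (hb.weight_pos _ _ z).ne').1
    ((eventuallyEq_iterDiff _ (hmult _)).trans_isBigO hmain)
  exact isBigO_top.2 ⟨c, hc⟩

theorem continuum_multipole_expansion_remainder_general (hd : 2 ≤ d) (hA : IsUnit A.det)
    (hRlat : ∀ ρ ∈ R, ρ ∈ Lattice d A)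
    (hRspan : ∀ x ∈ Lattice d A, ∃ c : Vec d → ℤ, x = ∑ ρ ∈ R, (c ρ : ℝ) • ρ)
    (hCsym : ∀ σ ρ i j, C σ ρ i j = C ρ σ j i) (hG : IsLatticeGreen d N A R C G)
    (hGn : KernelFamily d N A R G Gn)
    (hu : ∀ ρ ∈ R, Tendsto (fun z ↦ D1 ρ u (latticePt d A z)) cofinite (𝓝 0)) :
    ∃ a : (i : ℕ) → ℕ → Fin N → (Fin i → Fin d) → ℝ, (∀ i n k, SymArr (a i n k)) ∧
      ∀ j ≠ 0, ∀ p α : ℕ,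
        (∀ m ≤ j - 2, (fun z ↦ DnormJ R m (Hop d N R C u) (latticePt d A z)) =O[⊤] fun z ↦
          ang (latticePt d A z) ^ (-(d : ℝ) - p - m) * Real.log (ang (latticePt d A z)) ^ α) →
        (fun z ↦ DnormJ R j (multipoleRemainder Gn p a u) (latticePt d A z)) =O[⊤] fun z ↦
          ang (latticePt d A z) ^ ((2 : ℝ) - d - p - j) *
            Real.log (ang (latticePt d A z)) ^ (α + 1) := by
  refine ⟨fun i _ k ↦ momentTensor A (fun y ↦ Hop d N R C u (latticeHom A y) k) i,
    fun i _ k ↦ symArr_momentTensor A _ i, fun j hj p α hH ↦ ?_⟩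
  refine (isBigO_DnormJ hRlat fun l hlj hlR i ↦ ?_).trans (ang_weight_isTheta A _ (α + 1)).2
  subst hlj
  rw [← List.take_append_drop (l.length - 2) l] at hlR
  have hmain := isBigO_iterDiff_multipoleRemainder (Gn := Gn) (p := p) (α := α) hd hA hRlat hRspan
    hCsym hG hGn hu (l₁ := l.drop (l.length - 2)) (by grind) hlR
    (fun m hm ↦ hH m (by grind)) i
  rwa [List.take_append_drop] at hmain

end Main

/-- Theorem: continuum multipole expansion with localized
remainder. -/
theorem continuum_multipole_expansion_remainder
    (d N : ℕ) (hd : 2 ≤ d)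
    (A : Matrix (Fin d) (Fin d) ℝ) (hA : IsUnit A.det)
    (R : Finset (Vec d)) (hR0 : (0 : Vec d) ∉ R)
    (hRlat : ∀ ρ ∈ R, ρ ∈ Lattice d A)
    (hRsym : ∀ ρ ∈ R, -ρ ∈ R)
    (hRspan : ∀ x ∈ Lattice d A, ∃ c : Vec d → ℤ, x = ∑ ρ ∈ R, (c ρ : ℝ) • ρ)
    (C : Vec d → Vec d → Fin N → Fin N → ℝ)
    (hCsym : ∀ σ ρ i j, C σ ρ i j = C ρ σ j i)
    (hCpt : ∀ σ ρ, C σ ρ = C (-σ) (-ρ))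
    (hstab : IsStable d N A R C)
    (G : Vec d → Fin N → Fin N → ℝ) (hG : IsLatticeGreen d N A R C G)
    (Gn : ℕ → Vec d → Fin N → Fin N → ℝ) (hGn : KernelFamily d N A R G Gn)
    (u : Vec d → Vec N) (hu : InH1 A R u)
    (p α : ℕ) (c : ℝ) (hc : 0 < c)
    (hbound : ∀ z : Fin d → ℤ,
      enorm (Hop d N R C u (latticePt d A z)) ≤
        c * ang (latticePt d A z) ^ (-(d : ℝ) - p) *
          Real.log (ang (latticePt d A z)) ^ α) :
    ∃ a : (i : ℕ) → ℕ → Fin N → (Fin i → Fin d) → ℝ,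
      (∀ (i n : ℕ) (k : Fin N), SymArr (a i n k)) ∧
      (∀ j : ℕ, j = 1 ∨ j = 2 → ∃ Cj : ℝ, ∀ z : Fin d → ℤ,
          DnormJ R j
            (fun ℓ i0 => u ℓ i0 -
              if ℓ = 0 then 0 else
                ∑ k : Fin N, ∑ n ∈ Finset.range ((p + 1) / 2),
                  ∑ i ∈ Finset.range (p - 2 * n),
                    aContract i (a i n k) (fun x => Gn n x i0 k) ℓ)
            (latticePt d A z) ≤
            Cj * ang (latticePt d A z) ^ ((2 : ℝ) - d - p - j) *
              Real.log (ang (latticePt d A z)) ^ (α + 1)) ∧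
      (∀ j : ℕ, 3 ≤ j →
        (∀ m : ℕ, 1 ≤ m → m ≤ j - 2 → ∀ z : Fin d → ℤ,
            DnormJ R m (Hop d N R C u) (latticePt d A z) ≤
              c * ang (latticePt d A z) ^ (-(d : ℝ) - p - m) *
                Real.log (ang (latticePt d A z)) ^ α) →
        ∃ Cj : ℝ, ∀ z : Fin d → ℤ,
          DnormJ R j
            (fun ℓ i0 => u ℓ i0 -
              if ℓ = 0 then 0 else
                ∑ k : Fin N, ∑ n ∈ Finset.range ((p + 1) / 2),
                  ∑ i ∈ Finset.range (p - 2 * n),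
                    aContract i (a i n k) (fun x => Gn n x i0 k) ℓ)
            (latticePt d A z) ≤
            Cj * ang (latticePt d A z) ^ ((2 : ℝ) - d - p - j) *
              Real.log (ang (latticePt d A z)) ^ (α + 1)) := by
  obtain ⟨a, ha, hmain⟩ := continuum_multipole_expansion_remainder_general (u := u)
    hd hA hRlat hRspan hCsym hG hGn fun _ ↦ hu.tendsto_D1
  have hbound₀ : ∀ z, DnormJ R 0 (Hop d N R C u) (latticePt d A z) ≤
      c * ang (latticePt d A z) ^ (-(d : ℝ) - p - (0 : ℕ)) *
        Real.log (ang (latticePt d A z)) ^ α := by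
    simpa [DnormJ_zero] using hbound
  refine ⟨a, ha, fun j hj ↦ ?_, fun j hj hH ↦ ?_⟩ <;>
    refine (exists_le_ang_weight_iff fun _ ↦ Real.sqrt_nonneg _).2
      (hmain j (by lia) p α fun m hm ↦
        (exists_le_ang_weight_iff fun _ ↦ Real.sqrt_nonneg _).1 ⟨c, ?_⟩) <;>
    obtain rfl | hm₀ := m.eq_zero_or_pos
  exacts [hbound₀, absurd hm₀ (by lia), hbound₀, hH m hm₀ hm]

end Defect
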